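/- Let n = 3^{k₁} + 3^{k₂} + 3^{k₃} with integers k₁ > k₂ > k₃ ≥ 0, and let Eₙ/Fₙ be the general field extension of degree n over ℚ. Then for every finite field extension F′/Fₙ whose degree [F′ : Fₙ] is coprime to 3, the F′-algebra E′ := F′ ⊗_{Fₙ} Eₙ contains no nonzero element δ with Tr_{E′/F′}(δ) = 0 and Tr_{E′/F′}(δ³) = 0. -/

import Mathlib

noncomputable section

namespace GenExt

/-- `Lₙ = ℚ(x₁, …, xₙ)`, the field of rational functions in `n` variables over `ℚ`. -/
def L (n : ℕ) : Type := FractionRing (MvPolynomial (Fin n) ℚ)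

noncomputable instance (n : ℕ) : Field (L n) :=
  inferInstanceAs (Field (FractionRing (MvPolynomial (Fin n) ℚ)))

noncomputable instance (n : ℕ) : Algebra (MvPolynomial (Fin n) ℚ) (L n) :=
  inferInstanceAs (Algebra (MvPolynomial (Fin n) ℚ) (FractionRing (MvPolynomial (Fin n) ℚ)))

instance (n : ℕ) : IsFractionRing (MvPolynomial (Fin n) ℚ) (L n) :=
  inferInstanceAs
    (IsFractionRing (MvPolynomial (Fin n) ℚ) (FractionRing (MvPolynomial (Fin n) ℚ)))

/-- The automorphism of `Lₙ` induced by a permutation `σ ∈ Sₙ` of the variables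
`x₁, …, xₙ`. -/
noncomputable def permAut (n : ℕ) (σ : Equiv.Perm (Fin n)) : L n ≃+* L n :=
  IsFractionRing.ringEquivOfRingEquiv (MvPolynomial.renameEquiv ℚ σ).toRingEquiv

/-- The subfield of `Lₙ` consisting of elements fixed by all permutations in `S`. -/
noncomputable def fixedSubfield (n : ℕ) (S : Set (Equiv.Perm (Fin n))) : Subfield (L n) where
  carrier := {a | ∀ σ ∈ S, permAut n σ a = a}
  mul_mem' := fun ha hb σ hσ => by rw [map_mul, ha σ hσ, hb σ hσ]
  one_mem' := fun σ _ => map_one _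
  add_mem' := fun ha hb σ hσ => by rw [map_add, ha σ hσ, hb σ hσ]
  zero_mem' := fun σ _ => map_zero _
  neg_mem' := fun ha σ hσ => by rw [map_neg, ha σ hσ]
  inv_mem' := fun a ha σ hσ => by rw [map_inv₀, ha σ hσ]

/-- `Fₙ = Lₙ^{Sₙ}`, the fixed field of the full symmetric group. -/
noncomputable def F (n : ℕ) : Subfield (L n) := fixedSubfield n Set.univ

/-- `Eₙ = Lₙ^{Sₙ₋₁}`, the fixed field of the subgroup of permutations fixing `x₁`
(i.e. permuting only `x₂, …, xₙ`). -/
noncomputable def E (n : ℕ) : Subfield (L n) :=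
  fixedSubfield n {σ | ∀ i : Fin n, (i : ℕ) = 0 → σ i = i}

theorem F_le_E (n : ℕ) : F n ≤ E n := fun _ ha σ _ => ha σ (Set.mem_univ σ)

/-- `Eₙ` is an `Fₙ`-algebra via the inclusion `Fₙ ⊆ Eₙ`. -/
noncomputable instance (n : ℕ) : Algebra (F n) (E n) :=
  (Subfield.inclusion (F_le_E n)).toAlgebra

end GenExt

open scoped TensorProduct

namespace GenA

abbrev Eis := QuadraticAlgebra ℤ (-1) (-1)

lemma eis_norm (x : Eis) : QuadraticAlgebra.norm x = x.re ^ 2 - x.re * x.im + x.im ^ 2 := by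
  rw [QuadraticAlgebra.norm_def]; ring

lemma form_pos {a b : ℤ} (h : ¬ (a = 0 ∧ b = 0)) : 0 < a ^ 2 - a * b + b ^ 2 := by
  by_cases hb : b = 0
  · subst hb
    have : a ≠ 0 := fun h' => h ⟨h', rfl⟩
    have := sq_nonneg a
    have : 0 < a ^ 2 := by positivity
    linarith
  · have : 0 < b ^ 2 := by positivity
    nlinarith [sq_nonneg (2 * a - b)]

lemma eis_norm_pos {x : Eis} (hx : x ≠ 0) : 0 < QuadraticAlgebra.norm x := by
  rw [eis_norm]
  apply form_pos
  rintro ⟨h1, h2⟩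
  exact hx (QuadraticAlgebra.ext h1 h2)

lemma exists_round (p N : ℤ) (hN : 0 < N) : ∃ r : ℤ, |2 * (p - N * r)| ≤ N := by
  refine ⟨(2 * p + N) / (2 * N), ?_⟩
  have h1 := Int.emod_add_mul_ediv (2 * p + N) (2 * N)
  have h2 := Int.emod_nonneg (2 * p + N) (b := 2 * N) (by omega)
  have h3 := Int.emod_lt_of_pos (2 * p + N) (b := 2 * N) (by omega)
  rw [abs_le]
  constructor <;> nlinarith

lemma eis_div (x y : Eis) (hy : y ≠ 0) :
    ∃ q : Eis, QuadraticAlgebra.norm (x - y * q) < QuadraticAlgebra.norm y := by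
  have hN := eis_norm_pos hy
  set N := QuadraticAlgebra.norm y with hNdef
  obtain ⟨r1, h1⟩ := exists_round (x * star y).re N hN
  obtain ⟨r2, h2⟩ := exists_round (x * star y).im N hN
  refine ⟨⟨r1, r2⟩, ?_⟩
  have key : QuadraticAlgebra.norm (x - y * ⟨r1, r2⟩) * N
      = ((x * star y).re - N * r1) ^ 2 - ((x * star y).re - N * r1) * ((x * star y).im - N * r2)
        + ((x * star y).im - N * r2) ^ 2 := by
    rw [hNdef, eis_norm, eis_norm]
    simp
    ring
  set e1 := (x * star y).re - N * r1
  set e2 := (x * star y).im - N * r2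
  have h1' := abs_le.1 h1
  have h2' := abs_le.1 h2
  have s1 : (2 * e1) ^ 2 ≤ N ^ 2 := sq_le_sq' h1'.1 h1'.2
  have s2 : (2 * e2) ^ 2 ≤ N ^ 2 := sq_le_sq' h2'.1 h2'.2
  have : QuadraticAlgebra.norm (x - y * ⟨r1, r2⟩) * N < N * N := by
    rw [key]; nlinarith [sq_nonneg (e1 + e2), mul_pos hN hN]
  exact lt_of_mul_lt_mul_right this hN.le

lemma eis_re_one : (1 : Eis).re = 1 := rfl
lemma eis_im_one : (1 : Eis).im = 0 := rfl
lemma eis_re_three : (3 : Eis).re = 3 := rfl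
lemma eis_im_three : (3 : Eis).im = 0 := rfl

open Classical in
@[reducible] def eisED : EuclideanDomain Eis :=
  { (inferInstance : CommRing Eis) with
    exists_pair_ne := ⟨0, 1, by intro h; have := congrArg QuadraticAlgebra.re h; simp [eis_re_one] at this⟩
    quotient := fun x y => if h : y = 0 then 0 else Classical.choose (eis_div x y h)
    remainder := fun x y => x - y * (if h : y = 0 then 0 else Classical.choose (eis_div x y h))
    quotient_zero := by intro a; simp
    quotient_mul_add_remainder_eq := fun _ _ => by ring
    r := fun x y => (QuadraticAlgebra.norm x).natAbs < (QuadraticAlgebra.norm y).natAbs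
    r_wellFounded := (measure (fun x : Eis => (QuadraticAlgebra.norm x).natAbs)).wf
    remainder_lt := by
      intro a b hb
      simp only [hb, dif_neg, not_false_eq_true]
      have h1 := Classical.choose_spec (eis_div a b hb)
      have h2 : 0 ≤ QuadraticAlgebra.norm (a - b * Classical.choose (eis_div a b hb)) := by
        by_cases h : a - b * Classical.choose (eis_div a b hb) = 0
        · rw [h]; simp
        · exact (eis_norm_pos h).le
      omega
    mul_left_not_lt := by
      intro a b hb
      have h1 := eis_norm_pos hb
      rw [not_lt, map_mul, Int.natAbs_mul]
      exact Nat.le_mul_of_pos_right _ (by omega) }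

instance : IsDomain Eis := @EuclideanDomain.instIsDomain Eis eisED
instance : IsPrincipalIdealRing Eis := @EuclideanDomain.to_principal_ideal_domain Eis eisED

lemma eis_units {u : Eis} (hu : IsUnit u) :
    u = 1 ∨ u = -1 ∨ u = ⟨0, 1⟩ ∨ u = ⟨0, -1⟩ ∨ u = ⟨1, 1⟩ ∨ u = ⟨-1, -1⟩ := by
  have h1 := QuadraticAlgebra.isUnit_iff_norm_isUnit.1 hu
  have h2 := eis_norm_pos hu.ne_zero
  have h3 : QuadraticAlgebra.norm u = 1 := by
    rcases Int.isUnit_iff.1 h1 with h | h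
    · exact h
    · omega
  rw [eis_norm] at h3
  obtain ⟨a, b⟩ := u
  simp only at h3
  have ha : a ^ 2 ≤ 1 := by nlinarith [sq_nonneg (a - 2 * b)]
  have hb : b ^ 2 ≤ 1 := by nlinarith [sq_nonneg (2 * a - b)]
  have ha' : -1 ≤ a ∧ a ≤ 1 := by constructor <;> nlinarith
  have hb' : -1 ≤ b ∧ b ≤ 1 := by constructor <;> nlinarith
  obtain ⟨ha1, ha2⟩ := ha'
  obtain ⟨hb1, hb2⟩ := hb'
  have e1 : (1 : Eis) = ⟨1, 0⟩ := rfl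
  have e2 : (-1 : Eis) = ⟨-1, 0⟩ := by ext <;> simp [eis_re_one, eis_im_one]
  rw [e2, e1]
  simp only [QuadraticAlgebra.mk.injEq]
  interval_cases a <;> interval_cases b <;> simp_all

/-- Eisenstein cube lemma. -/
lemma eis_cube {m W C : ℤ} (hco : IsCoprime m W) (h : m ^ 2 - m * W + W ^ 2 = C ^ 3)
    (h3 : (3 : ℤ) ∣ W) :
    ∃ s t : ℤ, m = s ^ 3 + t ^ 3 - 3 * s * t ^ 2 ∧ W = 3 * s * t * (s - t) := by
  set x : Eis := ⟨m, W⟩ with hx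
  have hm3 : ¬ (3 : ℤ) ∣ m := by
    intro hm
    obtain ⟨a, b, hab⟩ := hco
    have : (3 : ℤ) ∣ 1 := by rw [← hab]; exact dvd_add (Dvd.dvd.mul_left hm _) (Dvd.dvd.mul_left h3 _)
    omega
  have hprod : x * star x = (C : Eis) ^ 3 := by
    have h4 : (C : Eis) ^ 3 = ((C ^ 3 : ℤ) : Eis) := by push_cast; rfl
    rw [h4, ← h]
    ext
    · rw [QuadraticAlgebra.re_intCast]; simp [hx]; ring
    · rw [QuadraticAlgebra.im_intCast]; simp [hx]; ring
  have hcop : IsCoprime x (star x) := by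
    -- norm x = N coprime to 3
    have hN3 : IsCoprime (3 : ℤ) (m ^ 2 - m * W + W ^ 2) := by
      rw [Prime.coprime_iff_not_dvd Int.prime_three]
      intro hd
      obtain ⟨w, rfl⟩ := h3
      have : (3 : ℤ) ∣ m ^ 2 := by
        have h5 : m ^ 2 = (m ^ 2 - m * (3 * w) + (3 * w) ^ 2) + 3 * (m * w - 3 * w ^ 2) := by ring
        rw [h5]; exact dvd_add hd (dvd_mul_right _ _)
      exact hm3 (Int.prime_three.dvd_of_dvd_pow this)
    -- x + ... : combos:  ideal contains N, and (x - star x) = W(1+2ω), x(…)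
    obtain ⟨p, q, hpq⟩ := hco
    obtain ⟨r, s, hrs⟩ := hN3
    have e1 : ∃ α β : Eis, α * x + β * star x = 3 := by
      -- θ = 1+2ω, θ² = -3 ; x - x̄ = Wθ ; so -θ(x - x̄) = 3W ; 2x - ... 
      refine ⟨(p : Eis) * (⟨1, -1⟩) + (q : Eis) * (⟨-1, -2⟩), (p : Eis) * (⟨2, 1⟩) - (q : Eis) * ⟨-1, -2⟩, ?_⟩
      ext
      · simp [hx, eis_re_three]; linear_combination 3 * hpq
      · simp [hx, eis_im_three]; ring
    obtain ⟨α, β, hαβ⟩ := e1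
    refine ⟨(r : Eis) * α, (r : Eis) * β + (s : Eis) * x, ?_⟩
    have hN : x * star x = ((m ^ 2 - m * W + W ^ 2 : ℤ) : Eis) := by
      ext
      · rw [QuadraticAlgebra.re_intCast]; simp [hx]; ring
      · rw [QuadraticAlgebra.im_intCast]; simp [hx]; ring
    have h1 : ((r * 3 + s * (m ^ 2 - m * W + W ^ 2) : ℤ) : Eis) = 1 := by rw [hrs]; simp
    calc (r : Eis) * α * x + ((r : Eis) * β + (s : Eis) * x) * star x
        = (r : Eis) * (α * x + β * star x) + s * (x * star x) := by ring
      _ = 1 := by rw [hαβ, hN, ← h1]; push_cast; ring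
  obtain ⟨d, u, hdu⟩ := exists_associated_pow_of_mul_eq_pow' hcop hprod
  obtain ⟨s, t⟩ := d
  have hcube : (⟨s, t⟩ : Eis) ^ 3 = ⟨s ^ 3 + t ^ 3 - 3 * s * t ^ 2, 3 * s * t * (s - t)⟩ := by
    rw [pow_three]
    ext
    · simp; ring
    · simp; ring
  rw [hcube] at hdu
  have e1 : (1 : Eis) = ⟨1, 0⟩ := rfl
  have e2 : (-1 : Eis) = ⟨-1, 0⟩ := by ext <;> simp [eis_re_one, eis_im_one]
  have hmod : ∀ A : ℤ, m ≠ 3 * A := fun A hA => hm3 ⟨A, hA⟩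
  obtain ⟨w, rfl⟩ := h3
  rcases eis_units u.isUnit with h | h | h | h | h | h <;> rw [h] at hdu <;>
    (have hre := congrArg QuadraticAlgebra.re hdu
     have him := congrArg QuadraticAlgebra.im hdu
     simp [hx] at hre him)
  · exact ⟨s, t, by linarith, by linarith⟩
  · refine ⟨-s, -t, by linear_combination -hre, by linear_combination -him⟩
  all_goals exfalso
  · exact hmod (-(s*t*(s-t))) (by linarith)
  · exact hmod ((s*t*(s-t))) (by linarith)
  · exact hmod (w - 2*s*t*(s-t)+ s*t*(s-t)) (by linarith)
  · exact hmod (w + s*t*(s-t)) (by linarith)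
end GenA

namespace GenA

lemma isCoprime_of_lin {s t p q m W A B A' B' : ℤ} (h : p * m + q * W = 1)
    (hm : m = s * A + t * B) (hW : W = s * A' + t * B') : IsCoprime s t :=
  ⟨p * A + q * A', p * B + q * B', by rw [← h, hm, hW]; ring⟩

lemma cube_inj {a b : ℤ} (h : a ^ 3 = b ^ 3) : a = b := (Odd.strictMono_pow (by decide : Odd 3)).injective h

lemma not3_of_coprime {a b : ℤ} (h : IsCoprime a b) (h3 : (3 : ℤ) ∣ a) : ¬ (3 : ℤ) ∣ b := by
  intro hb
  obtain ⟨p, q, hpq⟩ := h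
  have : (3 : ℤ) ∣ 1 := by rw [← hpq]; exact dvd_add (Dvd.dvd.mul_left h3 _) (Dvd.dvd.mul_left hb _)
  omega

lemma eis_cube9 {m W C : ℤ} (hco : IsCoprime m W) (h : m ^ 2 - m * W + W ^ 2 = C ^ 3)
    (h9 : (9 : ℤ) ∣ W) :
    ∃ s t : ℤ, (3 : ℤ) ∣ t ∧ IsCoprime s t ∧
      m = s ^ 3 + t ^ 3 - 3 * s * t ^ 2 ∧ W = 3 * s * t * (s - t) ∧ C = s ^ 2 - s * t + t ^ 2 := by
  have h3 : (3 : ℤ) ∣ W := dvd_trans ⟨3, by norm_num⟩ h9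
  obtain ⟨s, t, hm, hW⟩ := eis_cube hco h h3
  have key : ∃ s t : ℤ, (3 : ℤ) ∣ t ∧ m = s ^ 3 + t ^ 3 - 3 * s * t ^ 2 ∧ W = 3 * s * t * (s - t) := by
    have hd : (3 : ℤ) ∣ s * t * (s - t) := by
      obtain ⟨w, hw⟩ := h9
      exact ⟨w, by linarith⟩
    rcases Int.prime_three.dvd_or_dvd hd with h' | h'
    · rcases Int.prime_three.dvd_or_dvd h' with h'' | h''
      · refine ⟨t - s, -s, (dvd_neg).2 h'', ?_, ?_⟩
        · rw [hm]; ring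
        · rw [hW]; ring
      · exact ⟨s, t, h'', hm, hW⟩
    · refine ⟨-t, s - t, h', ?_, ?_⟩
      · rw [hm]; ring
      · rw [hW]; ring
  obtain ⟨s, t, h3t, hm, hW⟩ := key
  refine ⟨s, t, h3t, ?_, hm, hW, ?_⟩
  · obtain ⟨p, q, hpq⟩ := hco
    refine isCoprime_of_lin (A := s ^ 2) (B := t ^ 2 - 3 * s * t) (A' := 3 * t * (s - t)) (B' := 0) hpq ?_ ?_
    · rw [hm]; ring
    · rw [hW]; ring
  · apply cube_inj
    rw [← h, hm, hW]; ring

lemma split_core {s t β e : ℤ} (he : e ≠ 0) (hst : IsCoprime s t) (h : s * t * (s - t) = e * β ^ 3)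
    (het : e ∣ t) : ∃ a b c : ℤ, s = b ^ 3 ∧ t = e * a ^ 3 ∧ s - t = -c ^ 3 ∧ β = - (a * b * c) := by
  obtain ⟨t', rfl⟩ := het
  have h1 : s * (t' * (s - e * t')) = β ^ 3 := by
    apply mul_left_cancel₀ he; rw [← h]; ring
  have hst' : IsCoprime s t' := hst.of_mul_right_right
  have hsd : IsCoprime s (s - e * t') := by
    have : s - e * t' = -(e * t') + 1 * s := by ring
    rw [this]
    exact (IsCoprime.add_mul_right_right_iff).2 hst.neg_right
  have htd : IsCoprime t' (s - e * t') := by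
    have : s - e * t' = s + (-e) * t' := by ring
    rw [this]
    exact (IsCoprime.add_mul_right_right_iff).2 hst'.symm
  have c1 : IsCoprime s (t' * (s - e * t')) := hst'.mul_right hsd
  obtain ⟨b, hb⟩ := Int.eq_pow_of_mul_eq_pow_odd_left c1 (by decide : Odd 3) h1
  obtain ⟨g, hg⟩ := Int.eq_pow_of_mul_eq_pow_odd_right c1 (by decide : Odd 3) h1
  obtain ⟨a, ha⟩ := Int.eq_pow_of_mul_eq_pow_odd_left htd (by decide : Odd 3) hg
  obtain ⟨c, hc⟩ := Int.eq_pow_of_mul_eq_pow_odd_right htd (by decide : Odd 3) hg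
  refine ⟨a, b, -c, hb, by rw [ha], by rw [hc]; ring, ?_⟩
  apply cube_inj
  have h2 : s * (t' * (s - e * t')) = b ^ 3 * (a ^ 3 * c ^ 3) := by
    rw [hc, ha, hb]
  rw [← h1, h2]; ring

lemma sum3 {X Y c : ℤ} (h : X ^ 3 + Y ^ 3 = 3 * c) : ∃ W, X + Y = 3 * W := by
  have h3 : (3 : ℤ) ∣ (X + Y) ^ 3 := ⟨c + X ^ 2 * Y + X * Y ^ 2, by linear_combination h⟩
  exact Int.prime_three.dvd_of_dvd_pow h3

/-- common set-up -/
lemma setup {X Y W : ℤ} (hco : IsCoprime X Y) (hW : X + Y = 3 * W) :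
    IsCoprime W (X ^ 2 - 3 * X * W + 3 * W ^ 2) ∧ ¬ (3 : ℤ) ∣ (X ^ 2 - 3 * X * W + 3 * W ^ 2) ∧
    IsCoprime (X - W) W ∧
    (X - W) ^ 2 - (X - W) * W + W ^ 2 = X ^ 2 - 3 * X * W + 3 * W ^ 2 ∧
    X ^ 2 - X * Y + Y ^ 2 = 3 * (X ^ 2 - 3 * X * W + 3 * W ^ 2) := by
  have hY : Y = 3 * W - X := by linarith
  subst hY
  have hXW : IsCoprime X W := by
    obtain ⟨p, q, hpq⟩ := hco
    exact ⟨p - q, 3 * q, by rw [← hpq]; ring⟩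
  refine ⟨?_, ?_, ?_, by ring, by ring⟩
  · have : X ^ 2 - 3 * X * W + 3 * W ^ 2 = X ^ 2 + (-3 * X + 3 * W) * W := by ring
    rw [this]
    exact (IsCoprime.add_mul_right_right_iff).2 hXW.symm.pow_right
  · intro h
    have h2 : (3 : ℤ) ∣ X ^ 2 := by
      have : X ^ 2 = (X ^ 2 - 3 * X * W + 3 * W ^ 2) + 3 * (X * W - W ^ 2) := by ring
      rw [this]; exact dvd_add h (dvd_mul_right _ _)
    have h3 := Int.prime_three.dvd_of_dvd_pow h2
    exact not3_of_coprime hco h3 (dvd_sub (dvd_mul_right _ _) h3)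
  · have : X - W = X + (-1) * W := by ring
    rw [this]
    exact (IsCoprime.add_mul_right_left_iff).2 hXW

lemma fac9 {X Y z : ℤ} (hco : IsCoprime X Y) (h : X ^ 3 + Y ^ 3 = 9 * z ^ 3) :
    ∃ B C : ℤ, X + Y = 3 * B ^ 3 ∧ X ^ 2 - X * Y + Y ^ 2 = 3 * C ^ 3 ∧ z = B * C ∧
      (X - B ^ 3) ^ 2 - (X - B ^ 3) * B ^ 3 + (B ^ 3) ^ 2 = C ^ 3 ∧
      IsCoprime (X - B ^ 3) (B ^ 3) ∧ ¬ (3 : ℤ) ∣ C := by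
  obtain ⟨W, hW⟩ := sum3 (X := X) (Y := Y) (c := 3 * z ^ 3) (by linarith)
  obtain ⟨h1, h2, h3, h4, h5⟩ := setup hco hW
  have hz : W * (X ^ 2 - 3 * X * W + 3 * W ^ 2) = z ^ 3 := by
    have : 9 * (W * (X ^ 2 - 3 * X * W + 3 * W ^ 2)) = 9 * z ^ 3 := by
      rw [← h]; linear_combination (-3 * W) * h5 - (X ^ 2 - X * Y + Y ^ 2) * hW
    linarith
  obtain ⟨B, hB⟩ := Int.eq_pow_of_mul_eq_pow_odd_left h1 (by decide : Odd 3) hz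
  obtain ⟨C, hC⟩ := Int.eq_pow_of_mul_eq_pow_odd_right h1 (by decide : Odd 3) hz
  refine ⟨B, C, by rw [hW, hB], by rw [h5, hC], ?_, ?_, ?_, ?_⟩
  · apply cube_inj
    rw [← hz, hC, hB]; ring
  · rw [← hC, ← hB, h4]
  · rw [← hB]; exact h3
  · intro hd
    apply h2; rw [hC]; exact dvd_pow hd (by norm_num)

lemma tri9 {X Y z : ℤ} (hco : IsCoprime X Y) (h : X ^ 3 + Y ^ 3 = 9 * z ^ 3) (h3 : (3 : ℤ) ∣ z) :
    ∃ a b c : ℤ, IsCoprime b c ∧ b ^ 3 + c ^ 3 = 9 * a ^ 3 ∧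
      X = (b ^ 3) ^ 3 + 3 * (b ^ 3) ^ 2 * (9 * a ^ 3) - 6 * b ^ 3 * (9 * a ^ 3) ^ 2 + (9 * a ^ 3) ^ 3 ∧
      Y = -(b ^ 3) ^ 3 + 6 * (b ^ 3) ^ 2 * (9 * a ^ 3) - 3 * b ^ 3 * (9 * a ^ 3) ^ 2 - (9 * a ^ 3) ^ 3 ∧
      z = -(3 * a * b * c) * (b ^ 6 + b ^ 3 * c ^ 3 + c ^ 6) ∧
      X ^ 2 - X * Y + Y ^ 2 = 3 * (b ^ 6 + b ^ 3 * c ^ 3 + c ^ 6) ^ 3 ∧ X + Y = 3 * (-(3 * a * b * c)) ^ 3 := by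
  obtain ⟨B, C, h1, h2, hz, h4, h5, h6⟩ := fac9 hco h
  have hB : (3 : ℤ) ∣ B := by
    rw [hz] at h3
    exact (Int.prime_three.dvd_or_dvd h3).resolve_right h6
  obtain ⟨β, rfl⟩ := hB
  obtain ⟨s, t, h3t, hst, hm, hW, hC⟩ := eis_cube9 h5 h4 ⟨3 * β ^ 3, by ring⟩
  have hst9 : s * t * (s - t) = 9 * β ^ 3 := by linarith
  have h9t : (9 : ℤ) ∣ t := by
    have hs : IsCoprime (9 : ℤ) (s * (s - t)) := by
      have h3s : ¬ (3 : ℤ) ∣ s := not3_of_coprime hst.symm h3t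
      have h3d : ¬ (3 : ℤ) ∣ s - t := fun h' => h3s (by have := dvd_add h' h3t; simpa using this)
      have : IsCoprime ((3 : ℤ) ^ 2) (s * (s - t)) := by
        apply IsCoprime.pow_left
        rw [Prime.coprime_iff_not_dvd Int.prime_three]
        intro h'
        rcases Int.prime_three.dvd_or_dvd h' with h | h
        · exact h3s h
        · exact h3d h
      simpa using this
    exact hs.dvd_of_dvd_mul_left (show (9 : ℤ) ∣ s * (s - t) * t from ⟨β ^ 3, by rw [← hst9]; ring⟩)
  obtain ⟨a, b, c, hs, ht, hd, hβ⟩ := split_core (by norm_num) hst hst9 h9t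
  have hbc : b ^ 3 + c ^ 3 = 9 * a ^ 3 := by rw [← hs, ← ht]; linarith
  have hCc : C = b ^ 6 + b ^ 3 * c ^ 3 + c ^ 6 := by
    rw [hC]
    have ht' : t = b ^ 3 + c ^ 3 := by rw [← hs]; linarith
    rw [ht', hs]; ring
  have hXm : X = (s ^ 3 + t ^ 3 - 3 * s * t ^ 2) + 3 * s * t * (s - t) := by rw [← hm, ← hW]; ring
  refine ⟨a, b, c, ?_, hbc, ?_, ?_, ?_, ?_, ?_⟩
  · have : IsCoprime (b ^ 3) (c ^ 3) := by
      rw [← hs]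
      have : c ^ 3 = t + (-1) * s := by linarith
      rw [this]; exact (IsCoprime.add_mul_right_right_iff).2 hst
    exact (IsCoprime.pow_iff (by norm_num) (by norm_num)).1 this
  · rw [hXm, ← hs, ← ht]; ring
  · have : Y = 3 * (3 * s * t * (s - t)) - X := by rw [← hW, ← h1]; ring
    rw [this, hXm, ← hs, ← ht]; ring
  · rw [hz, hCc, hβ]; ring
  · rw [h2, hCc]
  · rw [h1, hβ]; ring

lemma no3_aux (N : ℕ) : ∀ X Y z : ℤ, IsCoprime X Y → X ^ 3 + Y ^ 3 = 3 * z ^ 3 → z.natAbs ≤ N → z = 0 := by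
  induction N with
  | zero => intro X Y z _ _ h; omega
  | succ N ih =>
    intro X Y z hco h hN
    by_contra hz0
    obtain ⟨W, hW⟩ := sum3 h
    obtain ⟨h1, h2, h3, h4, h5⟩ := setup hco hW
    have hz : 3 * (W * (X ^ 2 - 3 * X * W + 3 * W ^ 2)) = z ^ 3 := by
      have : 9 * (W * (X ^ 2 - 3 * X * W + 3 * W ^ 2)) = 3 * z ^ 3 := by
        rw [← h]; linear_combination (-3 * W) * h5 - (X ^ 2 - X * Y + Y ^ 2) * hW
      linarith
    have hz3 : (3 : ℤ) ∣ z := Int.prime_three.dvd_of_dvd_pow (n := 3) ⟨_, hz.symm⟩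
    obtain ⟨z', rfl⟩ := hz3
    have hz' : W * (X ^ 2 - 3 * X * W + 3 * W ^ 2) = 9 * z' ^ 3 := by linarith
    have h9 : (9 : ℤ) ∣ W := by
      have hs : IsCoprime (9 : ℤ) (X ^ 2 - 3 * X * W + 3 * W ^ 2) := by
        have : IsCoprime ((3 : ℤ) ^ 2) (X ^ 2 - 3 * X * W + 3 * W ^ 2) := by
          apply IsCoprime.pow_left
          rw [Prime.coprime_iff_not_dvd Int.prime_three]
          exact h2
        simpa using this
      exact hs.dvd_of_dvd_mul_right ⟨_, hz'⟩
    obtain ⟨W', hW'⟩ := h9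
    have hzz : W' * (X ^ 2 - 3 * X * W + 3 * W ^ 2) = z' ^ 3 := by
      have : 9 * (W' * (X ^ 2 - 3 * X * W + 3 * W ^ 2)) = 9 * z' ^ 3 := by
        rw [← hz']; rw [hW']; ring
      linarith
    have h1' : IsCoprime W' (X ^ 2 - 3 * X * W + 3 * W ^ 2) := by
      rw [hW'] at h1 ⊢; exact h1.of_mul_left_right
    obtain ⟨B, hB⟩ := Int.eq_pow_of_mul_eq_pow_odd_left h1' (by decide : Odd 3) hzz
    obtain ⟨C, hC⟩ := Int.eq_pow_of_mul_eq_pow_odd_right h1' (by decide : Odd 3) hzz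
    rw [hC] at h4
    obtain ⟨s, t, h3t, hst, hm, hWs, hCs⟩ := eis_cube9 h3 h4 ⟨W', hW'⟩
    have hst3 : s * t * (s - t) = 3 * B ^ 3 := by
      rw [← hB]; linarith
    obtain ⟨a, b, c, hs, ht, hd, hβ⟩ := split_core (by norm_num) hst hst3 h3t
    have hbc : b ^ 3 + c ^ 3 = 3 * a ^ 3 := by rw [← hs, ← ht]; linarith
    have hco' : IsCoprime b c := by
      have : IsCoprime (b ^ 3) (c ^ 3) := by
        rw [← hs]
        have : c ^ 3 = t + (-1) * s := by linarith
        rw [this]; exact (IsCoprime.add_mul_right_right_iff).2 hst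
      exact (IsCoprime.pow_iff (by norm_num) (by norm_num)).1 this
    have hzB : z' = B * C := by
      apply cube_inj
      rw [← hzz, hC, hB]; ring
    have ha0 : a ≠ 0 := by
      rintro rfl
      apply hz0; rw [hzB, hβ]; ring
    have hdvd : a ∣ z' := ⟨-(b * c * C), by rw [hzB, hβ]; ring⟩
    have hz'0 : z' ≠ 0 := by rintro rfl; simp at hz0
    have hle := Nat.le_of_dvd (by omega) (Int.natAbs_dvd_natAbs.2 hdvd)
    exact ha0 (ih b c a hco' hbc (by omega))

lemma no3 {X Y z : ℤ} (hco : IsCoprime X Y) (h : X ^ 3 + Y ^ 3 = 3 * z ^ 3) : z = 0 :=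
  no3_aux _ X Y z hco h le_rfl

end GenA

namespace GenA
open WeierstrassCurve

def Wc : WeierstrassCurve.Affine ℚ := ⟨0, 0, 0, 0, -48⟩

lemma wc_eq (x y : ℚ) : Wc.Equation x y ↔ y ^ 2 = x ^ 3 - 48 := by
  rw [Affine.equation_iff]; simp [Wc, sub_eq_add_neg]

lemma wc_ns {x y : ℚ} (h : y ^ 2 = x ^ 3 - 48) : Wc.Nonsingular x y := by
  apply (Affine.equation_iff_nonsingular_of_Δ_ne_zero _).1 ((wc_eq x y).2 h)
  simp [Wc, Δ, b₂, b₄, b₆, b₈]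

def xc (Q : Wc.Point) (x : ℚ) : Prop := ∃ y h, Q = .some x y h

lemma xc_unique {Q Q' : Wc.Point} {x : ℚ} (h : xc Q x) (h' : xc Q' x) : Q = Q' ∨ Q = -Q' := by
  obtain ⟨y, h1, rfl⟩ := h
  obtain ⟨y', h1', rfl⟩ := h'
  exact Affine.Point.X_eq_iff.1 rfl

lemma xc_neg {Q : Wc.Point} {x : ℚ} (h : xc Q x) : xc (-Q) x := by
  obtain ⟨y, h1, rfl⟩ := h
  rw [Affine.Point.neg_some]
  exact ⟨_, _, rfl⟩

lemma xc_inj {Q : Wc.Point} {x x' : ℚ} (h : xc Q x) (h' : xc Q x') : x = x' := by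
  obtain ⟨y, h1, rfl⟩ := h
  obtain ⟨y', h1', h2⟩ := h'
  simp at h2; exact h2.1

lemma add_pt {x1 y1 x2 y2 : ℚ} (h1 : Wc.Nonsingular x1 y1) (h2 : Wc.Nonsingular x2 y2) (hx : x1 ≠ x2) :
    xc (Affine.Point.some x1 y1 h1 + Affine.Point.some x2 y2 h2)
      (((y1 - y2) / (x1 - x2)) ^ 2 - x1 - x2) := by
  rw [Affine.Point.add_of_X_ne hx]
  have : ((y1 - y2) / (x1 - x2)) ^ 2 - x1 - x2 = Wc.addX x1 x2 (Wc.slope x1 x2 y1 y2) := by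
    rw [Affine.slope_of_X_ne hx]; simp [Affine.addX, Wc]
  rw [this]
  exact ⟨_, _, rfl⟩

lemma dbl_pt {x y : ℚ} (h : Wc.Nonsingular x y) (hy : y ≠ 0) :
    ∃ h', Affine.Point.some x y h + Affine.Point.some x y h =
      Affine.Point.some ((3 * x ^ 2 / (2 * y)) ^ 2 - 2 * x)
        (-(3 * x ^ 2 / (2 * y) * ((3 * x ^ 2 / (2 * y)) ^ 2 - 3 * x) + y)) h' := by
  have hy' : y ≠ Wc.negY x y := by
    simp [Affine.negY, Wc]
    intro h'; apply hy; linarith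
  have e1 : (3 * x ^ 2 / (2 * y)) ^ 2 - 2 * x = Wc.addX x x (Wc.slope x x y y) := by
    rw [Affine.slope_of_Y_ne rfl hy']; simp [Affine.addX, Affine.negY, Wc]; ring
  have e2 : -(3 * x ^ 2 / (2 * y) * ((3 * x ^ 2 / (2 * y)) ^ 2 - 3 * x) + y) = Wc.addY x x y (Wc.slope x x y y) := by
    rw [Affine.slope_of_Y_ne rfl hy']; simp [Affine.addY, Affine.negAddY, Affine.addX, Affine.negY, Wc]; ring
  rw [Affine.Point.add_self_of_Y_ne hy', e1, e2]
  exact ⟨_, rfl⟩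

lemma tpl_pt {x y : ℚ} (h : Wc.Nonsingular x y) (hy : y ≠ 0) (hx : x ≠ 0) (hx3 : x ^ 3 - 192 ≠ 0) :
    xc (3 • Affine.Point.some x y h)
     ((x ^ 9 + 4608 * x ^ 6 + 110592 * x ^ 3 - 7077888) / (9 * x ^ 2 * (x ^ 3 - 192) ^ 2)) := by
  have he : y ^ 2 = x ^ 3 - 48 := (wc_eq x y).1 h.1
  obtain ⟨h', hd⟩ := dbl_pt h hy
  have h3 : 3 • Affine.Point.some x y h = (Affine.Point.some x y h + Affine.Point.some x y h) + Affine.Point.some x y h := by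
    abel
  rw [h3, hd]
  have hne : (3 * x ^ 2 / (2 * y)) ^ 2 - 2 * x - x = -(3 * x * (x ^ 3 - 192)) / (4 * y ^ 2) := by
    field_simp
    linear_combination (-48) * he
  have hne0 : -(3 * x * (x ^ 3 - 192)) / (4 * y ^ 2) ≠ 0 := by
    apply div_ne_zero
    · exact neg_ne_zero.2 (mul_ne_zero (mul_ne_zero (by norm_num) hx) hx3)
    · positivity
  have hx2 : (3 * x ^ 2 / (2 * y)) ^ 2 - 2 * x ≠ x := by
    intro h''
    apply hne0; rw [← hne, h'', sub_self]
  have := add_pt h' h hx2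
  convert this using 1
  rw [hne]
  have hx2' : (3 * x ^ 2 / (2 * y)) ^ 2 - 2 * x = x + -(3 * x * (x ^ 3 - 192)) / (4 * y ^ 2) := by
    rw [← hne]; ring
  rw [hx2']
  have hx3' : (3 * x ^ 2 / (2 * y)) ^ 2 - 3 * x = -(3 * x * (x ^ 3 - 192)) / (4 * y ^ 2) := by
    rw [← hne]; ring
  rw [hx3']
  have e3 : (-(3 * x ^ 2 / (2 * y) * (-(3 * x * (x ^ 3 - 192)) / (4 * y ^ 2)) + y) - y) / (-(3 * x * (x ^ 3 - 192)) / (4 * y ^ 2))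
     = -(3 * x ^ 2 / (2 * y)) + 8 * y ^ 3 / (3 * x * (x ^ 3 - 192)) := by
    field_simp
    ring
  rw [e3]
  have e4 : (-(3 * x ^ 2 / (2 * y)) + 8 * y ^ 3 / (3 * x * (x ^ 3 - 192))) ^ 2 
     = (9 * x ^ 4 / (4 * y ^ 2)) - 8 * x * y ^ 2 / (x ^ 3 - 192) + 64 * (y ^ 2) ^ 3 / (9 * x ^ 2 * (x ^ 3 - 192) ^ 2) := by
    field_simp
    ring
  rw [e4, he]
  have hy2 : x ^ 3 - 48 ≠ 0 := by rw [← he]; positivity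
  field_simp
  ring
end GenA

namespace GenA
open WeierstrassCurve

structure Cub (X Y z : ℤ) : Prop where
  co : IsCoprime X Y
  eq : X ^ 3 + Y ^ 3 = 9 * z ^ 3
  hz : z ≠ 0

lemma Cub.swap {X Y z : ℤ} (h : Cub X Y z) : Cub Y X z := ⟨h.co.symm, by rw [← h.eq]; ring, h.hz⟩

lemma sum_ne {X Y z : ℤ} (h : X ^ 3 + Y ^ 3 = 9 * z ^ 3) (hz : z ≠ 0) : X + Y ≠ 0 := by
  intro h0
  have : 9 * z ^ 3 = 0 := by rw [← h]; linear_combination (X ^ 2 - X * Y + Y ^ 2) * h0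
  apply hz
  have : z ^ 3 = 0 := by linarith
  exact pow_eq_zero_iff (by norm_num) |>.1 this

lemma sum_neQ {X Y z : ℤ} (h : X ^ 3 + Y ^ 3 = 9 * z ^ 3) (hz : z ≠ 0) : (X : ℚ) + Y ≠ 0 := by
  exact_mod_cast sum_ne h hz

def ux (X Y z : ℤ) : ℚ := 12 * z / (X + Y)

lemma ux_swap (X Y z : ℤ) : ux X Y z = ux Y X z := by simp only [ux]; rw [add_comm]

def uy (X Y : ℤ) : ℚ := 12 * (X - Y) / (X + Y)

lemma on_curve {X Y z : ℤ} (h : X ^ 3 + Y ^ 3 = 9 * z ^ 3) (hz : z ≠ 0) :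
    uy X Y ^ 2 = ux X Y z ^ 3 - 48 := by
  have h0 := sum_neQ h hz
  have hq : (X : ℚ) ^ 3 + Y ^ 3 = 9 * z ^ 3 := by exact_mod_cast h
  simp only [uy, ux]
  field_simp
  linear_combination (192) * hq

def pt {X Y z : ℤ} (h : Cub X Y z) : Wc.Point := .some (ux X Y z) (uy X Y) (wc_ns (on_curve h.eq h.hz))

lemma pt_xc {X Y z : ℤ} (h : Cub X Y z) : xc (pt h) (ux X Y z) := ⟨_, _, rfl⟩

lemma pt_ne {X Y z : ℤ} (h : Cub X Y z) : pt h ≠ 0 := Affine.Point.some_ne_zero _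

/-- divide out by gcd -/
lemma reduce {A B C : ℤ} (h : A ^ 3 + B ^ 3 = 9 * C ^ 3) (hC : C ≠ 0) :
    ∃ g X Y z : ℤ, Cub X Y z ∧ A = g * X ∧ B = g * Y ∧ C = g * z := by
  have hAB : A ≠ 0 ∨ B ≠ 0 := by
    by_contra! h'
    obtain ⟨rfl, rfl⟩ := h'
    exact sum_ne h hC (by simp)
  have hg : Int.gcd A B ≠ 0 := by
    rw [Ne, Int.gcd_eq_zero_iff]; tauto
  obtain ⟨X, hX⟩ := Int.gcd_dvd_left A B
  obtain ⟨Y, hY⟩ := Int.gcd_dvd_right A B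
  set g : ℤ := (Int.gcd A B : ℤ) with hgdef
  have hg' : g ≠ 0 := by rw [hgdef]; exact_mod_cast hg
  have hco : IsCoprime X Y := by
    have := Int.gcd_eq_gcd_ab A B
    refine ⟨Int.gcdA A B, Int.gcdB A B, ?_⟩
    apply mul_left_cancel₀ hg'
    calc g * (Int.gcdA A B * X + Int.gcdB A B * Y) = (g * X) * Int.gcdA A B + (g * Y) * Int.gcdB A B := by ring
      _ = A * Int.gcdA A B + B * Int.gcdB A B := by rw [← hX, ← hY]
      _ = g * 1 := by rw [mul_one, hgdef]; exact this.symm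
  have h1 : g ^ 3 ∣ (3 * C) ^ 3 := ⟨3 * (X ^ 3 + Y ^ 3), by
    have : (3 * C) ^ 3 = 3 * (9 * C ^ 3) := by ring
    rw [this, ← h, hX, hY]; ring⟩
  have h2 : g ∣ 3 * C := (Int.pow_dvd_pow_iff (by norm_num)).1 h1
  obtain ⟨k, hk⟩ := h2
  have h3 : 3 * (X ^ 3 + Y ^ 3) = k ^ 3 := by
    have : g ^ 3 * (3 * (X ^ 3 + Y ^ 3)) = g ^ 3 * k ^ 3 := by
      calc g ^ 3 * (3 * (X ^ 3 + Y ^ 3)) = 3 * ((g * X) ^ 3 + (g * Y) ^ 3) := by ring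
        _ = 3 * (9 * C ^ 3) := by rw [← hX, ← hY, h]
        _ = (3 * C) ^ 3 := by ring
        _ = _ := by rw [hk]; ring
    exact mul_left_cancel₀ (pow_ne_zero 3 hg') this
  obtain ⟨z, rfl⟩ := Int.prime_three.dvd_of_dvd_pow (n := 3) ⟨_, h3.symm⟩
  have hz : C = g * z := by linarith
  refine ⟨g, X, Y, z, ⟨hco, by linarith, ?_⟩, hX, hY, hz⟩
  rintro rfl; simp at hz; exact hC hz

lemma ux_mul {X Y z g : ℤ} (hg : g ≠ 0) : ux (g * X) (g * Y) (g * z) = ux X Y z := by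
  have : (g : ℚ) ≠ 0 := by exact_mod_cast hg
  simp only [ux]; push_cast
  rw [← mul_add, mul_left_comm, mul_div_mul_left _ _ this]

/-- every nonzero point is ± pt -/
lemma exists_rep (Q : Wc.Point) (hQ : Q ≠ 0) : ∃ X Y z, ∃ h : Cub X Y z, Q = pt h := by
  rcases Q with _ | ⟨u, v, huv⟩
  · exact absurd rfl hQ
  have he : v ^ 2 = u ^ 3 - 48 := (wc_eq u v).1 huv.1
  have hu : u ≠ 0 := by
    rintro rfl
    nlinarith [sq_nonneg v]
  -- common denominators
  set d : ℤ := (u.den : ℤ) * v.den with hd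
  have hd0 : d ≠ 0 := by positivity
  have hdq : (d : ℚ) ≠ 0 := by exact_mod_cast hd0
  set U : ℤ := u.num * v.den with hU
  set V : ℤ := v.num * u.den with hV
  have hUu : (U : ℚ) = d * u := by
    have := Rat.mul_den_eq_num u
    rw [hU, hd]; push_cast; rw [← this]; ring
  have hVv : (V : ℚ) = d * v := by
    have := Rat.mul_den_eq_num v
    rw [hV, hd]; push_cast; rw [← this]; ring
  have hU0 : U ≠ 0 := by
    have : (U : ℚ) ≠ 0 := by rw [hUu]; exact mul_ne_zero hdq hu
    exact_mod_cast this
  have hcub : (12 * d + V) ^ 3 + (12 * d - V) ^ 3 = 9 * (2 * U) ^ 3 := by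
    have : ((12 * d + V : ℚ)) ^ 3 + (12 * d - V) ^ 3 = 9 * (2 * U) ^ 3 := by
      rw [hUu, hVv]
      linear_combination 72 * (d : ℚ) ^ 3 * he
    exact_mod_cast this
  obtain ⟨g, X, Y, z, hc, h1, h2, h3⟩ := reduce hcub (by omega)
  have hg : (g : ℚ) ≠ 0 := by
    have : g ≠ 0 := by rintro rfl; omega
    exact_mod_cast this
  refine ⟨X, Y, z, hc, ?_⟩
  have h1q : (12 * d + V : ℚ) = g * X := by exact_mod_cast h1
  have h2q : (12 * d - V : ℚ) = g * Y := by exact_mod_cast h2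
  have h3q : (2 * U : ℚ) = g * z := by exact_mod_cast h3
  have hs := sum_neQ hc.eq hc.hz
  have hs' : (g : ℚ) * (X + Y) = 24 * d := by rw [mul_add, ← h1q, ← h2q]; ring
  have hm : (g : ℚ) * (X - Y) = 2 * V := by rw [mul_sub, ← h1q, ← h2q]; ring
  have eu : u = ux X Y z := by
    simp only [ux]
    rw [eq_div_iff hs]
    apply mul_left_cancel₀ hg
    calc (g : ℚ) * (u * (X + Y)) = u * (g * (X + Y)) := by ring
      _ = 12 * (2 * U) := by rw [hs', hUu]; ring
      _ = _ := by rw [h3q]; ring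
  have ev : v = uy X Y := by
    simp only [uy]
    rw [eq_div_iff hs]
    apply mul_left_cancel₀ hg
    calc (g : ℚ) * (v * (X + Y)) = v * (g * (X + Y)) := by ring
      _ = 12 * (2 * V) := by rw [hs', hVv]; ring
      _ = _ := by rw [← hm]; ring
  simp only [pt, Affine.Point.some.injEq]
  exact ⟨eu, ev⟩

lemma cub121 : Cub 1 2 1 := ⟨⟨1, 0, by norm_num⟩, by norm_num, by norm_num⟩

def PP : Wc.Point := pt cub121

lemma ux121 : ux 1 2 1 = 4 := by norm_num [ux]
lemma uy121 : uy 1 2 = -4 := by norm_num [uy]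

/-- same x-coordinate -/
lemma ux_eq {X Y z X' Y' z' : ℤ} (h : X ^ 3 + Y ^ 3 = 9 * z ^ 3) (hz : z ≠ 0)
    (h' : X' ^ 3 + Y' ^ 3 = 9 * z' ^ 3) (hz' : z' ≠ 0) (he : ux X Y z = ux X' Y' z') :
    (z * X' = z' * X ∧ z * Y' = z' * Y) ∨ (z * X' = z' * Y ∧ z * Y' = z' * X) := by
  have s1 := sum_neQ h hz
  have s2 := sum_neQ h' hz'
  simp only [ux] at he
  rw [div_eq_div_iff s1 s2] at he
  have e1 : z * (X' + Y') = z' * (X + Y) := by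
    have : (z : ℚ) * (X' + Y') = z' * (X + Y) := by linarith
    exact_mod_cast this
  have s := sum_ne h hz
  have e2 : z ^ 2 * (X' * Y') = z' ^ 2 * (X * Y) := by
    have : (3 * z' * z * (X + Y)) * (z ^ 2 * (X' * Y')) = (3 * z' * z * (X + Y)) * (z' ^ 2 * (X * Y)) := by
      -- (zX')^3+(zY')^3 = (z'X)^3 + (z'Y)^3
      have c : (z * X') ^ 3 + (z * Y') ^ 3 = (z' * X) ^ 3 + (z' * Y) ^ 3 := by
        linear_combination z ^ 3 * h' - z' ^ 3 * h
      have c' : (z * (X' + Y')) ^ 3 = (z' * (X + Y)) ^ 3 := by rw [e1]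
      have c'' : 3 * (z * X') * (z * Y') * (z * (X' + Y')) = 3 * (z' * X) * (z' * Y) * (z' * (X + Y)) := by
        linear_combination c' - c
      rw [e1] at c''
      linear_combination z * c''
    exact mul_left_cancel₀ (mul_ne_zero (mul_ne_zero (mul_ne_zero (by norm_num) hz') hz) s) this
  have hp : (z * X' - z' * X) * (z * X' - z' * Y) = 0 := by
    linear_combination z * X' * e1 - e2
  rcases mul_eq_zero.1 hp with h0 | h0
  · left; constructor <;> linarith
  · right; constructor <;> linarith

lemma coprime_scale {X Y z X' Y' z' : ℤ} (h : Cub X Y z) (h' : Cub X' Y' z')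
    (e1 : z * X' = z' * X) (e2 : z * Y' = z' * Y) :
    (X' = X ∧ Y' = Y ∧ z' = z) ∨ (X' = -X ∧ Y' = -Y ∧ z' = -z) := by
  have d1 : z ∣ z' := by
    obtain ⟨p, q, hpq⟩ := h.co
    exact ⟨p * X' + q * Y', by linear_combination (-z') * hpq - p * e1 - q * e2⟩
  have d2 : z' ∣ z := by
    obtain ⟨p, q, hpq⟩ := h'.co
    exact ⟨p * X + q * Y, by linear_combination (-z) * hpq + p * e1 + q * e2⟩
  have hz := h.hz
  rcases Int.natAbs_eq_natAbs_iff.1 (Nat.dvd_antisymm (Int.natAbs_dvd_natAbs.2 d1) (Int.natAbs_dvd_natAbs.2 d2)) with e | e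
  · left
    subst e
    exact ⟨mul_left_cancel₀ hz e1, mul_left_cancel₀ hz e2, rfl⟩
  · right
    have : z' = -z := by omega
    subst this
    exact ⟨mul_left_cancel₀ hz (by linarith), mul_left_cancel₀ hz (by linarith), rfl⟩

/-- u = 4 case -/
lemma ux_four {X Y z : ℤ} (h : Cub X Y z) (hu : ux X Y z = 4) :
    Y = 2 * X ∨ X = 2 * Y := by
  rw [← ux121] at hu
  rcases ux_eq h.eq h.hz cub121.eq cub121.hz hu with ⟨h1, h2⟩ | ⟨h1, h2⟩
  · left; linarith
  · right; linarith

lemma frac_aux {D E s N A z : ℚ} (hD : D ≠ 0) (hE : E ≠ 0) (hs : s ≠ 0) :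
    12 * N / D - ((2 * A / E) ^ 2 - 12 * z / s - 4) =
      4 * (3 * N * E ^ 2 * s - D * (A ^ 2 * s - 3 * z * E ^ 2 - s * E ^ 2)) / (D * E ^ 2 * s) := by
  field_simp
  ring

lemma add_PP {X Y z : ℤ} (h : Cub X Y z) (hu : ux X Y z ≠ 4) :
    (2 * X ^ 2 - Y * z) ^ 3 + (Y ^ 2 - 4 * X * z) ^ 3 = 9 * (2 * z ^ 2 - X * Y) ^ 3 ∧
    2 * z ^ 2 - X * Y ≠ 0 ∧
    xc (pt h + PP) (ux (2 * X ^ 2 - Y * z) (Y ^ 2 - 4 * X * z) (2 * z ^ 2 - X * Y)) := by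
  have hcub : (2 * X ^ 2 - Y * z) ^ 3 + (Y ^ 2 - 4 * X * z) ^ 3 = 9 * (2 * z ^ 2 - X * Y) ^ 3 := by
    linear_combination (8 * X ^ 3 + Y ^ 3 + 8 * z ^ 3 - 12 * X * Y * z) * h.eq
  have hs := sum_neQ h.eq h.hz
  have hne : 2 * z ^ 2 - X * Y ≠ 0 := by
    intro h0
    have hXY : X * Y = 2 * z ^ 2 := by linarith
    have h1 : (8 * X ^ 3 - Y ^ 3) * (X ^ 3 - 8 * Y ^ 3) = 0 := by
      have e : (X * Y) ^ 3 = 8 * z ^ 6 := by rw [hXY]; ring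
      linear_combination (8 * (X ^ 3 + Y ^ 3) + 72 * z ^ 3) * h.eq - 81 * e
    have hz3 : Y = 2 * X ∨ X = 2 * Y := by
      rcases mul_eq_zero.1 h1 with h2 | h2
      · left; apply cube_inj; linarith
      · right; apply cube_inj; linarith
    apply hu
    simp only [ux]
    rw [div_eq_iff hs]
    rcases hz3 with rfl | rfl
    · have : z = X := cube_inj (by linarith [h.eq])
      subst this; push_cast; ring
    · have : z = Y := cube_inj (by linarith [h.eq])
      subst this; push_cast; ring
  refine ⟨hcub, hne, ?_⟩
  have hs' := sum_neQ hcub hne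
  have h4 : ux X Y z ≠ ux 1 2 1 := by rw [ux121]; exact hu
  have := add_pt (wc_ns (on_curve h.eq h.hz)) (wc_ns (on_curve cub121.eq cub121.hz)) h4
  suffices hE : ux (2 * X ^ 2 - Y * z) (Y ^ 2 - 4 * X * z) (2 * z ^ 2 - X * Y) = ((uy X Y - uy 1 2) / (ux X Y z - ux 1 2 1)) ^ 2 - ux X Y z - ux 1 2 1 by
    rw [hE]; exact this
  rw [ux121, uy121]
  have hq : (X : ℚ) ^ 3 + Y ^ 3 = 9 * z ^ 3 := by exact_mod_cast h.eq
  have hd : ux X Y z - 4 ≠ 0 := sub_ne_zero.2 hu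
  have e1 : ux X Y z - 4 = 4 * (3 * z - X - Y) / (X + Y) := by
    simp only [ux]; field_simp; ring
  have e2 : uy X Y - -4 = 8 * (2 * X - Y) / (X + Y) := by
    simp only [uy]; field_simp; ring
  have hd' : (3 * z - X - Y : ℚ) ≠ 0 := by
    intro h0; apply hd; rw [e1, h0]; simp
  rw [e1, e2]
  have e3 : (8 * (2 * X - Y) / (X + Y : ℚ)) / (4 * (3 * z - X - Y) / (X + Y)) = 2 * (2 * X - Y) / (3 * z - X - Y) := by
    field_simp; ring
  rw [e3]
  simp only [ux]
  push_cast at hs' ⊢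
  have key : (12 * (2 * z ^ 2 - X * Y) / (2 * X ^ 2 - Y * z + (Y ^ 2 - 4 * X * z)) : ℚ) -
     ((2 * (2 * X - Y) / (3 * z - X - Y)) ^ 2 - 12 * z / (X + Y) - 4) =
     4 * (3 * (2 * z ^ 2 - X * Y) * (3 * z - X - Y) ^ 2 * (X + Y) -
       (2 * X ^ 2 - Y * z + (Y ^ 2 - 4 * X * z)) * ((2 * X - Y) ^ 2 * (X + Y) - 3 * z * (3 * z - X - Y) ^ 2
          - (X + Y) * (3 * z - X - Y) ^ 2)) / ((2 * X ^ 2 - Y * z + (Y ^ 2 - 4 * X * z)) * (3 * z - X - Y) ^ 2 * (X + Y)) :=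
    frac_aux hs' hd' hs
  rw [← sub_eq_zero, key, div_eq_zero_iff]
  left
  linear_combination 4 * (-6 * X ^ 2 + 3 * X * Y + 6 * X * z - 3 * Y * z : ℚ) * hq

end GenA

namespace GenA
open WeierstrassCurve

lemma Cub.ne {a b c : ℤ} (h : Cub a b c) : a ≠ b := by
  rintro rfl
  have h1 : IsUnit a := isCoprime_self.1 h.co
  have h2 := h.eq
  rcases Int.isUnit_iff.1 h1 with rfl | rfl <;> omega

lemma Cub.ne0 {a b c : ℤ} (h : Cub a b c) : a ≠ 0 := by
  rintro rfl
  have h1 : IsUnit b := isCoprime_zero_left.1 h.co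
  have h2 := h.eq
  rcases Int.isUnit_iff.1 h1 with rfl | rfl <;> omega

lemma Cub.ne0' {a b c : ℤ} (h : Cub a b c) : b ≠ 0 := h.swap.ne0

lemma uy_ne {a b c : ℤ} (h : Cub a b c) : uy a b ≠ 0 := by
  have h1 : (a : ℚ) - b ≠ 0 := by
    have := h.ne
    rw [sub_ne_zero]; exact_mod_cast this
  exact div_ne_zero (mul_ne_zero (by norm_num) h1) (sum_neQ h.eq h.hz)

lemma tpl_cub {b c a : ℤ} (h : Cub b c a) :
    xc (3 • pt h) (4 * (b ^ 6 + b ^ 3 * c ^ 3 + c ^ 6) / (9 * a ^ 2 * b ^ 2 * c ^ 2)) := by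
  have hs := sum_neQ h.eq h.hz
  have ha : (a : ℚ) ≠ 0 := by exact_mod_cast h.hz
  have hb : (b : ℚ) ≠ 0 := by exact_mod_cast h.ne0
  have hc : (c : ℚ) ≠ 0 := by exact_mod_cast h.ne0'
  have hq : (b : ℚ) ^ 3 + c ^ 3 = 9 * a ^ 3 := by exact_mod_cast h.eq
  have hu0 : ux b c a ≠ 0 := div_ne_zero (mul_ne_zero (by norm_num) ha) hs
  have hw : ux b c a ^ 3 = 192 * (b ^ 2 - b * c + c ^ 2) / (b + c) ^ 2 := by
    simp only [ux]
    rw [div_pow, div_eq_div_iff (pow_ne_zero _ hs) (pow_ne_zero _ hs)]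
    linear_combination (-192 * (b + c) ^ 2 : ℚ) * hq
  have hw' : ux b c a ^ 3 - 192 = -576 * b * c / (b + c) ^ 2 := by
    rw [hw]; field_simp; ring
  have hw0 : ux b c a ^ 3 - 192 ≠ 0 := by
    rw [hw']
    exact div_ne_zero (mul_ne_zero (mul_ne_zero (by norm_num) hb) hc) (pow_ne_zero _ hs)
  have := tpl_pt (wc_ns (on_curve h.eq h.hz)) (uy_ne h) hu0 hw0
  have hE : (4 * (b ^ 6 + b ^ 3 * c ^ 3 + c ^ 6) / (9 * a ^ 2 * b ^ 2 * c ^ 2) : ℚ) =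
    (ux b c a ^ 9 + 4608 * ux b c a ^ 6 + 110592 * ux b c a ^ 3 - 7077888) / (9 * ux b c a ^ 2 * (ux b c a ^ 3 - 192) ^ 2) := by
    rw [hw']
    have e9 : ux b c a ^ 9 = (ux b c a ^ 3) ^ 3 := by ring
    have e6 : ux b c a ^ 6 = (ux b c a ^ 3) ^ 2 := by ring
    rw [e9, e6, hw]
    simp only [ux]
    field_simp
    ring
  rw [hE]
  exact this

lemma dbl_cub {a b c : ℤ} (h : Cub a b c) :
    (a * (a ^ 3 + 2 * b ^ 3)) ^ 3 + (-(b * (2 * a ^ 3 + b ^ 3))) ^ 3 = 9 * (c * (a ^ 3 - b ^ 3)) ^ 3 ∧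
    c * (a ^ 3 - b ^ 3) ≠ 0 ∧
    xc (2 • pt h) (ux (a * (a ^ 3 + 2 * b ^ 3)) (-(b * (2 * a ^ 3 + b ^ 3))) (c * (a ^ 3 - b ^ 3))) := by
  have hs := sum_neQ h.eq h.hz
  have hd : (a : ℚ) - b ≠ 0 := by
    have := h.ne
    rw [sub_ne_zero]; exact_mod_cast this
  have hq : (a : ℚ) ^ 3 + b ^ 3 = 9 * c ^ 3 := by exact_mod_cast h.eq
  refine ⟨?_, ?_, ?_⟩
  · linear_combination (a ^ 3 - b ^ 3) ^ 3 * h.eq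
  · apply mul_ne_zero h.hz
    rw [sub_ne_zero]
    exact fun h' => h.ne (cube_inj h')
  · obtain ⟨h', hh⟩ := dbl_pt (wc_ns (on_curve h.eq h.hz)) (uy_ne h)
    have e : 2 • pt h = pt h + pt h := two_nsmul _
    rw [e]
    have hE : ux (a * (a ^ 3 + 2 * b ^ 3)) (-(b * (2 * a ^ 3 + b ^ 3))) (c * (a ^ 3 - b ^ 3)) =
        (3 * ux a b c ^ 2 / (2 * uy a b)) ^ 2 - 2 * ux a b c := by
      simp only [ux, uy]
      push_cast
      have e1 : (a * (a ^ 3 + 2 * b ^ 3) + -(b * (2 * a ^ 3 + b ^ 3)) : ℚ) = (a + b) * (a - b) ^ 3 := by ring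
      rw [e1]
      have e2 : (12 * (c * (a ^ 3 - b ^ 3)) / ((a + b) * (a - b) ^ 3) : ℚ) = 12 * c * (a ^ 2 + a * b + b ^ 2) / ((a + b) * (a - b) ^ 2) := by
        field_simp
        ring
      have e3 : (3 * (12 * c / (a + b)) ^ 2 / (2 * (12 * (a - b) / (a + b))) : ℚ) = 18 * c ^ 2 / ((a + b) * (a - b)) := by
        field_simp
        ring
      rw [e2, e3]
      field_simp
      linear_combination (36 * c) * hq
    rw [hE]
    exact ⟨_, _, hh⟩

lemma dbl_coprime {a b c : ℤ} (h : Cub a b c) :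
    Cub (a * (a ^ 3 + 2 * b ^ 3)) (-(b * (2 * a ^ 3 + b ^ 3))) (c * (a ^ 3 - b ^ 3)) := by
  obtain ⟨h1, h2, -⟩ := dbl_cub h
  refine ⟨?_, h1, h2⟩
  have hab := h.co
  have c1 : IsCoprime a (2 * a ^ 3 + b ^ 3) := by
    have e : 2 * a ^ 3 + b ^ 3 = b ^ 3 + (2 * a ^ 2) * a := by ring
    rw [e]; exact (IsCoprime.add_mul_right_right_iff).2 hab.pow_right
  have c2 : IsCoprime (a ^ 3 + 2 * b ^ 3) b := by
    have e : a ^ 3 + 2 * b ^ 3 = a ^ 3 + (2 * b ^ 2) * b := by ring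
    rw [e]; exact (IsCoprime.add_mul_right_left_iff).2 hab.pow_left
  have c3 : IsCoprime (a ^ 3 + 2 * b ^ 3) (2 * a ^ 3 + b ^ 3) := by
    have e : 2 * a ^ 3 + b ^ 3 = -(3 * b ^ 3) + 2 * (a ^ 3 + 2 * b ^ 3) := by ring
    rw [e]
    apply (IsCoprime.add_mul_right_right_iff).2
    apply IsCoprime.neg_right
    apply IsCoprime.mul_right _ c2.pow_right
    apply IsCoprime.symm
    rw [Prime.coprime_iff_not_dvd Int.prime_three]
    intro hd
    have h9 : (3 : ℤ) ∣ b ^ 3 := by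
      have : b ^ 3 = (a ^ 3 + 2 * b ^ 3) - 3 * (3 * c ^ 3) := by linarith [h.eq]
      rw [this]; exact dvd_sub hd (dvd_mul_right _ _)
    have h3b := Int.prime_three.dvd_of_dvd_pow h9
    have h3a : (3 : ℤ) ∣ a ^ 3 := by
      have : a ^ 3 = 3 * (3 * c ^ 3) - b ^ 3 := by linarith [h.eq]
      rw [this]; exact dvd_sub (dvd_mul_right _ _) h9
    exact not3_of_coprime hab (Int.prime_three.dvd_of_dvd_pow h3a) h3b
  exact ((hab.mul_right c1).mul_left (c2.mul_right c3)).neg_right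

/-- 3 | z: descend -/
lemma tri_step {X Y z : ℤ} (h : Cub X Y z) (h3 : (3 : ℤ) ∣ z) :
    ∃ b c a : ℤ, ∃ hR : Cub b c a, xc (3 • pt hR) (ux X Y z) ∧
      X ^ 2 - X * Y + Y ^ 2 = 3 * (b ^ 6 + b ^ 3 * c ^ 3 + c ^ 6) ^ 3 := by
  obtain ⟨a, b, c, hco, he, -, -, hz, hN, hS⟩ := tri9 h.co h.eq h3
  have ha : a ≠ 0 := by
    rintro rfl; apply h.hz; rw [hz]; ring
  refine ⟨b, c, a, ⟨hco, he, ha⟩, ?_, hN⟩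
  have hR : Cub b c a := ⟨hco, he, ha⟩
  have := tpl_cub hR
  have ha : (a : ℚ) ≠ 0 := by exact_mod_cast hR.hz
  have hb : (b : ℚ) ≠ 0 := by exact_mod_cast hR.ne0
  have hc : (c : ℚ) ≠ 0 := by exact_mod_cast hR.ne0'
  have hE : ux X Y z = (4 * (b ^ 6 + b ^ 3 * c ^ 3 + c ^ 6) / (9 * a ^ 2 * b ^ 2 * c ^ 2)) := by
    simp only [ux]
    have hS' : (X + Y : ℚ) = 3 * (-(3 * a * b * c)) ^ 3 := by exact_mod_cast hS
    rw [hS', hz]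
    push_cast
    field_simp
    ring
  rw [hE]; exact this

end GenA

namespace GenA
open WeierstrassCurve

lemma bnd_aux {H b c : ℤ} (hH : 2 ≤ H)
    (h : 3 * (b ^ 6 + b ^ 3 * c ^ 3 + c ^ 6) ^ 3 ≤ 49 * H ^ 4) : |b| < H := by
  by_contra! hb
  have hb2 : b ^ 2 = |b| ^ 2 := (sq_abs b).symm
  set k := |b| with hk
  have hk2 : 2 ≤ k := hH.trans hb
  have h1 : 3 * k ^ 6 ≤ 4 * (b ^ 6 + b ^ 3 * c ^ 3 + c ^ 6) := by
    have e : k ^ 6 = b ^ 6 := by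
      calc k ^ 6 = (k ^ 2) ^ 3 := by ring
        _ = (b ^ 2) ^ 3 := by rw [hb2]
        _ = _ := by ring
    rw [e]; nlinarith [sq_nonneg (2 * c ^ 3 + b ^ 3)]
  set C := b ^ 6 + b ^ 3 * c ^ 3 + c ^ 6 with hC
  have hk4 : H ^ 4 ≤ k ^ 4 := pow_le_pow_left₀ (by linarith) hb 4
  have hk16 : 16 ≤ k ^ 4 := by
    calc (16 : ℤ) = 2 ^ 4 := by norm_num
      _ ≤ k ^ 4 := pow_le_pow_left₀ (by norm_num) hk2 4
  have hk6 : 4 * k ^ 4 ≤ k ^ 6 := by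
    have : k ^ 6 = k ^ 2 * k ^ 4 := by ring
    rw [this]
    apply mul_le_mul_of_nonneg_right _ (by positivity)
    nlinarith
  have hC1 : 3 * k ^ 4 ≤ C := by linarith
  have hC2 : 48 ≤ C := by linarith
  have hC3 : 2304 * C ≤ C ^ 3 := by
    have : C ^ 3 = C ^ 2 * C := by ring
    rw [this]
    apply mul_le_mul_of_nonneg_right _ (by linarith)
    nlinarith
  linarith

lemma Cub.two_le {X Y z H : ℤ} (h : Cub X Y z) (hX : |X| ≤ H) (hY : |Y| ≤ H) : 2 ≤ H ∧ |z| ≤ H := by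
  have e := h.eq
  have hz := h.hz
  rw [abs_le] at hX hY
  have hH : 2 ≤ H := by
    by_contra! hh
    have h1 : X = -1 ∨ X = 0 ∨ X = 1 := by omega
    have h2 : Y = -1 ∨ Y = 0 ∨ Y = 1 := by omega
    have hne : z ^ 3 ≠ 0 := pow_ne_zero _ hz
    rcases h1 with rfl | rfl | rfl <;> rcases h2 with rfl | rfl | rfl <;> omega
  refine ⟨hH, ?_⟩
  have m : ∀ {u v : ℤ}, u ≤ v → u ^ 3 ≤ v ^ 3 := fun h => (Odd.strictMono_pow (by decide : Odd 3)).monotone h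
  have a1 := m hX.1
  have a2 := m hX.2
  have a3 := m hY.1
  have a4 := m hY.2
  have hp : 0 < H ^ 3 := by positivity
  rw [abs_le]
  constructor
  · by_contra! hh
    have := m hh.le
    have e2 : (-H) ^ 3 = - H ^ 3 := by ring
    rw [e2] at *
    linarith
  · by_contra! hh
    have := m hh.le
    have e2 : (-H) ^ 3 = - H ^ 3 := by ring
    rw [e2] at *
    linarith

lemma mem_of_xc {Q Q' : Wc.Point} {x : ℚ} (h : xc Q x) (h' : xc Q' x)
    (hm : Q' ∈ AddSubgroup.zmultiples PP) : Q ∈ AddSubgroup.zmultiples PP := by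
  rcases xc_unique h h' with rfl | rfl
  · exact hm
  · exact neg_mem hm

lemma gen_step {X Y z H X0 Y0 z0 : ℤ} (h0 : Cub X0 Y0 z0) (hX0 : |X0| ≤ H) (hY0 : |Y0| ≤ H)
    (h : Cub X Y z) (h3 : (3 : ℤ) ∣ z) (hb : X ^ 2 - X * Y + Y ^ 2 ≤ 49 * H ^ 4)
    (ih : ∀ X Y z : ℤ, ∀ h : Cub X Y z, |X| ≤ H - 1 → |Y| ≤ H - 1 → pt h ∈ AddSubgroup.zmultiples PP) :
    pt h ∈ AddSubgroup.zmultiples PP := by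
  obtain ⟨hH, -⟩ := h0.two_le hX0 hY0
  obtain ⟨b, c, a, hR, hx, hN⟩ := tri_step h h3
  rw [hN] at hb
  have l1 : |b| < H := bnd_aux hH hb
  have l2 : |c| < H := bnd_aux (b := c) (c := b) hH (by convert hb using 3; ring)
  have := ih b c a hR (by omega) (by omega)
  exact mem_of_xc (pt_xc h) hx (AddSubgroup.nsmul_mem _ this 3)

lemma gen_aux (N : ℕ) : ∀ X Y z : ℤ, ∀ h : Cub X Y z, |X| ≤ N → |Y| ≤ N →
    pt h ∈ AddSubgroup.zmultiples PP := by
  induction N with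
  | zero => intro X Y z h hX hY; have := (h.two_le hX hY).1; norm_num at this
  | succ N ih =>
    intro X Y z h hX hY
    obtain ⟨hH, hzH⟩ := h.two_le hX hY
    set H : ℤ := ((N + 1 : ℕ) : ℤ) with hHd
    have ih' : ∀ X Y z : ℤ, ∀ h : Cub X Y z, |X| ≤ H - 1 → |Y| ≤ H - 1 → pt h ∈ AddSubgroup.zmultiples PP := by
      intro X Y z h h1 h2
      refine ih X Y z h ?_ ?_ <;> (rw [hHd] at *; push_cast at *; linarith)
    by_cases h3 : (3 : ℤ) ∣ z
    · refine gen_step h hX hY h h3 ?_ ih'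
      rw [abs_le] at hX hY
      have hX2 : X ^ 2 ≤ H ^ 2 := sq_le_sq' hX.1 hX.2
      have hY2 : Y ^ 2 ≤ H ^ 2 := sq_le_sq' hY.1 hY.2
      have h4 : H ^ 2 ≤ H ^ 4 := pow_le_pow_right₀ (by linarith) (by norm_num)
      have h5 : 0 ≤ H ^ 2 := sq_nonneg _
      nlinarith [sq_nonneg (X + Y)]
    · -- wlog z ≡ -X mod 3
      have main : ∀ X Y : ℤ, ∀ h : Cub X Y z, |X| ≤ H → |Y| ≤ H → (3 : ℤ) ∣ z + X →
          pt h ∈ AddSubgroup.zmultiples PP := by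
        intro X Y h hX hY hzX
        by_cases hu : ux X Y z = 4
        · refine mem_of_xc (x := 4) (hu ▸ pt_xc h) (Q' := PP) ?_ (AddSubgroup.mem_zmultiples _)
          rw [← ux121]; exact pt_xc cub121
        obtain ⟨hc, hne, hxc⟩ := add_PP h hu
        obtain ⟨g, X', Y', z', h', e1, e2, e3⟩ := reduce hc hne
        have hg : g ≠ 0 := by
          rintro rfl; simp at e3; exact hne e3
        have hXY3 : (3 : ℤ) ∣ X + Y := by
          obtain ⟨W, hW⟩ := sum3 (c := 3 * z ^ 3) (X := X) (Y := Y) (by rw [h.eq]; ring)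
          exact ⟨W, hW⟩
        have h3' : (3 : ℤ) ∣ z' := by
          obtain ⟨u, hu'⟩ := hzX
          obtain ⟨w, hw⟩ := hXY3
          have ez : z = 3 * u - X := by linarith
          have eY : Y = 3 * w - X := by linarith
          have hgz : (3 : ℤ) ∣ g * z' := by
            rw [← e3, ez, eY]
            exact ⟨6 * u ^ 2 - 4 * u * X + X ^ 2 - X * w, by ring⟩
          rcases Int.prime_three.dvd_or_dvd hgz with h6 | h6
          · exfalso
            have : (3 : ℤ) ∣ 2 * X ^ 2 - Y * z := by rw [e1]; exact h6.mul_right _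
            have h7 : (3 : ℤ) ∣ X ^ 2 := by
              have e : X ^ 2 = (2 * X ^ 2 - Y * z) - 3 * (X * w + X * u - 3 * u * w) := by
                rw [ez, eY]; ring
              rw [e]; exact dvd_sub this (dvd_mul_right _ _)
            have h8 := Int.prime_three.dvd_of_dvd_pow h7
            exact h3 (by rw [ez]; exact dvd_sub (dvd_mul_right _ _) h8)
          · exact h6
        have hm : pt h' ∈ AddSubgroup.zmultiples PP := by
          refine gen_step h hX hY h' h3' ?_ ih'
          rw [abs_le] at hX hY hzH
          have hX2 : X ^ 2 ≤ H ^ 2 := sq_le_sq' hX.1 hX.2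
          have hY2 : Y ^ 2 ≤ H ^ 2 := sq_le_sq' hY.1 hY.2
          have hz2 : z ^ 2 ≤ H ^ 2 := sq_le_sq' hzH.1 hzH.2
          have hX0 := sq_nonneg X
          have hY0 := sq_nonneg Y
          have b1 : |2 * X ^ 2 - Y * z| ≤ 3 * H ^ 2 := by
            rw [abs_le]; constructor <;> nlinarith [sq_nonneg (Y - z), sq_nonneg (Y + z)]
          have b2 : |Y ^ 2 - 4 * X * z| ≤ 5 * H ^ 2 := by
            rw [abs_le]; constructor <;> nlinarith [sq_nonneg (X - z), sq_nonneg (X + z)]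
          have b3 : (2 * X ^ 2 - Y * z) ^ 2 - (2 * X ^ 2 - Y * z) * (Y ^ 2 - 4 * X * z) + (Y ^ 2 - 4 * X * z) ^ 2 ≤ 49 * H ^ 4 := by
            generalize 2 * X ^ 2 - Y * z = A at *
            generalize Y ^ 2 - 4 * X * z = B at *
            have q1 : A ^ 2 ≤ 9 * H ^ 4 := by
              have := sq_le_sq' (abs_le.1 b1).1 (abs_le.1 b1).2
              linarith [show (3 * H ^ 2) ^ 2 = 9 * H ^ 4 by ring]
            have q2 : B ^ 2 ≤ 25 * H ^ 4 := by
              have := sq_le_sq' (abs_le.1 b2).1 (abs_le.1 b2).2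
              linarith [show (5 * H ^ 2) ^ 2 = 25 * H ^ 4 by ring]
            have q3 : |A * B| ≤ 15 * H ^ 4 := by
              rw [abs_mul]
              calc |A| * |B| ≤ (3 * H ^ 2) * (5 * H ^ 2) := mul_le_mul b1 b2 (abs_nonneg _) (by positivity)
                _ = _ := by ring
            have := (abs_le.1 q3).1
            linarith
          rw [e1, e2] at b3
          have hg2 : 1 ≤ g ^ 2 := by
            have : 0 < g ^ 2 := by positivity
            omega
          have : 0 ≤ X' ^ 2 - X' * Y' + Y' ^ 2 := by nlinarith [sq_nonneg (X' - Y'), sq_nonneg X', sq_nonneg Y']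
          nlinarith [mul_nonneg (sub_nonneg.2 hg2) this]
        rw [e1, e2, e3, ux_mul hg] at hxc
        have := mem_of_xc hxc (pt_xc h') hm
        have h9 := sub_mem this (AddSubgroup.mem_zmultiples PP)
        simpa using h9
      have hXY3 : (3 : ℤ) ∣ X + Y := by
        obtain ⟨W, hW⟩ := sum3 (c := 3 * z ^ 3) (X := X) (Y := Y) (by rw [h.eq]; ring)
        exact ⟨W, hW⟩
      have hX3 : ¬ (3 : ℤ) ∣ X := fun h' => not3_of_coprime h.co h' (by omega)
      by_cases hzX : (3 : ℤ) ∣ z + X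
      · exact main X Y h hX hY hzX
      · have q1 : X % 3 = 1 ∨ X % 3 = 2 := by omega
        have q2 : z % 3 = 1 ∨ z % 3 = 2 := by omega
        have := main Y X h.swap hY hX (by rcases q1 with q1 | q1 <;> rcases q2 with q2 | q2 <;> omega)
        exact mem_of_xc (pt_xc h) (by rw [ux_swap]; exact pt_xc h.swap) this

lemma gen {X Y z : ℤ} (h : Cub X Y z) : ∃ k : ℤ, pt h = k • PP := by
  have := gen_aux (X.natAbs + Y.natAbs) X Y z h (by push_cast; linarith [abs_nonneg Y]) (by push_cast; linarith [abs_nonneg X])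
  obtain ⟨k, hk⟩ := AddSubgroup.mem_zmultiples_iff.1 this
  exact ⟨k, hk.symm⟩

/-- doubles -/
lemma dbl_form {X Y z : ℤ} (h : X ^ 3 + Y ^ 3 = 9 * z ^ 3) (hz : z ≠ 0) {Q S : Wc.Point} (hQ : xc Q (ux X Y z))
    (hS : Q = 2 • S) : ∃ a b c : ℤ, Cub a b c ∧
      z * (a * (a ^ 3 + 2 * b ^ 3)) = (c * (a ^ 3 - b ^ 3)) * X ∧
      z * (-(b * (2 * a ^ 3 + b ^ 3))) = (c * (a ^ 3 - b ^ 3)) * Y := by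
  have hS0 : S ≠ 0 := by
    rintro rfl
    obtain ⟨y, h1, h2⟩ := hQ
    exact (Affine.Point.some_ne_zero h1) (h2.symm.trans (hS.trans (nsmul_zero 2)))
  obtain ⟨a, b, c, hc, rfl⟩ := exists_rep S hS0
  obtain ⟨d1, d2, d3⟩ := dbl_cub hc
  rw [← hS] at d3
  rcases ux_eq h hz d1 d2 (xc_inj hQ d3) with ⟨h1, h2⟩ | ⟨h1, h2⟩
  · exact ⟨a, b, c, hc, h1, h2⟩
  · exact ⟨b, a, c, hc.swap, by linear_combination -h2, by linear_combination -h1⟩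

lemma dbl_parity {X Y z : ℤ} (h : Cub X Y z) (hX : X % 2 = 1) (hz : z % 4 = 0) :
    ∃ a b c e : ℤ, Cub a b c ∧ (e = 1 ∨ e = -1) ∧ X = e * (a * (a ^ 3 + 2 * b ^ 3)) ∧ z = e * (c * (a ^ 3 - b ^ 3)) := by
  obtain ⟨k, hk⟩ := gen h
  have hY : Y % 2 = 1 := by
    by_contra h'
    have h0 : Y % 2 = 0 := by omega
    have := h.eq
    have e1 : (X ^ 3 + Y ^ 3) % 2 = 1 := by
      rw [Int.add_emod, pow_succ, pow_succ Y]
      simp [Int.mul_emod, pow_succ, hX, h0]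
    have e2 : (9 * z ^ 3) % 2 = 0 := by
      have hz2 : z % 2 = 0 := by omega
      simp [Int.mul_emod, pow_succ, hz2]
    omega
  rcases Int.even_or_odd k with ⟨m, hm⟩ | ⟨m, hm⟩
  · have e : pt h = 2 • (m • PP) := by
      rw [hk, hm, two_nsmul, add_zsmul]
    obtain ⟨a, b, c, hc, h1, h2⟩ := dbl_form h.eq h.hz (pt_xc h) e
    rcases coprime_scale h (dbl_coprime hc) h1 h2 with ⟨h3, h4, h5⟩ | ⟨h3, h4, h5⟩
    · exact ⟨a, b, c, 1, hc, Or.inl rfl, by linarith, by linarith⟩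
    · exact ⟨a, b, c, -1, hc, Or.inr rfl, by linarith, by linarith⟩
  · exfalso
    have hu : ux X Y z ≠ 4 := by
      intro hu
      rcases ux_four h hu with h' | h' <;> omega
    obtain ⟨hc, hne, hxc⟩ := add_PP h hu
    have e : pt h + PP = 2 • ((m + 1) • PP) := by
      rw [hk, hm, two_nsmul, ← add_zsmul]
      nth_rewrite 2 [← one_zsmul PP]
      rw [← add_zsmul]; congr 1; ring
    obtain ⟨a, b, c, hc', h1, h2⟩ := dbl_form hc hne hxc e
    obtain ⟨z', rfl⟩ : ∃ z', z = 4 * z' := ⟨z / 4, by omega⟩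
    obtain ⟨x, rfl⟩ : ∃ x, X = 2 * x + 1 := ⟨X / 2, by omega⟩
    obtain ⟨y, rfl⟩ : ∃ x, Y = 2 * x + 1 := ⟨Y / 2, by omega⟩
    -- cross relation
    have hD := (dbl_cub hc').2.1
    have hcr : (a * (a ^ 3 + 2 * b ^ 3)) * ((2 * y + 1) ^ 2 - 4 * (2 * x + 1) * (4 * z')) =
        (-(b * (2 * a ^ 3 + b ^ 3))) * (2 * (2 * x + 1) ^ 2 - (2 * y + 1) * (4 * z')) := by
      apply mul_left_cancel₀ hne
      apply mul_left_cancel₀ hD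
      linear_combination ((c * (a ^ 3 - b ^ 3))) * ((2 * y + 1) ^ 2 - 4 * (2 * x + 1) * (4 * z')) * h1 - (c * (a ^ 3 - b ^ 3)) * (2 * (2 * x + 1) ^ 2 - (2 * y + 1) * (4 * z')) * h2
    -- mod 4
    have hab := hc'.co
    have red : ((a * (a ^ 3 + 2 * b ^ 3)) - 2 * (-(b * (2 * a ^ 3 + b ^ 3)))) % 4 = 0 := by
      have : ∃ w, (a * (a ^ 3 + 2 * b ^ 3)) - 2 * (-(b * (2 * a ^ 3 + b ^ 3))) = 4 * w := by
        refine ⟨(-(b * (2 * a ^ 3 + b ^ 3))) * (2 * x ^ 2 + 2 * x - (2 * y + 1) * z') - (a * (a ^ 3 + 2 * b ^ 3)) * (y ^ 2 + y - 4 * (2 * x + 1) * z'), ?_⟩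
        linear_combination hcr
      obtain ⟨w, hw⟩ := this
      omega
    have hnot : ¬ (a % 2 = 0 ∧ b % 2 = 0) := by
      rintro ⟨p, q⟩
      obtain ⟨r, s, hrs⟩ := hab
      have : (r * a + s * b) % 2 = 0 := by simp [Int.add_emod, Int.mul_emod, p, q]
      omega
    have ha4 : a % 4 = 0 ∨ a % 4 = 1 ∨ a % 4 = 2 ∨ a % 4 = 3 := by omega
    have hb4 : b % 4 = 0 ∨ b % 4 = 1 ∨ b % 4 = 2 ∨ b % 4 = 3 := by omega
    have red' : ∀ u v : ℤ, a % 4 = u → b % 4 = v → ((u * (u ^ 3 + 2 * v ^ 3)) - 2 * (-(v * (2 * u ^ 3 + v ^ 3)))) % 4 = 0 := by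
      intro u v hu hv
      rw [← red]
      have h1 : u ≡ a [ZMOD 4] := by rw [← hu]; exact Int.mod_modEq a 4
      have h2 : v ≡ b [ZMOD 4] := by rw [← hv]; exact Int.mod_modEq b 4
      change _ ≡ _ [ZMOD 4]
      gcongr
    rcases ha4 with p | p | p | p <;> rcases hb4 with q | q | q | q <;>
      first
      | (exfalso; apply hnot; omega)
      | (have := red' _ _ p q; norm_num at this)

end GenA

namespace GenA

lemma flt3 {a b c : ℤ} (h : a ^ 3 + b ^ 3 = c ^ 3) : a = 0 ∨ b = 0 ∨ c = 0 := by
  by_contra! h'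
  exact fermatLastTheoremFor_iff_int.1 fermatLastTheoremThree a b c h'.1 h'.2.1 h'.2.2 h

/-- final size contradiction, a > 0 -/
lemma size_aux {a b T : ℤ} (hT : 729 ≤ T) (ha : 0 < a) (hne : a ^ 3 + 2 * b ^ 3 ≠ 0)
    (hs : |a * (a ^ 3 + 2 * b ^ 3)| ≤ 9 * T - 1) (hab : 3 * T ∣ a + b) (h0 : a + b ≠ 0) : False := by
  have m : ∀ {u v : ℤ}, u ≤ v → u ^ 3 ≤ v ^ 3 := fun h => (Odd.strictMono_pow (by decide : Odd 3)).monotone h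
  have hl : 3 * T ≤ |a + b| := Int.le_of_dvd (abs_pos.2 h0) ((dvd_abs _ _).2 hab)
  rw [abs_mul, abs_of_pos ha] at hs
  by_cases haT : a ≤ T
  · have h1 : |a ^ 3 + 2 * b ^ 3| ≤ 9 * T - 1 := by
      nlinarith [abs_nonneg (a ^ 3 + 2 * b ^ 3)]
    have h2 : a ^ 3 ≤ T ^ 3 := m haT
    have h3 : 0 < a ^ 3 := by positivity
    have hT3 : T * 100 ≤ T ^ 3 := by nlinarith [sq_nonneg T]
    rw [abs_le] at h1
    rcases le_abs.1 hl with h | h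
    · have := m (show 2 * T ≤ b by linarith)
      nlinarith
    · have := m (show 2 * T ≤ -b by linarith)
      nlinarith
  · push Not at haT
    have h1 : |a ^ 3 + 2 * b ^ 3| ≤ 8 := by
      by_contra! hh
      have : 9 ≤ |a ^ 3 + 2 * b ^ 3| := by omega
      nlinarith
    have h2 : 1 ≤ |a ^ 3 + 2 * b ^ 3| := Int.one_le_abs hne
    have h3 : a ≤ 9 * T - 1 := by nlinarith
    rw [abs_le] at h1
    have h4 : b < 0 := by
      by_contra! hb
      have : 0 ≤ b ^ 3 := by positivity
      have : a ≤ a ^ 3 := by nlinarith [sq_nonneg a]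
      linarith
    have ha3 : a * 100 ≤ a ^ 3 := by nlinarith [sq_nonneg a]
    have h5 : -b < a := by
      by_contra! hb
      have := m hb
      nlinarith
    have h6 : 2 * a ≤ 3 * (-b) := by
      by_contra! hb
      have := m hb.le
      nlinarith
    rw [abs_of_pos (by linarith)] at hl
    linarith

lemma size_aux' {a b T : ℤ} (hT : 729 ≤ T) (ha : a ≠ 0) (hne : a ^ 3 + 2 * b ^ 3 ≠ 0)
    (hs : |a * (a ^ 3 + 2 * b ^ 3)| ≤ 9 * T - 1) (hab : 3 * T ∣ a + b) (h0 : a + b ≠ 0) : False := by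
  rcases lt_or_gt_of_ne ha with h | h
  · refine size_aux (a := -a) (b := -b) hT (by linarith) ?_ ?_ ?_ ?_
    · intro h'; apply hne; linear_combination -h'
    · convert hs using 2; ring
    · rw [show -a + -b = -(a + b) by ring]; exact (dvd_neg).2 hab
    · intro h'; apply h0; linarith
  · exact size_aux hT h hne hs hab h0

lemma isCoprime_pow9 {n : ℕ} {x : ℤ} (h : ¬ (3 : ℤ) ∣ x) : IsCoprime (9 ^ n) x := by
  apply IsCoprime.pow_left
  have : IsCoprime (3 : ℤ) x := (Prime.coprime_iff_not_dvd Int.prime_three).2 h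
  have := this.pow_left (m := 2)
  norm_num at this; exact this

lemma eight_dvd (m : ℕ) : ∃ w : ℤ, (9 : ℤ) ^ m = 8 * w + 1 := by
  induction m with
  | zero => exact ⟨0, by norm_num⟩
  | succ m ih => obtain ⟨w, hw⟩ := ih; exact ⟨9 * w + 1, by rw [pow_succ, hw]; ring⟩

lemma baseA {X Y : ℤ} {b m : ℕ} (hb : 1 ≤ b) (hm : 1 ≤ m) (hco : IsCoprime X Y)
    (h : X ^ 3 + Y ^ 3 = 9 ^ b * (9 ^ m * X + Y) ^ 3) : False := by
  have hP9 : (9 : ℤ) ≤ 9 ^ m := by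
    calc (9 : ℤ) = 9 ^ 1 := by norm_num
      _ ≤ 9 ^ m := pow_le_pow_right₀ (by norm_num) hm
  have hB9 : (9 : ℤ) ≤ 9 ^ b := by
    calc (9 : ℤ) = 9 ^ 1 := by norm_num
      _ ≤ 9 ^ b := pow_le_pow_right₀ (by norm_num) hb
  have not0 : ¬ (X = 0 ∧ Y = 0) := by
    rintro ⟨rfl, rfl⟩; exact not_isCoprime_zero_zero hco
  have hX : X ≠ 0 := by
    rintro rfl
    apply not0
    refine ⟨rfl, ?_⟩
    have : (9 ^ b - 1) * Y ^ 3 = 0 := by linear_combination -h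
    rcases mul_eq_zero.1 this with h1 | h1
    · linarith
    · exact pow_eq_zero_iff (by norm_num) |>.1 h1
  have hY : Y ≠ 0 := by
    rintro rfl
    apply hX
    have : (9 ^ b * (9 ^ m) ^ 3 - 1) * X ^ 3 = 0 := by linear_combination -h
    rcases mul_eq_zero.1 this with h1 | h1
    · have : (9 : ℤ) ^ 3 ≤ (9 ^ m) ^ 3 := pow_le_pow_left₀ (by norm_num) hP9 3
      nlinarith
    · exact pow_eq_zero_iff (by norm_num) |>.1 h1
  have hz0 : 9 ^ m * X + Y ≠ 0 := by
    intro h0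
    rw [h0] at h
    have : X = -Y := cube_inj (by linear_combination h)
    have : (9 ^ m - 1) * X = 0 := by linear_combination h0 - this
    rcases mul_eq_zero.1 this with h1 | h1
    · linarith
    · exact hX h1
  have h9 : ∀ n : ℕ, (9 : ℤ) ^ n ≠ 0 := fun n => pow_ne_zero _ (by norm_num)
  obtain ⟨β, hβ⟩ : ∃ β, b = 3 * β ∨ b = 3 * β + 1 ∨ b = 3 * β + 2 := ⟨b / 3, by omega⟩
  rcases hβ with rfl | rfl | rfl
  · have : X ^ 3 + Y ^ 3 = (9 ^ β * (9 ^ m * X + Y)) ^ 3 := by rw [h, pow_mul']; ring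
    rcases flt3 this with h' | h' | h'
    · exact hX h'
    · exact hY h'
    · exact mul_ne_zero (h9 _) hz0 h'
  · -- main case
    set q : ℤ := 9 ^ β with hq
    set P : ℤ := 9 ^ m with hP
    obtain ⟨z, hz⟩ : ∃ z, z = q * (P * X + Y) := ⟨_, rfl⟩
    have h : X ^ 3 + Y ^ 3 = 9 * z ^ 3 := by rw [h, hz, hq, pow_succ, pow_mul']; ring
    have hz' : z ≠ 0 := by rw [hz]; exact mul_ne_zero (h9 _) hz0
    have hXd : X ∣ 9 * q ^ 3 - 1 := by
      have : X ∣ Y ^ 3 * (9 * q ^ 3 - 1) := by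
        refine ⟨X ^ 2 - 9 * q ^ 3 * (P * (P ^ 2 * X ^ 2 + 3 * P * X * Y + 3 * Y ^ 2)), ?_⟩
        rw [hz] at h
        linear_combination -h
      exact (hco.pow_right).dvd_of_dvd_mul_left this
    obtain ⟨B, C, f1, f2, f3, f4, f5, f6⟩ := fac9 hco h
    have hB : B ≠ 0 := by rintro rfl; apply hz'; rw [f3]; ring
    have hC : C ≠ 0 := by rintro rfl; apply hz'; rw [f3]; ring
    have hq1 : 1 ≤ q := one_le_pow₀ (by norm_num)
    rcases Nat.eq_zero_or_pos β with h0 | hβ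
    · have hq1 : q = 1 := by rw [hq, h0]; norm_num
      rw [hq1] at hXd hz
      norm_num at hXd
      have hXY : ∃ w, X * Y * (X + Y) = 8 * w := by
        obtain ⟨w, hw⟩ := eight_dvd m
        rw [hz, hP, hw] at h
        have h2 : (3 * (X * Y * (X + Y))) % 8 = 0 := by
          have : 3 * (X * Y * (X + Y)) = 8 * (-(X + Y) ^ 3 - 9 * (w * X * (64 * w ^ 2 * X ^ 2 + 24 * w * X * (X + Y) + 3 * (X + Y) ^ 2))) := by
            linear_combination -h
          rw [this]; omega
        exact ⟨X * Y * (X + Y) / 8, by omega⟩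
      obtain ⟨w, hw⟩ := hXY
      have hcop2 : ∀ k : ℤ, X = 2 * k → Y % 2 = 1 := by
        intro k hk
        by_contra hY2
        obtain ⟨r, s, hrs⟩ := hco
        obtain ⟨y, rfl⟩ : ∃ y, Y = 2 * y := ⟨Y / 2, by omega⟩
        have : 2 * (r * k + s * y) = 1 := by rw [← hrs, hk]; ring
        omega
      have hξ : ∃ ξ : ℤ, X = ξ ^ 3 := by
        have hle : |X| ≤ 8 := Int.le_of_dvd (by norm_num) ((abs_dvd _ _).2 hXd)
        rw [abs_le] at hle
        have hodd : ∀ k : ℤ, k % 2 = 1 → ∀ w : ℤ, k ≠ 2 * w := by omega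
        have nn : X ≠ 2 ∧ X ≠ -2 ∧ X ≠ 4 ∧ X ≠ -4 := by
          refine ⟨?_, ?_, ?_, ?_⟩ <;> rintro rfl
          · obtain ⟨y, rfl⟩ : ∃ y, Y = 2 * y + 1 := ⟨Y / 2, by have := hcop2 1 (by norm_num); omega⟩
            apply hodd ((2 * y + 1) * (2 + (2 * y + 1))) (by rw [Int.mul_emod]; simp [Int.add_emod]) (2 * w); linarith
          · obtain ⟨y, rfl⟩ : ∃ y, Y = 2 * y + 1 := ⟨Y / 2, by have := hcop2 (-1) (by norm_num); omega⟩
            apply hodd ((2 * y + 1) * (2 * (y - 1) + 1)) (by rw [Int.mul_emod]; simp [Int.add_emod]) (-2 * w); linarith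
          · obtain ⟨y, rfl⟩ : ∃ y, Y = 2 * y + 1 := ⟨Y / 2, by have := hcop2 2 (by norm_num); omega⟩
            apply hodd ((2 * y + 1) * (2 * (y + 2) + 1)) (by rw [Int.mul_emod]; simp [Int.add_emod]) (w); linarith
          · obtain ⟨y, rfl⟩ : ∃ y, Y = 2 * y + 1 := ⟨Y / 2, by have := hcop2 (-2) (by norm_num); omega⟩
            apply hodd ((2 * y + 1) * (2 * (y - 2) + 1)) (by rw [Int.mul_emod]; simp [Int.add_emod]) (-w); linarith
        have : X = 1 ∨ X = -1 ∨ X = 8 ∨ X = -8 := by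
          have : X ∣ 8 := hXd
          obtain ⟨l, hr⟩ := hle
          interval_cases X <;> first | omega | (exfalso; revert this; decide)
        rcases this with e | e | e | e
        · exact ⟨1, by rw [e]; norm_num⟩
        · exact ⟨-1, by rw [e]; norm_num⟩
        · exact ⟨2, by rw [e]; norm_num⟩
        · exact ⟨-2, by rw [e]; norm_num⟩
      obtain ⟨ξ, hξ⟩ := hξ
      have hF : (X - B ^ 3) ^ 3 + (B ^ 3) ^ 3 = (ξ * C) ^ 3 := by
        rw [mul_pow, ← hξ, ← f4]; ring
      rcases flt3 hF with h' | h' | h'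
      · have hY2 : Y = 2 * X := by linarith
        have hzX : z = X := cube_inj (by rw [hY2] at h; linarith)
        rw [hY2, hzX] at hz
        have : (P + 1) * X = 0 := by linarith
        rcases mul_eq_zero.1 this with h'' | h''
        · linarith
        · exact hX h''
      · exact hB (pow_eq_zero_iff (by norm_num) |>.1 h')
      · rcases mul_eq_zero.1 h' with h'' | h''
        · rw [h''] at hξ; apply hX; rw [hξ]; norm_num
        · exact hC h''
    · have hq9 : 9 ≤ q := by
        calc (9 : ℤ) = 9 ^ 1 := by norm_num
          _ ≤ 9 ^ β := pow_le_pow_right₀ (by norm_num) hβ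
      have hT : 729 ≤ q ^ 3 := by
        calc (729 : ℤ) = 9 ^ 3 := by norm_num
          _ ≤ q ^ 3 := pow_le_pow_left₀ (by norm_num) hq9 3
      have hXle : |X| ≤ 9 * q ^ 3 - 1 := Int.le_of_dvd (by linarith) ((abs_dvd _ _).2 hXd)
      have hqB : q ∣ B := by
        have : q ∣ B * C := by rw [← f3, hz]; exact dvd_mul_right _ _
        exact (isCoprime_pow9 f6).dvd_of_dvd_mul_right this
      have h3B : (3 : ℤ) ∣ B := by
        refine dvd_trans ?_ hqB
        exact (dvd_trans ⟨3, by norm_num⟩ (dvd_pow_self (9 : ℤ) (by omega)))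
      obtain ⟨s, t, -, -, -, hst, -⟩ := eis_cube9 f5 f4 (by
        obtain ⟨k, rfl⟩ := h3B; exact ⟨3 * k ^ 3, by ring⟩)
      have hB2 : (2 : ℤ) ∣ B := by
        have : (2 : ℤ) ∣ B ^ 3 := by
          rw [hst]
          have : (2 : ℤ) ∣ s * t * (s - t) := by
            rcases Int.even_or_odd s with h1 | h1
            · exact (h1.two_dvd.mul_right t).mul_right _
            · rcases Int.even_or_odd t with h2 | h2
              · exact (h2.two_dvd.mul_left s).mul_right _
              · exact (h1.sub_odd h2).two_dvd.mul_left _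
          obtain ⟨k, hk⟩ := this
          exact ⟨3 * k, by linear_combination 3 * hk⟩
        exact Int.prime_two.dvd_of_dvd_pow this
      obtain ⟨B1, hB1⟩ := hB2
      have hXodd : X % 2 = 1 := by
        by_contra hX2
        obtain ⟨x, hx⟩ : ∃ x, X = 2 * x := ⟨X / 2, by omega⟩
        have hy : Y = 2 * (12 * B1 ^ 3 - x) := by
          have : Y = 3 * B ^ 3 - X := by linarith
          rw [this, hB1, hx]; ring
        obtain ⟨r, s, hrs⟩ := hco
        have : 2 * (r * x + s * (12 * B1 ^ 3 - x)) = 1 := by rw [← hrs, hx, hy]; ring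
        omega
      have hz4 : z % 4 = 0 := by
        obtain ⟨w, hw⟩ := eight_dvd m
        have : z = 4 * (q * (2 * w * X + 6 * B1 ^ 3)) := by
          have hy : Y = 3 * B ^ 3 - X := by linarith
          rw [hz, hP, hw, hy, hB1]; ring
        omega
      obtain ⟨a, b, c, e, hc, he, hXe, hze⟩ := dbl_parity ⟨hco, h, hz'⟩ hXodd hz4
      have heu : e * e = 1 := by rcases he with rfl | rfl <;> norm_num
      have h3ab : ¬ (3 : ℤ) ∣ a ^ 3 - b ^ 3 := by
        intro hd
        obtain ⟨k, hk⟩ := hd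
        have h1 := hc.eq
        have ha : (3 : ℤ) ∣ a ^ 3 := ⟨a ^ 3 - 3 * c ^ 3 - k, by linarith⟩
        have hb : (3 : ℤ) ∣ b ^ 3 := by
          have : b ^ 3 = a ^ 3 - 3 * k := by linarith
          rw [this]; exact dvd_sub ha (dvd_mul_right _ _)
        exact not3_of_coprime hc.co (Int.prime_three.dvd_of_dvd_pow ha) (Int.prime_three.dvd_of_dvd_pow hb)
      have hqc : q ∣ c := by
        have h1 : q ∣ c * (a ^ 3 - b ^ 3) := by
          have : c * (a ^ 3 - b ^ 3) = e * z := by rw [hze]; linear_combination (-(c * (a ^ 3 - b ^ 3))) * heu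
          rw [this, hz]; exact (dvd_mul_right _ _).mul_left _
        exact (isCoprime_pow9 h3ab).dvd_of_dvd_mul_right h1
      obtain ⟨B', C', g1, g2, g3, g4, g5, g6⟩ := fac9 hc.co hc.eq
      have hqB' : q ∣ B' := by
        rw [g3] at hqc
        exact (isCoprime_pow9 g6).dvd_of_dvd_mul_right hqc
      have hab : 3 * q ^ 3 ∣ a + b := by
        rw [g1]; exact mul_dvd_mul_left _ (pow_dvd_pow_of_dvd hqB' 3)
      refine size_aux' hT hc.ne0 ?_ ?_ hab (sum_ne hc.eq hc.hz)
      · intro h0; apply hX; rw [hXe, h0]; ring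
      · rw [hXe] at hXle
        rcases he with rfl | rfl
        · simpa using hXle
        · rw [neg_one_mul, abs_neg] at hXle; exact hXle
  · have : X ^ 3 + Y ^ 3 = 3 * (3 * 9 ^ β * (9 ^ m * X + Y)) ^ 3 := by rw [h, pow_add, pow_mul']; ring
    have := no3 hco this
    exact mul_ne_zero (mul_ne_zero (by norm_num) (h9 _)) hz0 this

lemma scale_gcd (p : ℤ → ℤ → Prop) (hp : ∀ g X Y : ℤ, g ≠ 0 → p (g * X) (g * Y) → p X Y)
    (hc : ∀ X Y, IsCoprime X Y → ¬ p X Y) {X Y : ℤ} (h : p X Y) : X = 0 ∧ Y = 0 := by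
  by_contra h0
  have hg : Int.gcd X Y ≠ 0 := by rw [Ne, Int.gcd_eq_zero_iff]; exact h0
  obtain ⟨x, hx⟩ := Int.gcd_dvd_left X Y
  obtain ⟨y, hy⟩ := Int.gcd_dvd_right X Y
  set g : ℤ := (Int.gcd X Y : ℤ) with hgdef
  have hg' : g ≠ 0 := by rw [hgdef]; exact_mod_cast hg
  have hco : IsCoprime x y := by
    have := Int.gcd_eq_gcd_ab X Y
    refine ⟨Int.gcdA X Y, Int.gcdB X Y, ?_⟩
    apply mul_left_cancel₀ hg'
    calc g * (Int.gcdA X Y * x + Int.gcdB X Y * y) = (g * x) * Int.gcdA X Y + (g * y) * Int.gcdB X Y := by ring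
      _ = X * Int.gcdA X Y + Y * Int.gcdB X Y := by rw [← hx, ← hy]
      _ = g * 1 := by rw [mul_one, hgdef]; exact this.symm
  rw [hx, hy] at h
  exact hc x y hco (hp g x y hg' h)

lemma descA {b : ℕ} (hb : 1 ≤ b) (d : ℕ) : ∀ j : ℕ, 1 ≤ d + j → ∀ x y : ℤ,
    3 ^ d * x ^ 3 + y ^ 3 = 9 ^ b * (3 ^ (d + 2 * j) * x + y) ^ 3 → x = 0 ∧ y = 0 := by
  obtain ⟨b', rfl⟩ : ∃ b', b = b' + 1 := ⟨b - 1, by omega⟩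
  have hy3 : ∀ (d : ℕ) (e : ℕ) (x y : ℤ), 3 ^ (d + 1) * x ^ 3 + y ^ 3 = 9 ^ (b' + 1) * (3 ^ e * x + y) ^ 3 → (3 : ℤ) ∣ y := by
    intro d e x y h
    have : (3 : ℤ) ∣ y ^ 3 := ⟨3 * 9 ^ b' * (3 ^ e * x + y) ^ 3 - 3 ^ d * x ^ 3, by
      rw [pow_succ, pow_succ 9] at h; linear_combination h⟩
    exact Int.prime_three.dvd_of_dvd_pow this
  have scal : ∀ d e : ℕ, ∀ g X Y : ℤ, g ≠ 0 →
    3 ^ d * (g * X) ^ 3 + (g * Y) ^ 3 = 9 ^ (b' + 1) * (3 ^ e * (g * X) + g * Y) ^ 3 →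
    3 ^ d * X ^ 3 + Y ^ 3 = 9 ^ (b' + 1) * (3 ^ e * X + Y) ^ 3 := by
    intro d e g X Y hg h
    apply mul_left_cancel₀ (pow_ne_zero 3 hg)
    linear_combination h
  induction d using Nat.strong_induction_on with
  | _ d ih =>
    intro j hj x y h
    match d, ih, hj, h with
    | 0, _, hj, h =>
      refine scale_gcd (fun x y => 3 ^ 0 * x ^ 3 + y ^ 3 = 9 ^ (b' + 1) * (3 ^ (0 + 2 * j) * x + y) ^ 3) (scal _ _) ?_ h
      intro X Y hco h
      refine baseA (b := b' + 1) (m := j) (by omega) (by omega) hco ?_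
      have e : (3 : ℤ) ^ (0 + 2 * j) = 9 ^ j := by rw [zero_add, pow_mul]; norm_num
      rw [e] at h; linear_combination h
    | 1, _, hj, h =>
      refine scale_gcd (fun x y => 3 ^ 1 * x ^ 3 + y ^ 3 = 9 ^ (b' + 1) * (3 ^ (1 + 2 * j) * x + y) ^ 3) (scal _ _) ?_ h
      intro X Y hco h
      obtain ⟨y, rfl⟩ := hy3 0 _ X Y h
      have : (3 : ℤ) ∣ X ^ 3 := ⟨9 ^ (b' + 1) * 3 * (3 ^ (2 * j) * X + y) ^ 3 - 3 * y ^ 3, by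
        rw [pow_add 3] at h; linarith⟩
      exact not3_of_coprime hco (Int.prime_three.dvd_of_dvd_pow this) (dvd_mul_right _ _)
    | 2, _, hj, h =>
      refine scale_gcd (fun x y => 3 ^ 2 * x ^ 3 + y ^ 3 = 9 ^ (b' + 1) * (3 ^ (2 + 2 * j) * x + y) ^ 3) (scal _ _) ?_ h
      intro X Y hco h
      obtain ⟨y, rfl⟩ := hy3 1 _ X Y h
      have : (3 : ℤ) ∣ X ^ 3 := ⟨9 ^ (b' + 1) * (3 * 3 ^ (2 * j) * X + y) ^ 3 - y ^ 3, by
        rw [pow_add 3] at h; linarith⟩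
      exact not3_of_coprime hco (Int.prime_three.dvd_of_dvd_pow this) (dvd_mul_right _ _)
    | d + 3, ih, hj, h =>
      obtain ⟨y, rfl⟩ := hy3 (d + 2) _ x y h
      have := ih d (by omega) (j + 1) (by omega) x y (by
        have e : (3 : ℤ) ^ (d + 3 + 2 * j) = 3 * 3 ^ (d + 2 * (j + 1)) := by rw [← pow_succ']; congr 1; ring
        rw [e, pow_add 3 d] at h
        linarith)
      exact ⟨this.1, by rw [this.2]; ring⟩

/-- Part A. -/
theorem partA {k1 k2 k3 : ℕ} (h12 : k2 < k1) (h23 : k3 < k2) {y1 y2 y3 : ℚ}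
    (h1 : 3 ^ k1 * y1 + 3 ^ k2 * y2 + 3 ^ k3 * y3 = 0)
    (h3 : 3 ^ k1 * y1 ^ 3 + 3 ^ k2 * y2 ^ 3 + 3 ^ k3 * y3 ^ 3 = 0) : y1 = 0 ∧ y2 = 0 ∧ y3 = 0 := by
  obtain ⟨b, rfl⟩ : ∃ b, k2 = k3 + b := ⟨k2 - k3, by omega⟩
  obtain ⟨d, rfl⟩ : ∃ d, k1 = k3 + b + d := ⟨k1 - (k3 + b), by omega⟩
  have hk : (3 : ℚ) ^ k3 ≠ 0 := pow_ne_zero _ (by norm_num)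
  have hbq : (3 : ℚ) ^ b ≠ 0 := pow_ne_zero _ (by norm_num)
  have e1 : y3 = -(3 ^ b * (3 ^ d * y1 + y2)) := by
    apply mul_left_cancel₀ hk
    rw [pow_add, pow_add] at h1; linear_combination h1
  have e3 : 3 ^ d * y1 ^ 3 + y2 ^ 3 = 9 ^ b * (3 ^ d * y1 + y2) ^ 3 := by
    apply mul_left_cancel₀ hk
    apply mul_left_cancel₀ hbq
    rw [e1, pow_add, pow_add] at h3
    have : (9 : ℚ) ^ b = 3 ^ b * 3 ^ b := by rw [← mul_pow]; norm_num
    rw [this]; linear_combination h3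
  -- integers
  set D : ℤ := (y1.den : ℤ) * y2.den with hD
  have hDq : (D : ℚ) ≠ 0 := by
    have : D ≠ 0 := by positivity
    exact_mod_cast this
  have hx : ((y1.num * y2.den : ℤ) : ℚ) = D * y1 := by
    have := Rat.mul_den_eq_num y1
    rw [hD]; push_cast; rw [← this]; ring
  have hy : ((y2.num * y1.den : ℤ) : ℚ) = D * y2 := by
    have := Rat.mul_den_eq_num y2
    rw [hD]; push_cast; rw [← this]; ring
  have := descA (b := b) (by omega) d 0 (by omega) (y1.num * y2.den) (y2.num * y1.den) (by
    have : (3 : ℚ) ^ d * ((y1.num * y2.den : ℤ) : ℚ) ^ 3 + ((y2.num * y1.den : ℤ) : ℚ) ^ 3 =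
       9 ^ b * (3 ^ (d + 2 * 0) * ((y1.num * y2.den : ℤ) : ℚ) + ((y2.num * y1.den : ℤ) : ℚ)) ^ 3 := by
      rw [hx, hy]; simp only [mul_zero, add_zero]; linear_combination (D : ℚ) ^ 3 * e3
    exact_mod_cast this)
  have z1 : y1 = 0 := by
    have h0 : (D : ℚ) * y1 = 0 := by rw [← hx, this.1]; simp
    exact (mul_eq_zero.1 h0).resolve_left hDq
  have z2 : y2 = 0 := by
    have h0 : (D : ℚ) * y2 = 0 := by rw [← hy, this.2]; simp
    exact (mul_eq_zero.1 h0).resolve_left hDq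
  exact ⟨z1, z2, by rw [e1, z1, z2]; simp⟩

end GenA

namespace GenA
open Polynomial IsLocalRing

lemma le_addVal_iff {O : Type} [CommRing O] [IsDomain O] [IsDiscreteValuationRing O]
    (a : O) (n : ℕ) :
    (n : ℕ∞) ≤ IsDiscreteValuationRing.addVal O a ↔ a ∈ maximalIdeal O ^ n := by
  obtain ⟨ϖ, hϖ⟩ := IsDiscreteValuationRing.exists_irreducible O
  rw [hϖ.maximalIdeal_eq, Ideal.span_singleton_pow, Ideal.mem_span_singleton,
    ← IsDiscreteValuationRing.addVal_le_iff_dvd, hϖ.addVal_pow]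

lemma constQuot_bij (K : Type) [Field K] :
    Function.Bijective ((Ideal.Quotient.mk (Ideal.span {(X : K[X])})).comp (C : K →+* K[X])) := by
  have : Nontrivial (K[X] ⧸ Ideal.span {(X : K[X])}) := by
    apply Ideal.Quotient.nontrivial_iff.mpr
    intro h
    rw [Ideal.span_singleton_eq_top] at h
    exact Polynomial.not_isUnit_X h
  refine ⟨RingHom.injective _, fun y => ?_⟩
  obtain ⟨p, rfl⟩ := Ideal.Quotient.mk_surjective y
  refine ⟨p.coeff 0, ?_⟩
  rw [RingHom.comp_apply, Ideal.Quotient.eq, Ideal.mem_span_singleton, X_dvd_iff]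
  simp

lemma spanX_max (K : Type) [Field K] : (Ideal.span {(X : K[X])}).IsMaximal := by
  apply PrincipalIdealRing.isMaximal_of_irreducible
  exact irreducible_X

set_option linter.deprecated false in
theorem exists_dvr (K : Type) [Field K] [CharZero K] (K' : Type) [Field K']
    [Algebra (RatFunc K) K'] [FiniteDimensional (RatFunc K) K']
    (hd : Nat.Coprime (Module.finrank (RatFunc K) K') 3) :
    ∃ (S : Type) (_ : CommRing S) (_ : IsDomain S) (_ : Algebra S K') (_ : IsFractionRing S K')
      (i : K[X] →+* S)
      (O : Type) (_ : CommRing O) (_ : IsDomain O) (_ : IsDiscreteValuationRing O)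
      (j : S →+* O) (_ : Algebra K (ResidueField O)) (e : ℕ),
      (∀ p : K[X], algebraMap S K' (i p) =
        algebraMap (RatFunc K) K' (algebraMap K[X] (RatFunc K) p)) ∧
      Function.Injective j ∧
      (∀ x, algebraMap K (ResidueField O) x = residue O (j (i (C x)))) ∧
      Module.Finite K (ResidueField O) ∧
      Nat.Coprime (Module.finrank K (ResidueField O)) 3 ∧
      IsDiscreteValuationRing.addVal O (j (i X)) = e ∧ ¬ 3 ∣ e := by
  let alg : Algebra K[X] K' :=
    ((algebraMap (RatFunc K) K').comp (algebraMap K[X] (RatFunc K))).toAlgebra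
  have : IsScalarTower K[X] (RatFunc K) K' := IsScalarTower.of_algebraMap_eq (fun _ => rfl)
  have : CharZero (RatFunc K) := charZero_of_injective_algebraMap (algebraMap K (RatFunc K)).injective
  let S := integralClosure K[X] K'
  have : IsFractionRing S K' := integralClosure.isFractionRing_of_finite_extension (RatFunc K) K'
  have : IsDedekindDomain S := integralClosure.isDedekindDomain K[X] (RatFunc K) K'
  have : Module.Finite K[X] S := IsIntegralClosure.finite K[X] (RatFunc K) K' S
  have hRS : Function.Injective (algebraMap K[X] S) := by
    intro a b hab
    have h1 : algebraMap K[X] K' a = algebraMap K[X] K' b := by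
      rw [IsScalarTower.algebraMap_apply K[X] S K', hab, ← IsScalarTower.algebraMap_apply]
    have h2 : algebraMap (RatFunc K) K' (algebraMap K[X] (RatFunc K) a) =
      algebraMap (RatFunc K) K' (algebraMap K[X] (RatFunc K) b) := h1
    exact (IsFractionRing.injective K[X] (RatFunc K)) ((algebraMap (RatFunc K) K').injective h2)
  have hfs : FaithfulSMul K[X] S := (faithfulSMul_iff_algebraMap_injective _ _).mpr hRS
  have htf : Module.IsTorsionFree K[X] S := Module.isTorsionFree_iff_faithfulSMul.mpr hfs
  let p : Ideal K[X] := Ideal.span {X}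
  have hpm : p.IsMaximal := spanX_max K
  have hp0 : p ≠ ⊥ := by
    intro h
    exact X_ne_zero (Ideal.span_singleton_eq_bot.mp h)
  have hsum := Ideal.sum_ramification_inertia S (RatFunc K) K' hp0
  have hex : ∃ P ∈ IsDedekindDomain.primesOverFinset p S,
      ¬ 3 ∣ Ideal.ramificationIdx' p P * Ideal.inertiaDeg' p P := by
    by_contra hcon
    push Not at hcon
    have h3 : 3 ∣ Module.finrank (RatFunc K) K' := by
      rw [← hsum]
      exact Finset.dvd_sum hcon
    have := Nat.dvd_gcd h3 (dvd_refl 3)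
    rw [hd] at this
    omega
  obtain ⟨P, hP, hef⟩ := hex
  obtain ⟨hPp, hPl⟩ := (IsDedekindDomain.mem_primesOverFinset_iff hp0 _).mp hP
  have := hPp
  have := hPl
  have hPm : P.IsMaximal := Ideal.IsMaximal.of_liesOver_isMaximal P p
  have hPb : P ≠ ⊥ := Ideal.ne_bot_of_liesOver_of_ne_bot hp0 P
  let O := Localization.AtPrime P
  have : IsDiscreteValuationRing O :=
    IsLocalization.AtPrime.isDiscreteValuationRing_of_dedekind_domain S hPb O
  let algR : Algebra K (ResidueField O) :=
    ((residue O).comp ((algebraMap S O).comp ((algebraMap K[X] S).comp C))).toAlgebra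
  have hinj : Function.Injective (algebraMap S O) :=
    IsLocalization.injective O P.primeCompl_le_nonZeroDivisors
  have hXS : algebraMap K[X] S X ≠ 0 := by
    intro h
    exact X_ne_zero (hRS (h.trans (map_zero _).symm))
  have hadd : ∃ e : ℕ, IsDiscreteValuationRing.addVal O (algebraMap S O (algebraMap K[X] S X)) = e := by
    have : IsDiscreteValuationRing.addVal O (algebraMap S O (algebraMap K[X] S X)) ≠ ⊤ := by
      rw [Ne, IsDiscreteValuationRing.addVal_eq_top_iff]
      intro h
      exact hXS (hinj (h.trans (map_zero _).symm))
    obtain ⟨e, he⟩ := ENat.ne_top_iff_exists.mp this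
    exact ⟨e, he.symm⟩
  obtain ⟨e, he⟩ := hadd
  have hmem : ∀ n : ℕ, Ideal.map (algebraMap K[X] S) p ≤ P ^ n ↔ n ≤ e := by
    intro n
    have h1 := le_addVal_iff (algebraMap S O (algebraMap K[X] S X)) n
    rw [he, Nat.cast_le] at h1
    rw [h1, ← IsLocalization.AtPrime.under_maximalIdeal_pow P (Rₚ := O) n, Ideal.map_span,
      Set.image_singleton, Ideal.span_singleton_le_iff_mem, Ideal.mem_under]
  have hram : Ideal.ramificationIdx' p P = e :=
    Ideal.ramificationIdx'_spec ((hmem e).mpr le_rfl)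
      (fun h => by have := (hmem (e+1)).mp h; omega)
  have hfin : Module.finrank K (ResidueField O) = Ideal.inertiaDeg' p P := by
    rw [Ideal.inertiaDeg'_algebraMap]
    refine Algebra.finrank_eq_of_equiv_equiv (RingEquiv.ofBijective _ (constQuot_bij K))
      (IsLocalization.AtPrime.equivQuotMaximalIdeal P O).symm ?_
    ext x
    rw [RingHom.comp_apply, RingHom.comp_apply]
    have : algebraMap K (ResidueField O) x =
      (IsLocalization.AtPrime.equivQuotMaximalIdeal P O)
        (Ideal.Quotient.mk P (algebraMap K[X] S (C x))) := rfl
    rw [this]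
    exact ((IsLocalization.AtPrime.equivQuotMaximalIdeal P O).symm_apply_apply
      (Ideal.Quotient.mk P (algebraMap K[X] S (C x)))).symm
  rw [hram, ← hfin] at hef
  refine ⟨S, inferInstance, inferInstance, inferInstance, inferInstance, algebraMap K[X] S, O,
    inferInstance, inferInstance, inferInstance, algebraMap S O, algR, e, ?_, hinj,
    fun _ => rfl, ?_, ?_, he, ?_⟩
  · intro q
    exact (IsScalarTower.algebraMap_apply K[X] S K' q).symm
  · apply Module.finite_of_finrank_pos
    rcases Nat.eq_zero_or_pos (Module.finrank K (ResidueField O)) with h | h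
    · rw [h] at hef
      simp at hef
    · exact h
  · rw [Nat.coprime_comm]
    exact (Nat.Prime.coprime_iff_not_dvd Nat.prime_three).mpr (fun h => hef (h.mul_left _))
  · exact fun h => hef (h.mul_right _)
end GenA

namespace GenB
open GenA (le_addVal_iff exists_dvr)
open Polynomial IsLocalRing

def kap {A : Type} [CommRing A] (t : A) (m : ℕ) : A := if 3 ∣ m then t ^ (m / 3) else 0

def Tri {A : Type} [CommRing A] {k : ℕ} (t : Fin k → A) (c c' c'' : (Fin k → Fin 3) → A) : A :=
  ∑ e, ∑ e', ∑ e'', (∏ j, kap (t j) ((e j : ℕ) + (e' j : ℕ) + (e'' j : ℕ))) *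
    (c e * c' e' * c'' e'')

def Cub {A : Type} [CommRing A] {k : ℕ} (t : Fin k → A) (c : (Fin k → Fin 3) → A) : A :=
  Tri t c c c

lemma map_kap {A B : Type} [CommRing A] [CommRing B] (f : A →+* B) (t : A) (m : ℕ) :
    f (kap t m) = kap (f t) m := by
  unfold kap
  split_ifs <;> simp

lemma map_Tri {A B : Type} [CommRing A] [CommRing B] (f : A →+* B) {k : ℕ} (t : Fin k → A)
    (c c' c'' : (Fin k → Fin 3) → A) :
    f (Tri t c c' c'') = Tri (fun i => f (t i)) (fun i => f (c i)) (fun i => f (c' i))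
      (fun i => f (c'' i)) := by
  unfold Tri
  simp only [map_sum, map_mul, map_prod, map_kap]

lemma map_Cub {A B : Type} [CommRing A] [CommRing B] (f : A →+* B) {k : ℕ} (t : Fin k → A)
    (c : (Fin k → Fin 3) → A) :
    f (Cub t c) = Cub (fun i => f (t i)) (fun i => f (c i)) := map_Tri f t c c c

lemma Cub_smul {A : Type} [CommRing A] {k : ℕ} (t : Fin k → A) (r : A)
    (c : (Fin k → Fin 3) → A) : Cub t (fun i => r * c i) = r ^ 3 * Cub t c := by
  unfold Cub Tri
  simp only [Finset.mul_sum]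
  refine Finset.sum_congr rfl fun _ _ => Finset.sum_congr rfl fun _ _ =>
    Finset.sum_congr rfl fun _ _ => ?_
  ring

lemma Cub_zero {A : Type} [CommRing A] {k : ℕ} (t : Fin k → A) :
    Cub t (fun _ => 0) = 0 := by
  unfold Cub Tri
  simp

lemma sum_cons {A : Type} [CommRing A] {k : ℕ} (f : (Fin (k + 1) → Fin 3) → A) :
    ∑ e, f e = ∑ a : Fin 3, ∑ e : Fin k → Fin 3, f (Fin.cons a e) := by
  rw [← Fintype.sum_prod_type']
  exact ((Fin.consEquiv (fun _ => Fin 3)).sum_comp f).symm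

lemma Tri_swap1 {A : Type} [CommRing A] {k : ℕ} (t : Fin k → A) (c c' c'' : (Fin k → Fin 3) → A) :
    Tri t c c' c'' = Tri t c' c c'' := by
  unfold Tri
  rw [Finset.sum_comm]
  refine Finset.sum_congr rfl fun _ _ => Finset.sum_congr rfl fun _ _ =>
    Finset.sum_congr rfl fun _ _ => ?_
  congr 1
  · refine Finset.prod_congr rfl fun _ _ => ?_
    rw [add_comm ((_ : Fin 3) : ℕ) _]
  · ring

lemma Tri_swap2 {A : Type} [CommRing A] {k : ℕ} (t : Fin k → A) (c c' c'' : (Fin k → Fin 3) → A) :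
    Tri t c c' c'' = Tri t c c'' c' := by
  unfold Tri
  refine Finset.sum_congr rfl fun _ _ => ?_
  rw [Finset.sum_comm]
  refine Finset.sum_congr rfl fun _ _ =>
    Finset.sum_congr rfl fun _ _ => ?_
  congr 1
  · refine Finset.prod_congr rfl fun _ _ => ?_
    rw [add_right_comm]
  · ring

def part {A : Type} {k : ℕ} (c : (Fin (k + 1) → Fin 3) → A) (a : Fin 3) : (Fin k → Fin 3) → A :=
  fun e => c (Fin.cons a e)

lemma Tri_cons {A : Type} [CommRing A] {k : ℕ} (x : A) (t : Fin k → A)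
    (c c' c'' : (Fin (k + 1) → Fin 3) → A) :
    Tri (Fin.cons x t : Fin (k + 1) → A) c c' c'' =
      ∑ a : Fin 3, ∑ a' : Fin 3, ∑ a'' : Fin 3, kap x ((a : ℕ) + (a' : ℕ) + (a'' : ℕ)) *
        Tri t (part c a) (part c' a') (part c'' a'') := by
  unfold Tri
  rw [sum_cons]
  refine Finset.sum_congr rfl fun a _ => ?_
  simp only [sum_cons, Finset.mul_sum]
  rw [Finset.sum_comm]
  refine Finset.sum_congr rfl fun a' _ => ?_
  rw [Finset.sum_congr rfl (fun e _ => Finset.sum_comm)]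
  rw [Finset.sum_comm]
  refine Finset.sum_congr rfl fun a'' _ => Finset.sum_congr rfl fun e _ =>
    Finset.sum_congr rfl fun e' _ => Finset.sum_congr rfl fun e'' _ => ?_
  rw [Fin.prod_univ_succ]
  simp only [Fin.cons_zero, Fin.cons_succ, part, mul_assoc]

lemma Cub_cons {A : Type} [CommRing A] {k : ℕ} (x : A) (t : Fin k → A)
    (c : (Fin (k + 1) → Fin 3) → A) :
    Cub (Fin.cons x t : Fin (k + 1) → A) c = Cub t (part c 0) +
      (x * Cub t (part c 1) + x ^ 2 * Cub t (part c 2) +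
        6 * x * Tri t (part c 0) (part c 1) (part c 2)) := by
  unfold Cub
  rw [Tri_cons]
  simp only [Fin.sum_univ_three, kap]
  norm_num
  rw [Tri_swap2 t (part c 0) (part c 2) (part c 1), Tri_swap1 t (part c 1) (part c 0) (part c 2),
    Tri_swap2 t (part c 1) (part c 2) (part c 0), Tri_swap1 t (part c 1) (part c 0) (part c 2),
    Tri_swap1 t (part c 2) (part c 0) (part c 1), Tri_swap2 t (part c 0) (part c 2) (part c 1),
    Tri_swap2 t (part c 2) (part c 1) (part c 0), Tri_swap1 t (part c 2) (part c 0) (part c 1),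
    Tri_swap2 t (part c 0) (part c 2) (part c 1)]
  ring

lemma part_eq_zero {A : Type} [Zero A] {k : ℕ} {c : (Fin (k + 1) → Fin 3) → A}
    (h0 : part c 0 = 0) (h1 : part c 1 = 0) (h2 : part c 2 = 0) : c = 0 := by
  funext e
  rw [← Fin.cons_self_tail e]
  have : ∀ a, part c a = 0 := by
    intro a
    fin_cases a
    exacts [h0, h1, h2]
  exact congrFun (this (e 0)) (Fin.tail e)

end GenB

namespace GenB
open GenA (le_addVal_iff exists_dvr)
open Polynomial IsLocalRing IsDiscreteValuationRing

lemma val_lemma {O : Type} [CommRing O] [IsDomain O] [IsDiscreteValuationRing O]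
    {ι : Type} [Finite ι] (f : (ι → O) → O) (P : (ι → O) → Prop)
    (hf : ∀ r a, f (fun i => r * a i) = r ^ 3 * f a)
    (hP : ∀ r a, r ≠ 0 → P (fun i => r * a i) → P a)
    (hu : ∀ a, P a → (∃ i, IsUnit (a i)) → IsUnit (f a)) (u : ι → O) (hPu : P u) :
    ∃ m : ℕ∞, addVal O (f u) = 3 * m ∧ (∀ i, m ≤ addVal O (u i)) ∧ (m = ⊤ → u = 0) := by
  by_cases h0 : u = 0
  · refine ⟨⊤, ?_, ?_, fun _ => h0⟩
    · have := hf 0 u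
      simp only [zero_mul] at this
      subst h0
      have h1 : f 0 = 0 := by
        rw [← show (fun _ : ι => (0:O)) = 0 from rfl, this]
        ring
      rw [h1, addVal_zero]
      rfl
    · intro i
      subst h0
      simp
  · have : Nonempty ι := by
      by_contra h
      rw [not_nonempty_iff] at h
      exact h0 (Subsingleton.elim _ _)
    obtain ⟨i0, hi0⟩ := Finite.exists_min (fun i => addVal O (u i))
    have hr : u i0 ≠ 0 := by
      intro h
      apply h0
      funext i
      have := hi0 i
      rw [h, addVal_zero, top_le_iff, addVal_eq_top_iff] at this
      exact this
    have hd : ∀ i, ∃ a, u i = u i0 * a := fun i => (addVal_le_iff_dvd.mp (hi0 i))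
    choose a ha using hd
    have hu' : u = fun i => u i0 * a i := funext ha
    have hPa : P a := hP (u i0) a hr (hu' ▸ hPu)
    have ha1 : a i0 = 1 := by
      have := ha i0
      exact (mul_left_cancel₀ hr ((mul_one _).trans this)).symm
    have hfa := hu a hPa ⟨i0, by rw [ha1]; exact isUnit_one⟩
    refine ⟨addVal O (u i0), ?_, hi0, ?_⟩
    · rw [hu', hf, addVal_mul, addVal_pow, addVal_eq_zero_iff.mpr hfa, ← hu']
      simp
    · intro h
      exact absurd (addVal_eq_top_iff.mp h) hr

lemma arith {m0 m1 m2 vc : ℕ∞} {e : ℕ} (he : ¬ 3 ∣ e)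
    (hc : (e : ℕ∞) + m0 + m1 + m2 ≤ vc)
    (h0 : ∀ N : ℕ, (N : ℕ∞) ≤ e + 3 * m1 → (N : ℕ∞) ≤ 2 * e + 3 * m2 → (N : ℕ∞) ≤ vc →
      (N : ℕ∞) ≤ 3 * m0)
    (h1 : ∀ N : ℕ, (N : ℕ∞) ≤ 3 * m0 → (N : ℕ∞) ≤ 2 * e + 3 * m2 → (N : ℕ∞) ≤ vc →
      (N : ℕ∞) ≤ e + 3 * m1)
    (h2 : ∀ N : ℕ, (N : ℕ∞) ≤ 3 * m0 → (N : ℕ∞) ≤ e + 3 * m1 → (N : ℕ∞) ≤ vc →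
      (N : ℕ∞) ≤ 2 * e + 3 * m2) :
    m0 = ⊤ ∧ m1 = ⊤ ∧ m2 = ⊤ := by
  have t3 : (3 : ℕ∞) * ⊤ = ⊤ := rfl
  have h0' : ∀ N : ℕ, (N : ℕ∞) ≤ e + 3 * m1 → (N : ℕ∞) ≤ 2 * e + 3 * m2 →
      (N : ℕ∞) ≤ (e : ℕ∞) + m0 + m1 + m2 → (N : ℕ∞) ≤ 3 * m0 :=
    fun N a b c => h0 N a b (c.trans hc)
  have h1' : ∀ N : ℕ, (N : ℕ∞) ≤ 3 * m0 → (N : ℕ∞) ≤ 2 * e + 3 * m2 →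
      (N : ℕ∞) ≤ (e : ℕ∞) + m0 + m1 + m2 → (N : ℕ∞) ≤ e + 3 * m1 :=
    fun N a b c => h1 N a b (c.trans hc)
  have h2' : ∀ N : ℕ, (N : ℕ∞) ≤ 3 * m0 → (N : ℕ∞) ≤ e + 3 * m1 →
      (N : ℕ∞) ≤ (e : ℕ∞) + m0 + m1 + m2 → (N : ℕ∞) ≤ 2 * e + 3 * m2 :=
    fun N a b c => h2 N a b (c.trans hc)
  clear h0 h1 h2 hc
  induction m0 using ENat.recTopCoe with
  | top =>
    induction m1 using ENat.recTopCoe with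
    | top =>
      induction m2 using ENat.recTopCoe with
      | top => exact ⟨rfl, rfl, rfl⟩
      | coe c =>
        have := h2' (2 * e + 3 * c + 1)
        simp only [t3, add_top, top_add, le_top, forall_true_left] at this
        norm_cast at this
        omega
    | coe b =>
      induction m2 using ENat.recTopCoe with
      | top =>
        have := h1' (e + 3 * b + 1)
        simp only [t3, add_top, top_add, le_top, forall_true_left] at this
        norm_cast at this
        omega
      | coe c =>
        have h2 := h2' (2 * e + 3 * c + 1)
        have h1 := h1' (e + 3 * b + 1)
        simp only [t3, add_top, top_add, le_top, forall_true_left] at h1 h2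
        norm_cast at h1 h2
        omega
  | coe a =>
    induction m1 using ENat.recTopCoe with
    | top =>
      induction m2 using ENat.recTopCoe with
      | top =>
        have := h0' (3 * a + 1)
        simp only [t3, add_top, top_add, le_top, forall_true_left] at this
        norm_cast at this
        omega
      | coe c =>
        have h2 := h2' (2 * e + 3 * c + 1)
        have h1 := h0' (3 * a + 1)
        simp only [t3, add_top, top_add, le_top, forall_true_left] at h1 h2
        norm_cast at h1 h2
        omega
    | coe b =>
      induction m2 using ENat.recTopCoe with
      | top =>
        have h2 := h1' (e + 3 * b + 1)
        have h1 := h0' (3 * a + 1)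
        simp only [t3, add_top, top_add, le_top, forall_true_left] at h1 h2
        norm_cast at h1 h2
        omega
      | coe c =>
        have h2 := h2' (2 * e + 3 * c + 1)
        have h1 := h1' (e + 3 * b + 1)
        have h0 := h0' (3 * a + 1)
        norm_cast at h0 h1 h2
        exfalso
        have n0 : ¬ (3 * a + 1 ≤ e + 3 * b ∧ 3 * a + 1 ≤ 2 * e + 3 * c) := by
          rintro ⟨p, q⟩
          have := h0 p q (by omega)
          omega
        have n1 : ¬ (e + 3 * b + 1 ≤ 3 * a ∧ e + 3 * b + 1 ≤ 2 * e + 3 * c) := by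
          rintro ⟨p, q⟩
          have := h1 p q (by omega)
          omega
        have n2 : ¬ (2 * e + 3 * c + 1 ≤ 3 * a ∧ 2 * e + 3 * c + 1 ≤ e + 3 * b) := by
          rintro ⟨p, q⟩
          have := h2 p q (by omega)
          omega
        clear h0 h1 h2
        omega

lemma Tri_val {O : Type} [CommRing O] [IsDomain O] [IsDiscreteValuationRing O] {k : ℕ}
    (t : Fin k → O) (c0 c1 c2 : (Fin k → Fin 3) → O) {m0 m1 m2 : ℕ∞}
    (h0 : ∀ i, m0 ≤ addVal O (c0 i)) (h1 : ∀ i, m1 ≤ addVal O (c1 i))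
    (h2 : ∀ i, m2 ≤ addVal O (c2 i)) : m0 + m1 + m2 ≤ addVal O (Tri t c0 c1 c2) := by
  unfold Tri
  refine AddValuation.map_le_sum _ fun e _ => AddValuation.map_le_sum _ fun e' _ =>
    AddValuation.map_le_sum _ fun e'' _ => ?_
  rw [addVal_mul, addVal_mul, addVal_mul]
  exact le_add_left (add_le_add (add_le_add (h0 _) (h1 _)) (h2 _))

lemma core {O : Type} [CommRing O] [IsDomain O] [IsDiscreteValuationRing O] {k : ℕ}
    {x : O} {e : ℕ} (hx : addVal O x = e) (he : ¬ 3 ∣ e) (t : Fin k → O)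
    (hA : ∀ a : (Fin k → Fin 3) → O, (∃ i, IsUnit (a i)) → IsUnit (Cub t a))
    {W : O} (hW : IsUnit W) {G0 : O} {m0 : ℕ∞} (c0 c1 c2 : (Fin k → Fin 3) → O)
    (hG : addVal O G0 = 3 * m0) (h0 : ∀ i, m0 ≤ addVal O (c0 i))
    (h : G0 + W * (x * Cub t c1 + x ^ 2 * Cub t c2 + 6 * x * Tri t c0 c1 c2) = 0) :
    m0 = ⊤ ∧ c1 = 0 ∧ c2 = 0 := by
  have hval : ∀ c : (Fin k → Fin 3) → O, ∃ m : ℕ∞, addVal O (Cub t c) = 3 * m ∧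
      (∀ i, m ≤ addVal O (c i)) ∧ (m = ⊤ → c = 0) := fun c =>
    val_lemma (Cub t) (fun _ => True) (fun r a => Cub_smul t r a) (fun _ _ _ _ => trivial)
      (fun a _ => hA a) c trivial
  obtain ⟨m1, hm1, h1, z1⟩ := hval c1
  obtain ⟨m2, hm2, h2, z2⟩ := hval c2
  have hWv := addVal_eq_zero_iff.mpr hW
  have v1 : addVal O (W * (x * Cub t c1)) = e + 3 * m1 := by
    rw [addVal_mul, addVal_mul, hWv, hx, hm1, zero_add]
  have v2 : addVal O (W * (x ^ 2 * Cub t c2)) = 2 * e + 3 * m2 := by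
    rw [addVal_mul, addVal_mul, addVal_pow, hWv, hx, hm2, zero_add]
    simp
  have vc : (e : ℕ∞) + m0 + m1 + m2 ≤ addVal O (W * (6 * x * Tri t c0 c1 c2)) := by
    rw [addVal_mul, addVal_mul, addVal_mul, hWv, hx, zero_add]
    have := Tri_val t c0 c1 c2 h0 h1 h2
    calc (e : ℕ∞) + m0 + m1 + m2 = e + (m0 + m1 + m2) := by ring
      _ ≤ _ := add_le_add (le_add_left le_rfl) this
  have key := arith he vc (m0 := m0) (m1 := m1) (m2 := m2) ?_ ?_ ?_
  · exact ⟨key.1, z1 key.2.1, z2 key.2.2⟩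
  · intro N a b c
    rw [← hG, le_addVal_iff]
    rw [← v1, le_addVal_iff] at a
    rw [← v2, le_addVal_iff] at b
    rw [le_addVal_iff] at c
    have : G0 = -(W * (x * Cub t c1) + W * (x ^ 2 * Cub t c2) + W * (6 * x * Tri t c0 c1 c2)) := by
      linear_combination h
    rw [this]
    exact neg_mem (add_mem (add_mem a b) c)
  · intro N a b c
    rw [← v1, le_addVal_iff]
    rw [← hG, le_addVal_iff] at a
    rw [← v2, le_addVal_iff] at b
    rw [le_addVal_iff] at c
    have : W * (x * Cub t c1) = -(G0 + W * (x ^ 2 * Cub t c2) + W * (6 * x * Tri t c0 c1 c2)) := by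
      linear_combination h
    rw [this]
    exact neg_mem (add_mem (add_mem a b) c)
  · intro N a b c
    rw [← v2, le_addVal_iff]
    rw [← hG, le_addVal_iff] at a
    rw [← v1, le_addVal_iff] at b
    rw [le_addVal_iff] at c
    have : W * (x ^ 2 * Cub t c2) = -(G0 + W * (x * Cub t c1) + W * (6 * x * Tri t c0 c1 c2)) := by
      linear_combination h
    rw [this]
    exact neg_mem (add_mem (add_mem a b) c)

def Anis (K : Type) [Field K] {k : ℕ} (t : Fin k → K) : Prop :=
  ∀ (K' : Type) [Field K'] [Algebra K K'] [FiniteDimensional K K'],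
    Nat.Coprime (Module.finrank K K') 3 → ∀ c : (Fin k → Fin 3) → K',
    Cub (fun i => algebraMap K K' (t i)) c = 0 → c = 0

def Sys (K : Type) [Field K] (W1 W2 W3 : ℕ) {k1 k2 k3 : ℕ} (t1 : Fin k1 → K) (t2 : Fin k2 → K)
    (t3 : Fin k3 → K) : Prop :=
  ∀ (K' : Type) [Field K'] [Algebra K K'] [FiniteDimensional K K'],
    Nat.Coprime (Module.finrank K K') 3 → ∀ (c1 : (Fin k1 → Fin 3) → K')
      (c2 : (Fin k2 → Fin 3) → K') (c3 : (Fin k3 → Fin 3) → K'),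
    (W1 : K') * c1 (fun _ => 0) + W2 * c2 (fun _ => 0) + W3 * c3 (fun _ => 0) = 0 →
    (W1 : K') * Cub (fun i => algebraMap K K' (t1 i)) c1 +
      W2 * Cub (fun i => algebraMap K K' (t2 i)) c2 +
      W3 * Cub (fun i => algebraMap K K' (t3 i)) c3 = 0 → c1 = 0 ∧ c2 = 0 ∧ c3 = 0

lemma Sys.rot {K : Type} [Field K] {W1 W2 W3 : ℕ} {k1 k2 k3 : ℕ} {t1 : Fin k1 → K}
    {t2 : Fin k2 → K} {t3 : Fin k3 → K} (h : Sys K W1 W2 W3 t1 t2 t3) :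
    Sys K W2 W3 W1 t2 t3 t1 := by
  intro K' _ _ _ hd c2 c3 c1 h1 h3
  have := h K' hd c1 c2 c3 (by linear_combination h1) (by linear_combination h3)
  tauto

lemma part_zero {A : Type} {k : ℕ} (c : (Fin (k + 1) → Fin 3) → A) :
    part c 0 (fun _ => 0) = c (fun _ => 0) := by
  unfold part
  congr 1
  funext i
  refine Fin.cases ?_ (fun j => ?_) i <;> simp

lemma cub_cons' {A B : Type} [CommRing A] [CommRing B] (f : A →+* B) {k : ℕ} (x : A)
    (t : Fin k → A) (c : (Fin (k + 1) → Fin 3) → B) :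
    Cub (fun i => f ((Fin.cons x t : Fin (k + 1) → A) i)) c = Cub (fun i => f (t i)) (part c 0) +
      (f x * Cub (fun i => f (t i)) (part c 1) + f x ^ 2 * Cub (fun i => f (t i)) (part c 2) +
        6 * f x * Tri (fun i => f (t i)) (part c 0) (part c 1) (part c 2)) := by
  rw [← Cub_cons]
  congr 1
  funext i
  refine Fin.cases ?_ (fun j => ?_) i <;> simp

end GenB

namespace GenB
open GenA (le_addVal_iff exists_dvr)
open Polynomial IsLocalRing IsDiscreteValuationRing

lemma scale {S K' : Type} [CommRing S] [IsDomain S] [Field K'] [Algebra S K'] [IsFractionRing S K']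
    {ι : Type} [Finite ι] (c : ι → K') : ∃ s : S, s ≠ 0 ∧ ∃ u : ι → S,
      ∀ i, algebraMap S K' (u i) = algebraMap S K' s * c i := by
  obtain ⟨b, hb⟩ := IsLocalization.exist_integer_multiples_of_finite (nonZeroDivisors S) c
  choose u hu using hb
  refine ⟨b, nonZeroDivisors.ne_zero b.2, u, fun i => ?_⟩
  rw [hu i, Algebra.smul_def]

section
variable {K O : Type} [Field K] [CommRing O] [IsDomain O] [IsDiscreteValuationRing O]
  [Algebra K (ResidueField O)]

lemma unit_of_residue {a : O} (h : residue O a = 0 → False) : IsUnit a := by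
  by_contra hu
  exact h ((residue_eq_zero_iff a).mpr ((mem_maximalIdeal a).mpr hu))

lemma anis_O [Module.Finite K (ResidueField O)]
    (hd : Nat.Coprime (Module.finrank K (ResidueField O)) 3) {k : ℕ} {t : Fin k → K}
    (f : K →+* O) (hf : ∀ x, algebraMap K (ResidueField O) x = residue O (f x))
    (hA : Anis K t) (a : (Fin k → Fin 3) → O) (ha : ∃ i, IsUnit (a i)) :
    IsUnit (Cub (fun i => f (t i)) a) := by
  apply unit_of_residue
  intro h
  rw [map_Cub] at h
  simp only [← hf] at h
  have := hA (ResidueField O) hd _ h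
  obtain ⟨i, hi⟩ := ha
  exact (hi.map (residue O)).ne_zero (congrFun this i)

lemma natCast_unit [CharZero K] (W : ℕ) (hW : W ≠ 0) : IsUnit (W : O) := by
  apply unit_of_residue
  intro h
  rw [map_natCast, ← map_natCast (algebraMap K (ResidueField O)), map_eq_zero] at h
  exact hW (by exact_mod_cast h)
end

abbrev rX (K : Type) [Field K] : RatFunc K := algebraMap K[X] (RatFunc K) X
abbrev rC {K : Type} [Field K] {k : ℕ} (t : Fin k → K) : Fin k → RatFunc K :=
  fun i => algebraMap K[X] (RatFunc K) (C (t i))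

lemma eq_zero_of_scale {S K' O : Type} [CommRing S] [IsDomain S] [Field K'] [Algebra S K']
    [IsFractionRing S K'] [CommRing O] {j : S →+* O} (hj : Function.Injective j) {s : S}
    (hs : s ≠ 0) {u : S} {c : K'} (hu : algebraMap S K' u = algebraMap S K' s * c)
    (h : j u = 0) : c = 0 := by
  have h0 : u = 0 := hj (h.trans (map_zero j).symm)
  rw [h0, map_zero] at hu
  rcases mul_eq_zero.mp hu.symm with h | h
  · exact absurd (IsFractionRing.injective S K' (h.trans (map_zero _).symm)) hs
  · exact h

theorem Anis.step {K : Type} [Field K] [CharZero K] {k : ℕ} {t : Fin k → K} (hA : Anis K t) :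
    Anis (RatFunc K) (Fin.cons (rX K) (rC t) : Fin (k + 1) → RatFunc K) := by
  intro K' _ _ _ hd c hc
  obtain ⟨S, _, _, _, _, i, O, _, _, _, j, _, e, hi, hj, hres, hfin, hd', hX, he⟩ :=
    exists_dvr K K' hd
  obtain ⟨s, hs, u, hu⟩ := scale (S := S) c
  rw [cub_cons'] at hc
  simp only [← hi] at hc
  let f : K →+* O := j.comp (i.comp C)
  have hAO := anis_O hd' f hres hA
  have hS : Cub (fun a => i (C (t a))) (part u 0) +
      (i X * Cub (fun a => i (C (t a))) (part u 1) + i X ^ 2 * Cub (fun a => i (C (t a))) (part u 2) +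
        6 * i X * Tri (fun a => i (C (t a))) (part u 0) (part u 1) (part u 2)) = 0 := by
    apply IsFractionRing.injective S K'
    rw [← Cub_cons]
    rw [map_Cub, map_zero]
    have h1 : (fun a => algebraMap S K' (u a)) = fun a => algebraMap S K' s * c a := funext hu
    rw [h1, Cub_smul, cub_cons', hc, mul_zero]
  have hO := congrArg j hS
  simp only [map_add, map_mul, map_pow, map_zero, map_Cub, map_Tri, map_ofNat] at hO
  obtain ⟨m0, hm0, h0, z0⟩ := val_lemma (Cub fun a => f (t a)) (fun _ => True)
    (fun r a => Cub_smul _ r a) (fun _ _ _ _ => trivial)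
      (fun a _ => hAO a) (fun a => j (part u 0 a)) trivial
  obtain ⟨y0, y1, y2⟩ := core hX he (fun a => f (t a)) hAO (W := 1) isUnit_one _ _ _ hm0 h0
    (by rw [one_mul]; exact hO)
  have z := z0 y0
  have hp : ∀ a, (fun b => j (part u a b)) = 0 → part c a = 0 := by
    intro a h
    funext b
    exact eq_zero_of_scale hj hs (hu _) (congrFun h b)
  exact part_eq_zero (hp 0 z) (hp 1 y1) (hp 2 y2)

theorem Sys.step {K : Type} [Field K] [CharZero K] {W1 W2 W3 : ℕ} (hW1 : W1 ≠ 0) {k1 k2 k3 : ℕ}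
    {t1 : Fin k1 → K} {t2 : Fin k2 → K} {t3 : Fin k3 → K} (hA : Anis K t1)
    (hS : Sys K W1 W2 W3 t1 t2 t3) :
    Sys (RatFunc K) W1 W2 W3 (Fin.cons (rX K) (rC t1) : Fin (k1 + 1) → RatFunc K)
      (rC t2) (rC t3) := by
  intro K' _ _ _ hd c1 c2 c3 hl hc
  obtain ⟨S, _, _, _, _, i, O, _, _, _, j, _, e, hi, hj, hres, hfin, hd', hX, he⟩ :=
    exists_dvr K K' hd
  obtain ⟨s, hs, u, hu⟩ := scale (S := S) (Sum.elim c1 (Sum.elim c2 c3))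
  rw [cub_cons'] at hc
  simp only [← hi] at hc
  let f : K →+* O := j.comp (i.comp C)
  have hAO := anis_O hd' f hres hA
  have hu1 : ∀ b, algebraMap S K' (u (Sum.inl b)) = algebraMap S K' s * c1 b :=
    fun b => hu (Sum.inl b)
  have hu2 : ∀ b, algebraMap S K' (u (Sum.inr (Sum.inl b))) = algebraMap S K' s * c2 b :=
    fun b => hu (Sum.inr (Sum.inl b))
  have hu3 : ∀ b, algebraMap S K' (u (Sum.inr (Sum.inr b))) = algebraMap S K' s * c3 b :=
    fun b => hu (Sum.inr (Sum.inr b))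
  obtain ⟨u1, hu1'⟩ : ∃ u1 : (Fin (k1 + 1) → Fin 3) → S, u1 = fun b => u (Sum.inl b) := ⟨_, rfl⟩
  obtain ⟨u2, hu2'⟩ : ∃ u2 : (Fin k2 → Fin 3) → S, u2 = fun b => u (Sum.inr (Sum.inl b)) := ⟨_, rfl⟩
  obtain ⟨u3, hu3'⟩ : ∃ u3 : (Fin k3 → Fin 3) → S, u3 = fun b => u (Sum.inr (Sum.inr b)) := ⟨_, rfl⟩
  replace hu1 : ∀ b, algebraMap S K' (u1 b) = algebraMap S K' s * c1 b := by rw [hu1']; exact hu1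
  replace hu2 : ∀ b, algebraMap S K' (u2 b) = algebraMap S K' s * c2 b := by rw [hu2']; exact hu2
  replace hu3 : ∀ b, algebraMap S K' (u3 b) = algebraMap S K' s * c3 b := by rw [hu3']; exact hu3
  clear hu hu1' hu2' hu3' u
  have hlin : (W1 : S) * part u1 0 (fun _ => 0) + W2 * u2 (fun _ => 0) + W3 * u3 (fun _ => 0) = 0 := by
    apply IsFractionRing.injective S K'
    rw [part_zero]
    simp only [map_add, map_mul, map_natCast, hu1, hu2, hu3, map_zero]
    linear_combination (algebraMap S K' s) * hl
  have hcub : (W1 : S) * (Cub (fun a => i (C (t1 a))) (part u1 0) +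
      (i X * Cub (fun a => i (C (t1 a))) (part u1 1) +
        i X ^ 2 * Cub (fun a => i (C (t1 a))) (part u1 2) +
        6 * i X * Tri (fun a => i (C (t1 a))) (part u1 0) (part u1 1) (part u1 2))) +
      W2 * Cub (fun a => i (C (t2 a))) u2 + W3 * Cub (fun a => i (C (t3 a))) u3 = 0 := by
    apply IsFractionRing.injective S K'
    rw [← Cub_cons]
    simp only [map_add, map_mul, map_natCast, map_Cub, map_zero]
    rw [funext hu1, funext hu2, funext hu3, Cub_smul, Cub_smul, Cub_smul, cub_cons']
    linear_combination (algebraMap S K' s) ^ 3 * hc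
  have hlO := congrArg j hlin
  have hcO := congrArg j hcub
  simp only [map_add, map_mul, map_pow, map_zero, map_Cub, map_Tri, map_ofNat, map_natCast] at hlO hcO
  let ι := (Fin k1 → Fin 3) ⊕ (Fin k2 → Fin 3) ⊕ (Fin k3 → Fin 3)
  obtain ⟨m0, hm0, h0, z0⟩ := val_lemma (ι := ι)
    (fun a => (W1 : O) * Cub (fun b => f (t1 b)) (fun b => a (Sum.inl b)) +
      W2 * Cub (fun b => f (t2 b)) (fun b => a (Sum.inr (Sum.inl b))) +
      W3 * Cub (fun b => f (t3 b)) (fun b => a (Sum.inr (Sum.inr b))))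
    (fun a => (W1 : O) * a (Sum.inl fun _ => 0) + W2 * a (Sum.inr (Sum.inl fun _ => 0)) +
      W3 * a (Sum.inr (Sum.inr fun _ => 0)) = 0)
    (fun r a => by
      simp only [Cub_smul]
      ring)
    (fun r a hr h => by
      have : r * ((W1 : O) * a (Sum.inl fun _ => 0) + W2 * a (Sum.inr (Sum.inl fun _ => 0)) +
        W3 * a (Sum.inr (Sum.inr fun _ => 0))) = 0 := by linear_combination h
      exact (mul_eq_zero.mp this).resolve_left hr)
    (fun a ha hu => by
      apply unit_of_residue
      intro h
      have ha' := congrArg (residue O) ha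
      simp only [map_add, map_mul, map_natCast, map_zero, map_Cub] at h ha'
      have hf : ∀ x, residue O (f x) = algebraMap K (ResidueField O) x := fun x => (hres x).symm
      simp only [hf] at h
      obtain ⟨r1, r2, r3⟩ := hS (ResidueField O) hd' (fun b => residue O (a (Sum.inl b)))
        (fun b => residue O (a (Sum.inr (Sum.inl b))))
        (fun b => residue O (a (Sum.inr (Sum.inr b)))) ha' h
      obtain ⟨b, hb⟩ := hu
      apply (hb.map (residue O)).ne_zero
      rcases b with b | b | b
      · exact congrFun r1 b
      · exact congrFun r2 b
      · exact congrFun r3 b)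
    (Sum.elim (fun b => j (part u1 0 b)) (Sum.elim (fun b => j (u2 b)) (fun b => j (u3 b)))) hlO
  obtain ⟨y0, y1, y2⟩ := core hX he (fun a => f (t1 a)) hAO (W := (W1 : O))
    (natCast_unit (K := K) W1 hW1) (fun b => j (part u1 0 b)) (fun b => j (part u1 1 b))
    (fun b => j (part u1 2 b)) hm0 (fun b => h0 (Sum.inl b)) (by
      refine Eq.trans ?_ hcO
      simp only [Sum.elim_inl, Sum.elim_inr, f, RingHom.comp_apply]
      ring)
  have z := z0 y0
  have hp : ∀ a, (fun b => j (part u1 a b)) = 0 → part c1 a = 0 := by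
    intro a h
    funext b
    exact eq_zero_of_scale hj hs (hu1 _) (congrFun h b)
  refine ⟨part_eq_zero (hp 0 ?_) (hp 1 y1) (hp 2 y2), ?_, ?_⟩
  · funext b
    exact congrFun z (Sum.inl b)
  · funext b
    exact eq_zero_of_scale hj hs (hu2 b) (congrFun z (Sum.inr (Sum.inl b)))
  · funext b
    exact eq_zero_of_scale hj hs (hu3 b) (congrFun z (Sum.inr (Sum.inr b)))

end GenB

namespace GenB
open Polynomial

lemma Tri_zero2 {A : Type} [CommRing A] {k : ℕ} (t : Fin k → A) (c c'' : (Fin k → Fin 3) → A) :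
    Tri t c 0 c'' = 0 := by
  unfold Tri
  simp

lemma Cub_zero' {A : Type} [CommRing A] {k : ℕ} (t : Fin k → A) : Cub t 0 = 0 := Cub_zero t

def ext0 {A : Type} [Zero A] {k : ℕ} (c : (Fin k → Fin 3) → A) : (Fin (k + 1) → Fin 3) → A :=
  fun e => if e 0 = 0 then c (Fin.tail e) else 0

lemma part_ext0 {A : Type} [Zero A] {k : ℕ} (c : (Fin k → Fin 3) → A) :
    part (ext0 c) 0 = c ∧ part (ext0 c) 1 = 0 ∧ part (ext0 c) 2 = 0 := by
  refine ⟨?_, ?_, ?_⟩ <;> funext e <;> simp [part, ext0]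

lemma cub_ext0 {A B : Type} [CommRing A] [CommRing B] (f : A →+* B) {k : ℕ} (x : A)
    (t : Fin k → A) (c : (Fin k → Fin 3) → B) :
    Cub (fun i => f ((Fin.cons x t : Fin (k + 1) → A) i)) (ext0 c) = Cub (fun i => f (t i)) c := by
  rw [cub_cons']
  obtain ⟨h0, h1, h2⟩ := part_ext0 c
  rw [h0, h1, h2, Tri_zero2, Cub_zero']
  ring

lemma ext0_zero {A : Type} [Zero A] {k : ℕ} {c : (Fin k → Fin 3) → A} (h : ext0 c = 0) : c = 0 := by
  rw [← (part_ext0 c).1, h]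
  rfl

theorem Anis.base {K : Type} [Field K] [CharZero K] {k : ℕ} {t : Fin k → K} (hA : Anis K t) :
    Anis (RatFunc K) (rC t) := by
  intro K' _ _ _ hd c hc
  apply ext0_zero
  apply hA.step K' hd
  rw [cub_ext0, hc]

theorem Sys.base {K : Type} [Field K] [CharZero K] {W1 W2 W3 : ℕ} (hW1 : W1 ≠ 0) {k1 k2 k3 : ℕ}
    {t1 : Fin k1 → K} {t2 : Fin k2 → K} {t3 : Fin k3 → K} (hA : Anis K t1)
    (hS : Sys K W1 W2 W3 t1 t2 t3) :
    Sys (RatFunc K) W1 W2 W3 (rC t1) (rC t2) (rC t3) := by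
  intro K' _ _ _ hd c1 c2 c3 h1 h3
  have := hS.step hW1 hA K' hd (ext0 c1) c2 c3 (by
    rw [← part_zero (ext0 c1), (part_ext0 c1).1, h1]) (by rw [cub_ext0, h3])
  exact ⟨ext0_zero this.1, this.2.1, this.2.2⟩

lemma cubic_root {P : ℚ[X]} (hP : P.natDegree = 3) {K' : Type} [Field K'] [Algebra ℚ K']
    [FiniteDimensional ℚ K'] (hd : Nat.Coprime (Module.finrank ℚ K') 3) {r : K'}
    (hr : aeval r P = 0) : ∃ q, P.eval q = 0 := by
  have hint : IsIntegral ℚ r := Algebra.IsIntegral.isIntegral r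
  obtain ⟨Q, hQ⟩ := minpoly.dvd ℚ r hr
  have hP0 : P ≠ 0 := by
    rintro rfl
    simp at hP
  have hm0 := minpoly.ne_zero hint
  have hQ0 : Q ≠ 0 := by
    rintro rfl
    simp [hP0] at hQ
  have hdeg : (minpoly ℚ r).natDegree + Q.natDegree = 3 := by
    rw [← natDegree_mul hm0 hQ0, ← hQ, hP]
  have hdvd : (minpoly ℚ r).natDegree ∣ Module.finrank ℚ K' := minpoly.degree_dvd hint
  have h3 : (minpoly ℚ r).natDegree ≠ 3 := by
    intro h
    rw [h] at hdvd
    have := Nat.dvd_gcd hdvd (dvd_refl 3)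
    rw [hd] at this
    omega
  have hpos := minpoly.natDegree_pos hint
  rcases (show (minpoly ℚ r).natDegree = 1 ∨ Q.natDegree = 1 by omega) with h | h
  · obtain ⟨q, hq⟩ := exists_root_of_degree_eq_one (degree_eq_iff_natDegree_eq hm0 |>.mpr h)
    exact ⟨q, by rw [hQ, eval_mul, show eval q (minpoly ℚ r) = 0 from hq, zero_mul]⟩
  · obtain ⟨q, hq⟩ := exists_root_of_degree_eq_one (degree_eq_iff_natDegree_eq hQ0 |>.mpr h)
    exact ⟨q, by rw [hQ, eval_mul, show eval q Q = 0 from hq, mul_zero]⟩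

lemma Cub_nil {A : Type} [CommRing A] (t : Fin 0 → A) (c : (Fin 0 → Fin 3) → A) :
    Cub t c = c (fun _ => 0) ^ 3 := by
  unfold Cub Tri
  have : ∀ e : Fin 0 → Fin 3, e = fun _ => 0 := fun e => Subsingleton.elim _ _
  simp only [Fintype.sum_unique, Finset.univ_eq_empty, Finset.prod_empty, one_mul]
  ring_nf
  exact congrArg (fun e => c e ^ 3) (Subsingleton.elim _ _)

lemma anis_nil (t : Fin 0 → ℚ) : Anis ℚ t := by
  intro K' _ _ _ _ c hc
  rw [Cub_nil] at hc
  funext e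
  rw [Subsingleton.elim e (fun _ => 0)]
  exact pow_eq_zero_iff (by norm_num) |>.mp hc

lemma sys_nil {k1 k2 k3 : ℕ} (h12 : k2 < k1) (h23 : k3 < k2) (t1 t2 t3 : Fin 0 → ℚ) :
    Sys ℚ (3 ^ k1) (3 ^ k2) (3 ^ k3) t1 t2 t3 := by
  intro K' _ _ _ hd c1 c2 c3 h1 h3
  simp only [Cub_nil] at h3
  suffices h : c1 (fun _ => 0) = 0 ∧ c2 (fun _ => 0) = 0 ∧ c3 (fun _ => 0) = 0 by
    refine ⟨?_, ?_, ?_⟩ <;> funext e <;> rw [Subsingleton.elim e (fun _ => 0)]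
    exacts [h.1, h.2.1, h.2.2]
  generalize c1 (fun _ => 0) = y1 at *
  generalize c2 (fun _ => 0) = y2 at *
  generalize c3 (fun _ => 0) = y3 at *
  have hA := @GenA.partA k1 k2 k3 h12 h23
  have : CharZero K' := charZero_of_injective_algebraMap (algebraMap ℚ K').injective
  obtain ⟨W1, e1⟩ : ∃ W1 : ℚ, W1 = 3 ^ k1 := ⟨_, rfl⟩
  obtain ⟨W2, e2⟩ : ∃ W2 : ℚ, W2 = 3 ^ k2 := ⟨_, rfl⟩
  obtain ⟨W3, e3⟩ : ∃ W3 : ℚ, W3 = 3 ^ k3 := ⟨_, rfl⟩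
  have n3 : W3 ≠ 0 := by rw [e3]; positivity
  rw [← e1, ← e2, ← e3] at hA
  obtain ⟨V1, f1⟩ : ∃ V1 : K', V1 = algebraMap ℚ K' W1 := ⟨_, rfl⟩
  obtain ⟨V2, f2⟩ : ∃ V2 : K', V2 = algebraMap ℚ K' W2 := ⟨_, rfl⟩
  obtain ⟨V3, f3⟩ : ∃ V3 : K', V3 = algebraMap ℚ K' W3 := ⟨_, rfl⟩
  have g1 : ((3 ^ k1 : ℕ) : K') = V1 := by rw [f1, e1]; simp
  have g2 : ((3 ^ k2 : ℕ) : K') = V2 := by rw [f2, e2]; simp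
  have g3 : ((3 ^ k3 : ℕ) : K') = V3 := by rw [f3, e3]; simp
  rw [g1, g2, g3] at h1 h3
  have nV3 : V3 ≠ 0 := by rw [f3]; simpa using n3
  have hlead : W3 ^ 2 * W1 - W1 ^ 3 ≠ 0 := by
    intro h
    have := @hA 1 0 (-W1 / W3) (by field_simp; ring) (by
      field_simp
      linear_combination h)
    exact one_ne_zero this.1
  have helim : V3 ^ 2 * (V1 * y1 ^ 3 + V2 * y2 ^ 3) - (V1 * y1 + V2 * y2) ^ 3 = 0 := by
    have : V1 * y1 + V2 * y2 = - (V3 * y3) := by linear_combination h1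
    rw [this]
    linear_combination V3 ^ 2 * h3
  by_cases hy2 : y2 = 0
  · subst hy2
    have hV : V3 ^ 2 * V1 - V1 ^ 3 ≠ 0 := by
      rw [f1, f3, ← map_pow, ← map_pow, ← map_mul, ← map_sub]
      exact (_root_.map_ne_zero _).mpr hlead
    have : (V3 ^ 2 * V1 - V1 ^ 3) * y1 ^ 3 = 0 := by linear_combination helim
    have hy1 : y1 = 0 := pow_eq_zero_iff (by norm_num) |>.mp ((mul_eq_zero.mp this).resolve_left hV)
    subst hy1
    refine ⟨rfl, rfl, ?_⟩
    simpa [nV3] using h1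
  · exfalso
    let P : ℚ[X] := C (W3 ^ 2 * W1 - W1 ^ 3) * X ^ 3 + C (- 3 * W1 ^ 2 * W2) * X ^ 2 +
      C (-3 * W1 * W2 ^ 2) * X + C (W3 ^ 2 * W2 - W2 ^ 3)
    have hP : P.natDegree = 3 := natDegree_cubic hlead
    obtain ⟨q, hq⟩ := cubic_root hP hd (r := y1 / y2) (by
      simp only [P, map_add, map_mul, map_pow, aeval_C, aeval_X, map_sub, map_neg, ← f1, ← f2,
        ← f3, map_ofNat]
      field_simp
      linear_combination helim)
    simp only [P, eval_add, eval_mul, eval_pow, eval_C, eval_X] at hq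
    have := @hA q 1 (-(W1 * q + W2) / W3) (by field_simp; ring) (by
      field_simp
      linear_combination hq)
    exact one_ne_zero this.2.1

def Tow (W1 W2 W3 k1 k2 k3 : ℕ) : Prop :=
  ∃ (K : Type) (_ : Field K) (_ : CharZero K) (t1 : Fin k1 → K) (t2 : Fin k2 → K) (t3 : Fin k3 → K),
    (∀ i, t1 i ≠ 0) ∧ (∀ i, t2 i ≠ 0) ∧ (∀ i, t3 i ≠ 0) ∧ Anis K t1 ∧ Anis K t2 ∧ Anis K t3 ∧
    Sys K W1 W2 W3 t1 t2 t3

lemma Tow.rot {W1 W2 W3 k1 k2 k3 : ℕ} (h : Tow W1 W2 W3 k1 k2 k3) : Tow W2 W3 W1 k2 k3 k1 := by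
  obtain ⟨K, a, b, t1, t2, t3, n1, n2, n3, a1, a2, a3, s⟩ := h
  exact ⟨K, a, b, t2, t3, t1, n2, n3, n1, a2, a3, a1, s.rot⟩

lemma charZero_ratFunc (K : Type) [Field K] [CharZero K] : CharZero (RatFunc K) :=
  charZero_of_injective_algebraMap (algebraMap K (RatFunc K)).injective

lemma rX_ne (K : Type) [Field K] : rX K ≠ 0 := by
  exact fun h => X_ne_zero (IsFractionRing.injective K[X] (RatFunc K) (h.trans (map_zero _).symm))

lemma rC_ne {K : Type} [Field K] {k : ℕ} {t : Fin k → K} (h : ∀ i, t i ≠ 0) (i : Fin k) :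
    rC t i ≠ 0 := by
  simp [rC, h i]

lemma Tow.step {W1 W2 W3 k1 k2 k3 : ℕ} (hW1 : W1 ≠ 0) (h : Tow W1 W2 W3 k1 k2 k3) :
    Tow W1 W2 W3 (k1 + 1) k2 k3 := by
  obtain ⟨K, a, b, t1, t2, t3, n1, n2, n3, a1, a2, a3, s⟩ := h
  refine ⟨RatFunc K, inferInstance, charZero_ratFunc K, _, _, _, ?_, rC_ne n2, rC_ne n3,
    a1.step, a2.base, a3.base, s.step hW1 a1⟩
  intro i
  refine Fin.cases ?_ (fun j => ?_) i
  · simpa only [Fin.cons_zero] using rX_ne K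
  · simpa only [Fin.cons_succ] using rC_ne n1 j

theorem tow {k1 k2 k3 : ℕ} (h12 : k2 < k1) (h23 : k3 < k2) :
    Tow (3 ^ k1) (3 ^ k2) (3 ^ k3) k1 k2 k3 := by
  have p1 : 3 ^ k1 ≠ 0 := by positivity
  have p2 : 3 ^ k2 ≠ 0 := by positivity
  have p3 : 3 ^ k3 ≠ 0 := by positivity
  have h0 : Tow (3 ^ k1) (3 ^ k2) (3 ^ k3) 0 0 0 :=
    ⟨ℚ, inferInstance, inferInstance, Fin.elim0, Fin.elim0, Fin.elim0, fun i => i.elim0,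
      fun i => i.elim0, fun i => i.elim0, anis_nil _, anis_nil _, anis_nil _, sys_nil h12 h23 _ _ _⟩
  have h1 : ∀ a, Tow (3 ^ k1) (3 ^ k2) (3 ^ k3) a 0 0 := by
    intro a
    induction a with
    | zero => exact h0
    | succ a ih => exact ih.step p1
  have h2 : ∀ b, Tow (3 ^ k2) (3 ^ k3) (3 ^ k1) b 0 k1 := by
    intro a
    induction a with
    | zero => exact (h1 k1).rot
    | succ a ih => exact ih.step p2
  have h3 : ∀ b, Tow (3 ^ k3) (3 ^ k1) (3 ^ k2) b k1 k2 := by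
    intro a
    induction a with
    | zero => exact (h2 k2).rot
    | succ a ih => exact ih.step p3
  exact (h3 k3).rot

end GenB

namespace GenB
open Polynomial

theorem addVars {K : Type} [Field K] [CharZero K] {W1 W2 W3 : ℕ} (hW1 : W1 ≠ 0) {k1 k2 k3 : ℕ}
    {t1 : Fin k1 → K} {t2 : Fin k2 → K} {t3 : Fin k3 → K} (hA : Anis K t1)
    (hS : Sys K W1 W2 W3 t1 t2 t3) (n : ℕ) :
    ∃ (M : Type) (_ : Field M) (_ : CharZero M) (_ : Algebra K M) (y : Fin n → M),
      AlgebraicIndependent K y ∧ Anis M (fun i => algebraMap K M (t1 i)) ∧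
      Sys M W1 W2 W3 (fun i => algebraMap K M (t1 i)) (fun i => algebraMap K M (t2 i))
        (fun i => algebraMap K M (t3 i)) := by
  induction n with
  | zero =>
    refine ⟨K, inferInstance, inferInstance, Algebra.id K, Fin.elim0, ?_, hA, hS⟩
    rw [algebraicIndependent_empty_type_iff]
    exact (algebraMap K K).injective
  | succ n ih =>
    obtain ⟨M, _, _, _, y, hy, a, s⟩ := ih
    have htow : ∀ x, algebraMap K (RatFunc M) x = algebraMap M (RatFunc M) (algebraMap K M x) :=
      fun _ => rfl
    have : IsScalarTower K M (RatFunc M) := IsScalarTower.of_algebraMap_eq htow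
    have hX : AlgebraicIndependent M (fun _ : Unit => (RatFunc.X : RatFunc M)) := by
      rw [algebraicIndependent_unique_type_iff]
      exact RatFunc.transcendental_X
    have h2 := hy.sumElim_comp hX
    let e : Fin (n + 1) ≃ Unit ⊕ Fin n := Fintype.equivOfCardEq (by simp; omega)
    refine ⟨RatFunc M, inferInstance, charZero_ratFunc M, inferInstance, _,
      (algebraicIndependent_equiv' e rfl).mpr h2, a.base, s.base hW1 a⟩

end GenB

namespace GenB
open Polynomial

structure Roots {Ω : Type} [Field Ω] (t : Ω) (β : Fin 3 → Ω) : Prop where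
  cube : ∀ i, β i ^ 3 = t
  inj : Function.Injective β
  surj : ∀ z, z ^ 3 = t → ∃ i, z = β i
  s1 : ∑ i, β i = 0
  s2 : ∑ i, β i ^ 2 = 0

lemma exists_roots {Ω : Type} [Field Ω] [IsAlgClosed Ω] [CharZero Ω] (t : Ω) (ht : t ≠ 0) :
    ∃ β, Roots t β := by
  obtain ⟨α, hα⟩ := IsAlgClosed.exists_pow_nat_eq t (show 0 < 3 by norm_num)
  obtain ⟨ω, hω⟩ : ∃ ω : Ω, ω ^ 2 + ω + 1 = 0 := by
    obtain ⟨r, hr⟩ := IsAlgClosed.exists_pow_nat_eq (-3 : Ω) (show 0 < 2 by norm_num)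
    exact ⟨(-1 + r) / 2, by field_simp; linear_combination hr⟩
  have hα0 : α ≠ 0 := by
    rintro rfl
    exact ht (by rw [← hα]; simp)
  have h3 : (3 : Ω) ≠ 0 := by norm_num
  have hω1 : ω - 1 ≠ 0 := by
    intro h
    have : ω = 1 := by linear_combination h
    subst this
    apply h3
    linear_combination hω
  have hω0 : ω ≠ 0 := by
    rintro rfl
    simp at hω
  have hω3 : ω ^ 3 = 1 := by linear_combination (ω - 1) * hω
  have e01 : α ≠ α * ω := fun h => hω1 (mul_left_cancel₀ hα0 (by linear_combination -h))
  have e12 : α * ω ≠ α * ω ^ 2 := fun h =>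
    hω1 (mul_left_cancel₀ (mul_ne_zero hα0 hω0) (by linear_combination -h))
  have e02 : α ≠ α * ω ^ 2 := fun h =>
    hω1 (mul_left_cancel₀ (mul_ne_zero hα0 hω0) (by linear_combination -h - ω * h - α * hω3))
  refine ⟨![α, α * ω, α * ω ^ 2], ?_, ?_, ?_, ?_, ?_⟩
  · intro i
    fin_cases i <;> simp
    · exact hα
    · rw [mul_pow, hω3, hα, mul_one]
    · rw [mul_pow, ← pow_mul, mul_comm 2 3, pow_mul, hω3, hα]; simp
  · intro i j
    fin_cases i <;> fin_cases j <;> simp [e01, e12, e02, e01.symm, e12.symm, e02.symm]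
  · intro z hz
    have : (z - α) * ((z - α * ω) * (z - α * ω ^ 2)) = 0 := by
      linear_combination hz - hα + (- z ^ 2 * α + z * α ^ 2 * ω) * hω - α^3 * hω3
    rcases mul_eq_zero.mp this with h | h
    · exact ⟨0, by simp; linear_combination h⟩
    rcases mul_eq_zero.mp h with h | h
    · exact ⟨1, by simp; linear_combination h⟩
    · exact ⟨2, by simp; linear_combination h⟩
  · simp [Fin.sum_univ_three]
    linear_combination α * hω
  · simp [Fin.sum_univ_three]
    linear_combination α ^ 2 * (ω ^ 2 - ω + 1) * hω

variable {Ω : Type} [Field Ω]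

lemma Roots.pow {t : Ω} {β : Fin 3 → Ω} (h : Roots t β) (i : Fin 3) (N : ℕ) :
    β i ^ N = t ^ (N / 3) * β i ^ (N % 3) := by
  conv_lhs => rw [← Nat.div_add_mod N 3, pow_add, pow_mul, h.cube]

lemma Roots.sum_pow {t : Ω} {β : Fin 3 → Ω} (h : Roots t β) (N : ℕ) :
    ∑ i, β i ^ N = 3 * kap t N := by
  simp only [h.pow _ N, ← Finset.mul_sum]
  unfold kap
  have : N % 3 < 3 := Nat.mod_lt _ (by norm_num)
  interval_cases hN : N % 3
  · rw [if_pos (Nat.dvd_of_mod_eq_zero hN)]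
    simp
    ring
  · rw [if_neg (by omega)]
    simp [h.s1]
  · rw [if_neg (by omega)]
    simp [h.s2]

lemma Roots.ne_zero {t : Ω} (ht : t ≠ 0) {β : Fin 3 → Ω} (h : Roots t β) (i : Fin 3) : β i ≠ 0 := by
  intro h0
  apply ht
  rw [← h.cube i, h0]
  simp

lemma Roots.orth [CharZero Ω] {t : Ω} (ht : t ≠ 0) {β : Fin 3 → Ω} (h : Roots t β) (a b : Fin 3) :
    ∑ e : Fin 3, β a ^ (e : ℕ) * (3⁻¹ * (β b ^ (e : ℕ))⁻¹) = if a = b then 1 else 0 := by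
  have ha := h.ne_zero ht a
  have hb := h.ne_zero ht b
  have h3 : (3 : Ω) ≠ 0 := by norm_num
  split_ifs with hab
  · subst hab
    simp [Fin.sum_univ_three]
    field_simp
    norm_num
  · have hne : β a - β b ≠ 0 := sub_ne_zero.mpr fun h' => hab (h.inj h')
    have := (h.cube a).trans (h.cube b).symm
    have h0 : β b * (β b + β a) + β a ^ 2 = 0 := by
      apply mul_left_cancel₀ hne
      linear_combination this
    simp [Fin.sum_univ_three]
    field_simp
    linear_combination h0

def chi {k : ℕ} (β : Fin k → Fin 3 → Ω) (e m : Fin k → Fin 3) : Ω := ∏ j, β j (m j) ^ (e j : ℕ)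

def chiInv {k : ℕ} (β : Fin k → Fin 3 → Ω) (e m : Fin k → Fin 3) : Ω :=
  ∏ j, 3⁻¹ * (β j (m j) ^ (e j : ℕ))⁻¹

section
variable {k : ℕ} {t : Fin k → Ω} {β : Fin k → Fin 3 → Ω}

lemma chi_orth [CharZero Ω] (ht : ∀ i, t i ≠ 0) (h : ∀ j, Roots (t j) (β j)) (m m' : Fin k → Fin 3) :
    ∑ e, chi β e m * chiInv β e m' = if m = m' then 1 else 0 := by
  unfold chi chiInv
  simp only [← Finset.prod_mul_distrib]
  have := Finset.prod_univ_sum (fun _ : Fin k => (Finset.univ : Finset (Fin 3)))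
    (fun j e => β j (m j) ^ (e : ℕ) * (3⁻¹ * (β j (m' j) ^ (e : ℕ))⁻¹))
  rw [Fintype.piFinset_univ] at this
  rw [← this]
  simp only [fun j => (h j).orth (ht j)]
  rw [Finset.prod_ite_zero]
  simp [funext_iff]

lemma sum_prod_pow (h : ∀ j, Roots (t j) (β j)) (N : Fin k → ℕ) :
    ∑ m : Fin k → Fin 3, ∏ j, β j (m j) ^ N j = ((3 ^ k : ℕ) : Ω) * ∏ j, kap (t j) (N j) := by
  have := Finset.prod_univ_sum (fun _ : Fin k => (Finset.univ : Finset (Fin 3)))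
    (fun j i => β j i ^ N j)
  rw [Fintype.piFinset_univ] at this
  rw [← this]
  simp only [fun j => (h j).sum_pow]
  rw [Finset.prod_mul_distrib]
  simp

lemma sum_chi (h : ∀ j, Roots (t j) (β j)) (c : (Fin k → Fin 3) → Ω) :
    ∑ m, ∑ e, c e * chi β e m = ((3 ^ k : ℕ) : Ω) * c (fun _ => 0) := by
  rw [Finset.sum_comm]
  simp only [← Finset.mul_sum, chi, sum_prod_pow h]
  rw [Finset.sum_eq_single (fun _ => 0)]
  · simp [kap]
    ring
  · intro e _ he
    obtain ⟨j, hj⟩ := Function.ne_iff.mp he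
    rw [Finset.prod_eq_zero (Finset.mem_univ j), mul_zero, mul_zero]
    unfold kap
    rw [if_neg]
    intro hd
    apply hj
    apply Fin.ext
    have := (e j).isLt
    simp
    omega
  · simp

lemma sum_chi_cube (h : ∀ j, Roots (t j) (β j)) (c : (Fin k → Fin 3) → Ω) :
    ∑ m, (∑ e, c e * chi β e m) ^ 3 = ((3 ^ k : ℕ) : Ω) * Cub t c := by
  have h1 : ∀ m, (∑ e, c e * chi β e m) ^ 3 = ∑ e, ∑ e', ∑ e'',
      (∏ j, β j (m j) ^ ((e j : ℕ) + (e' j : ℕ) + (e'' j : ℕ))) * (c e * c e' * c e'') := by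
    intro m
    rw [pow_three, Finset.sum_mul_sum, Finset.sum_mul_sum]
    refine Finset.sum_congr rfl fun e _ => ?_
    refine Finset.sum_congr rfl fun e' _ => ?_
    rw [Finset.mul_sum]
    refine Finset.sum_congr rfl fun e'' _ => ?_
    simp only [pow_add, Finset.prod_mul_distrib, chi]
    ring
  simp only [h1]
  unfold Cub Tri
  rw [Finset.sum_comm, Finset.mul_sum]
  refine Finset.sum_congr rfl fun e _ => ?_
  rw [Finset.sum_comm, Finset.mul_sum]
  refine Finset.sum_congr rfl fun e' _ => ?_
  rw [Finset.sum_comm, Finset.mul_sum]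
  refine Finset.sum_congr rfl fun e'' _ => ?_
  rw [← Finset.sum_mul, sum_prod_pow h]
  ring

/-- functions on a block defined over `K'` -/
def Blk {K' : Type} [Field K'] [Algebra K' Ω] (β : Fin k → Fin 3 → Ω) : Submodule K' ((Fin k → Fin 3) → Ω) :=
  Submodule.span K' (Set.range (chi β))

variable {K' : Type} [Field K'] [Algebra K' Ω] {s : Fin k → K'}

lemma prod_mem (h : ∀ j, Roots (algebraMap K' Ω (s j)) (β j)) (N : Fin k → ℕ) :
    (fun m => ∏ j, β j (m j) ^ N j) ∈ Blk (K' := K') β := by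
  have : (fun m => ∏ j, β j (m j) ^ N j) =
      (∏ j, s j ^ (N j / 3)) • chi β (fun j => ⟨N j % 3, Nat.mod_lt _ (by norm_num)⟩) := by
    funext m
    rw [Pi.smul_apply, Algebra.smul_def, map_prod, chi, ← Finset.prod_mul_distrib]
    refine Finset.prod_congr rfl fun j _ => ?_
    rw [(h j).pow, map_pow]
  rw [this]
  exact Submodule.smul_mem _ _ (Submodule.subset_span ⟨_, rfl⟩)

lemma one_mem_blk (h : ∀ j, Roots (algebraMap K' Ω (s j)) (β j)) : 1 ∈ Blk (K' := K') β := by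
  have := prod_mem h (fun _ => 0)
  simp only [pow_zero, Finset.prod_const_one] at this
  exact this

lemma mul_mem_blk (h : ∀ j, Roots (algebraMap K' Ω (s j)) (β j)) {f g : (Fin k → Fin 3) → Ω}
    (hf : f ∈ Blk (K' := K') β) (hg : g ∈ Blk (K' := K') β) : f * g ∈ Blk (K' := K') β := by
  have := Submodule.mul_mem_mul hf hg
  rw [Blk, Submodule.span_mul_span] at this
  refine Submodule.span_le.mpr ?_ this
  rintro _ ⟨_, ⟨e, rfl⟩, _, ⟨e', rfl⟩, rfl⟩
  have := prod_mem h (fun j => (e j : ℕ) + (e' j : ℕ))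
  refine (congrArg (· ∈ Blk (K' := K') β) ?_).mp this
  funext m
  simp [chi, pow_add, Finset.prod_mul_distrib]

lemma eval_mem_blk (h : ∀ j, Roots (algebraMap K' Ω (s j)) (β j)) {f : (Fin k → Fin 3) → Ω}
    (hf : f ∈ Blk (K' := K') β) (P : K'[X]) :
    ∃ c : (Fin k → Fin 3) → K', ∀ m, aeval (f m) P = ∑ e, algebraMap K' Ω (c e) * chi β e m := by
  have : (fun m => aeval (f m) P) ∈ Blk (K' := K') β := by
    induction P using Polynomial.induction_on' with
    | add p q hp hq =>
      simp only [map_add]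
      exact Submodule.add_mem _ hp hq
    | monomial n a =>
      have hp : ∀ n : ℕ, f ^ n ∈ Blk (K' := K') β := by
        intro n
        induction n with
        | zero => simpa using one_mem_blk h
        | succ n ih => rw [pow_succ]; exact mul_mem_blk h ih hf
      convert Submodule.smul_mem _ a (hp n) using 1
      funext m
      simp [aeval_monomial, Algebra.smul_def]
  obtain ⟨c, hc⟩ := (Submodule.mem_span_range_iff_exists_fun K').mp this
  refine ⟨c, fun m => ?_⟩
  have := congrFun hc m
  simp only [Finset.sum_apply, Algebra.smul_def] at this
  exact this.symm

end

end GenB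

namespace GenB
open Polynomial

lemma lin_subst0 {k0 Ω J : Type} [Field k0] [Field Ω] [Algebra k0 Ω] [Fintype J] [DecidableEq J]
    {y : J → Ω} (hy : AlgebraicIndependent k0 y) (A B : Matrix J J k0) (hAB : A * B = 1) :
    AlgebraicIndependent k0 (fun i => ∑ j, algebraMap k0 Ω (A i j) * y j) := by
  let S : MvPolynomial J k0 →ₐ[k0] MvPolynomial J k0 :=
    MvPolynomial.aeval fun i => ∑ j, MvPolynomial.C (A i j) * MvPolynomial.X j
  let T : MvPolynomial J k0 →ₐ[k0] MvPolynomial J k0 :=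
    MvPolynomial.aeval fun i => ∑ j, MvPolynomial.C (B i j) * MvPolynomial.X j
  have hTS : T.comp S = AlgHom.id _ _ := by
    apply MvPolynomial.algHom_ext
    intro i
    simp only [S, T, AlgHom.comp_apply, MvPolynomial.aeval_X, map_sum, map_mul, AlgHom.id_apply,
      ← MvPolynomial.algebraMap_eq, AlgHom.commutes]
    simp only [Finset.mul_sum]
    rw [Finset.sum_comm]
    simp only [← mul_assoc, ← Finset.sum_mul, ← map_mul, ← map_sum]
    have : ∀ j, ∑ l, A i l * B l j = (1 : Matrix J J k0) i j := fun j => by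
      rw [← hAB, Matrix.mul_apply]
    simp [this, Matrix.one_apply]
  have hS : Function.Injective S := by
    apply Function.LeftInverse.injective (g := T)
    intro p
    exact DFunLike.congr_fun hTS p
  have h1 : (MvPolynomial.aeval fun i => ∑ j, algebraMap k0 Ω (A i j) * y j) =
      (MvPolynomial.aeval y : MvPolynomial J k0 →ₐ[k0] Ω).comp S := by
    apply MvPolynomial.algHom_ext
    intro i
    simp only [S, AlgHom.comp_apply, MvPolynomial.aeval_X, map_sum, map_mul,
      ← MvPolynomial.algebraMap_eq, AlgHom.commutes]
  unfold AlgebraicIndependent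
  rw [h1, AlgHom.coe_comp]
  exact Function.Injective.comp hy hS

lemma lin_subst {K Ω J : Type} [Field K] [Field Ω] [Algebra K Ω] [Fintype J] [DecidableEq J]
    {y : J → Ω} (hy : AlgebraicIndependent K y) (A B : Matrix J J Ω)
    (hA : ∀ i j, IsAlgebraic K (A i j)) (hAB : A * B = 1) :
    AlgebraicIndependent K (fun i => ∑ j, A i j * y j) := by
  let k0 := algebraicClosure K Ω
  have hy' : AlgebraicIndependent k0 y := hy.extendScalars k0
  let A' : Matrix J J k0 := fun i j => ⟨A i j, mem_algebraicClosure_iff.mpr (hA i j)⟩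
  have hA' : A'.map (algebraMap k0 Ω) = A := rfl
  have hdet : A'.det ≠ 0 := by
    intro h
    have h1 : A.det = 0 := by
      rw [← hA', ← RingHom.mapMatrix_apply, ← RingHom.map_det, h, map_zero]
    have h2 := congrArg Matrix.det hAB
    rw [Matrix.det_mul, h1] at h2
    simp at h2
  have := lin_subst0 hy' A' A'⁻¹ (Matrix.mul_nonsing_inv _ (isUnit_iff_ne_zero.mpr hdet))
  exact this.restrictScalars (algebraMap K k0).injective

abbrev JJ (k1 k2 k3 : ℕ) : Type := (Fin k1 → Fin 3) ⊕ ((Fin k2 → Fin 3) ⊕ (Fin k3 → Fin 3))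

lemma chi_alg {K Ω : Type} [Field K] [Field Ω] [Algebra K Ω] {k : ℕ} {t : Fin k → K}
    {β : Fin k → Fin 3 → Ω} (h : ∀ j, Roots (algebraMap K Ω (t j)) (β j)) (e m : Fin k → Fin 3) :
    IsAlgebraic K (chi β e m) := by
  rw [← mem_algebraicClosure_iff]
  unfold chi
  refine _root_.prod_mem fun j _ => pow_mem ?_ _
  rw [mem_algebraicClosure_iff]
  refine IsAlgebraic.of_pow (n := 3) (by norm_num) ?_
  rw [(h j).cube]
  exact isAlgebraic_algebraMap _

lemma chi_mat {Ω : Type} [Field Ω] [CharZero Ω] {k : ℕ} {t : Fin k → Ω} {β : Fin k → Fin 3 → Ω}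
    (ht : ∀ i, t i ≠ 0) (h : ∀ j, Roots (t j) (β j)) :
    (Matrix.of fun m e => chi β e m) * (Matrix.of fun e m => chiInv β e m) = 1 := by
  ext m m'
  rw [Matrix.mul_apply, Matrix.one_apply]
  exact chi_orth ht h m m'

def xx {Ω : Type} [Field Ω] {k : ℕ} (β : Fin k → Fin 3 → Ω) (y : (Fin k → Fin 3) → Ω)
    (m : Fin k → Fin 3) : Ω := ∑ e, chi β e m * y e

lemma xx_indep {K Ω : Type} [Field K] [Field Ω] [CharZero Ω] [Algebra K Ω] {k1 k2 k3 : ℕ}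
    {t1 : Fin k1 → K} {t2 : Fin k2 → K} {t3 : Fin k3 → K}
    (n1 : ∀ i, t1 i ≠ 0) (n2 : ∀ i, t2 i ≠ 0) (n3 : ∀ i, t3 i ≠ 0)
    {β1 : Fin k1 → Fin 3 → Ω} {β2 : Fin k2 → Fin 3 → Ω} {β3 : Fin k3 → Fin 3 → Ω}
    (h1 : ∀ j, Roots (algebraMap K Ω (t1 j)) (β1 j))
    (h2 : ∀ j, Roots (algebraMap K Ω (t2 j)) (β2 j))
    (h3 : ∀ j, Roots (algebraMap K Ω (t3 j)) (β3 j))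
    {y : JJ k1 k2 k3 → Ω} (hy : AlgebraicIndependent K y) :
    AlgebraicIndependent K (Sum.elim (xx β1 (fun e => y (.inl e)))
      (Sum.elim (xx β2 (fun e => y (.inr (.inl e)))) (xx β3 (fun e => y (.inr (.inr e)))))) := by
  have e1 := chi_mat (t := fun i => algebraMap K Ω (t1 i)) (by simpa using n1) h1
  have e2 := chi_mat (t := fun i => algebraMap K Ω (t2 i)) (by simpa using n2) h2
  have e3 := chi_mat (t := fun i => algebraMap K Ω (t3 i)) (by simpa using n3) h3
  have := lin_subst hy
    (Matrix.fromBlocks (Matrix.of fun m e => chi β1 e m) 0 0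
      (Matrix.fromBlocks (Matrix.of fun m e => chi β2 e m) 0 0 (Matrix.of fun m e => chi β3 e m)))
    (Matrix.fromBlocks (Matrix.of fun e m => chiInv β1 e m) 0 0
      (Matrix.fromBlocks (Matrix.of fun e m => chiInv β2 e m) 0 0
        (Matrix.of fun e m => chiInv β3 e m))) (by
      rintro (i | i | i) (j | j | j) <;>
        simp [chi_alg h1, chi_alg h2, chi_alg h3, isAlgebraic_zero]) (by
      simp [Matrix.fromBlocks_multiply, e1, e2, e3])
  convert this using 1
  funext i
  rcases i with i | i | i <;> simp [xx]

lemma xx_perm {M Ω : Type} [Field M] [Field Ω] [Algebra M Ω] {k : ℕ} {t : Fin k → M}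
    {β : Fin k → Fin 3 → Ω} (h : ∀ j, Roots (algebraMap M Ω (t j)) (β j))
    (y : (Fin k → Fin 3) → M) (τ : Ω →ₐ[M] Ω) :
    ∃ π : (Fin k → Fin 3) → (Fin k → Fin 3), ∀ m, τ (xx β (fun e => algebraMap M Ω (y e)) m) =
      xx β (fun e => algebraMap M Ω (y e)) (π m) := by
  have : ∀ j i, ∃ i', τ (β j i) = β j i' := fun j i => (h j).surj _ (by
    rw [← map_pow, (h j).cube, AlgHom.commutes])
  choose p hp using this
  refine ⟨fun m j => p j (m j), fun m => ?_⟩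
  simp only [xx, map_sum, map_mul, AlgHom.commutes, chi, map_prod, map_pow, hp]

lemma xx_mem {K' Ω : Type} [Field K'] [Field Ω] [Algebra K' Ω] {k : ℕ}
    (β : Fin k → Fin 3 → Ω) (y : (Fin k → Fin 3) → K') :
    xx β (fun e => algebraMap K' Ω (y e)) ∈ Blk (K' := K') β := by
  have : xx β (fun e => algebraMap K' Ω (y e)) = ∑ e, y e • chi β e := by
    funext m
    simp [xx, Finset.sum_apply, Algebra.smul_def, mul_comm]
  rw [this]
  exact Submodule.sum_mem _ fun e _ => Submodule.smul_mem _ _ (Submodule.subset_span ⟨e, rfl⟩)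

def Geo (J : Type) [Fintype J] : Prop :=
  ∃ (M Ω : Type) (_ : Field M) (_ : CharZero M) (_ : Field Ω) (_ : Algebra M Ω) (_ : IsAlgClosure M Ω)
    (x : J → Ω), (∀ [Algebra ℚ Ω], AlgebraicIndependent ℚ x) ∧
    (∀ τ : Ω →ₐ[M] Ω, ∃ π : J → J, ∀ p, τ (x p) = x (π p)) ∧
    ∀ (M' : Type) [Field M'] [Algebra M M'] [Algebra M' Ω] [IsScalarTower M M' Ω]
      [FiniteDimensional M M'], Nat.Coprime (Module.finrank M M') 3 → ∀ f : M'[X],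
      ∑ p, aeval (x p) f = 0 → ∑ p, aeval (x p) f ^ 3 = 0 → ∀ p, aeval (x p) f = 0

theorem geo {k1 k2 k3 : ℕ} (h12 : k2 < k1) (h23 : k3 < k2) : Geo (JJ k1 k2 k3) := by
  obtain ⟨K, _, _, t1, t2, t3, n1, n2, n3, a1, -, -, s⟩ := tow h12 h23
  obtain ⟨M, _, _, _, y0, hy0, -, s'⟩ := addVars (by positivity) a1 s (Fintype.card (JJ k1 k2 k3))
  obtain ⟨y, hy⟩ : ∃ y : JJ k1 k2 k3 → M, AlgebraicIndependent K y :=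
    ⟨_, (algebraicIndependent_equiv' (Fintype.equivFin (JJ k1 k2 k3)) rfl).mpr hy0⟩
  let Ω := AlgebraicClosure M
  have : CharZero Ω := charZero_of_injective_algebraMap (algebraMap M Ω).injective
  have htow : IsScalarTower K M Ω := inferInstance
  have hyΩ : AlgebraicIndependent K (fun p => algebraMap M Ω (y p)) :=
    hy.map' (f := IsScalarTower.toAlgHom K M Ω) (algebraMap M Ω).injective
  have r1 : ∀ j, ∃ β, Roots (algebraMap M Ω (algebraMap K M (t1 j))) β := fun j => exists_roots _ (by simpa using n1 j)
  have r2 : ∀ j, ∃ β, Roots (algebraMap M Ω (algebraMap K M (t2 j))) β := fun j => exists_roots _ (by simpa using n2 j)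
  have r3 : ∀ j, ∃ β, Roots (algebraMap M Ω (algebraMap K M (t3 j))) β := fun j => exists_roots _ (by simpa using n3 j)
  choose β1 b1 using r1
  choose β2 b2 using r2
  choose β3 b3 using r3
  refine ⟨M, Ω, inferInstance, inferInstance, inferInstance, inferInstance, inferInstance,
    Sum.elim (xx β1 (fun e => algebraMap M Ω (y (.inl e))))
      (Sum.elim (xx β2 (fun e => algebraMap M Ω (y (.inr (.inl e)))))
        (xx β3 (fun e => algebraMap M Ω (y (.inr (.inr e)))))), ?_, ?_, ?_⟩
  · intro hQ
    have hind := xx_indep n1 n2 n3 (fun j => (IsScalarTower.algebraMap_apply K M Ω (t1 j)) ▸ b1 j)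
      (fun j => (IsScalarTower.algebraMap_apply K M Ω (t2 j)) ▸ b2 j)
      (fun j => (IsScalarTower.algebraMap_apply K M Ω (t3 j)) ▸ b3 j) hyΩ
    have htw : @IsScalarTower ℚ K Ω _ (Algebra.toSMul) hQ.toSMul :=
      @IsScalarTower.of_algebraMap_eq' ℚ K Ω _ _ _ _ _ hQ (Subsingleton.elim _ _)
    exact @AlgebraicIndependent.restrictScalars _ ℚ Ω _ _ _ hQ K _ _ _ htw
      (algebraMap ℚ K).injective hind
  · intro τ
    obtain ⟨π1, hπ1⟩ := xx_perm (t := fun j => algebraMap K M (t1 j)) b1 (fun e => y (.inl e)) τ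
    obtain ⟨π2, hπ2⟩ := xx_perm (t := fun j => algebraMap K M (t2 j)) b2 (fun e => y (.inr (.inl e))) τ
    obtain ⟨π3, hπ3⟩ := xx_perm (t := fun j => algebraMap K M (t3 j)) b3 (fun e => y (.inr (.inr e))) τ
    refine ⟨Sum.map π1 (Sum.map π2 π3), ?_⟩
    rintro (m | m | m)
    · exact hπ1 m
    · exact hπ2 m
    · exact hπ3 m
  · intro M' _ _ _ _ _ hd f h1 h3
    have hu : ∀ z, algebraMap M Ω z = algebraMap M' Ω (algebraMap M M' z) :=
      IsScalarTower.algebraMap_apply M M' Ω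
    simp only [hu] at b1 b2 b3 h1 h3 ⊢
    obtain ⟨c1, hc1⟩ := eval_mem_blk b1 (xx_mem β1 (fun e => algebraMap M M' (y (.inl e)))) f
    obtain ⟨c2, hc2⟩ := eval_mem_blk b2 (xx_mem β2 (fun e => algebraMap M M' (y (.inr (.inl e))))) f
    obtain ⟨c3, hc3⟩ := eval_mem_blk b3 (xx_mem β3 (fun e => algebraMap M M' (y (.inr (.inr e))))) f
    simp only [Fintype.sum_sum_type, Sum.elim_inl, Sum.elim_inr, hc1, hc2, hc3] at h1 h3
    rw [sum_chi b1, sum_chi b2, sum_chi b3] at h1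
    rw [sum_chi_cube b1, sum_chi_cube b2, sum_chi_cube b3] at h3
    rw [← map_Cub, ← map_Cub, ← map_Cub] at h3
    simp only [← map_natCast (algebraMap M' Ω), ← map_mul, ← map_add] at h1 h3
    have i1 := (map_eq_zero_iff _ (algebraMap M' Ω).injective).mp h1
    have i3 := (map_eq_zero_iff _ (algebraMap M' Ω).injective).mp h3
    obtain ⟨z1, z2, z3⟩ := s' M' hd c1 c2 c3 (by rw [← i1]; ring) (by rw [← i3]; ring)
    rintro (m | m | m)
    · simp only [Sum.elim_inl, hc1, z1]
      simp
    · simp only [Sum.elim_inl, Sum.elim_inr, hc2, z2]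
      simp
    · simp only [Sum.elim_inr, hc3, z3]
      simp

end GenB

namespace GenB
open Polynomial
open scoped TensorProduct

lemma exists_factor {M : Type} [Field M] (d : ℕ) : ∀ P : M[X], P.natDegree ≤ d → ¬ 3 ∣ P.natDegree →
    ∃ q, Irreducible q ∧ q ∣ P ∧ ¬ 3 ∣ q.natDegree := by
  induction d with
  | zero =>
    intro P hP h
    exact absurd (by rw [Nat.le_zero.mp hP]; exact dvd_zero 3) h
  | succ d ih =>
    intro P hP h
    have h0 : P ≠ 0 := by
      rintro rfl
      simp at h
    have hu : ¬ IsUnit P := fun hu => h (by rw [natDegree_eq_zero_of_isUnit hu]; exact dvd_zero 3)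
    obtain ⟨q, hq, r, rfl⟩ := WfDvdMonoid.exists_irreducible_factor hu h0
    by_cases h3 : 3 ∣ q.natDegree
    · have hr0 := right_ne_zero_of_mul h0
      rw [natDegree_mul hq.ne_zero hr0] at hP h
      have hp := hq.natDegree_pos
      obtain ⟨q', a, b, c⟩ := ih r (by omega) (by omega)
      exact ⟨q', a, b.mul_left _, c⟩
    · exact ⟨q, hq, dvd_mul_right _ _, h3⟩

lemma lift3 {F F' M Ω : Type} [Field F] [CharZero F] [Field F'] [Field M] [Field Ω] [Algebra F F']
    [FiniteDimensional F F'] (hdeg : Nat.Coprime (Module.finrank F F') 3) [Algebra F M]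
    [Algebra M Ω] [IsAlgClosed Ω] :
    ∃ (M' : Type) (_ : Field M') (_ : Algebra M M') (_ : Algebra M' Ω) (_ : IsScalarTower M M' Ω)
      (_ : FiniteDimensional M M') (ρ : F' →+* M'), Nat.Coprime (Module.finrank M M') 3 ∧
      ∀ a, ρ (algebraMap F F' a) = algebraMap M M' (algebraMap F M a) := by
  have cop : ∀ m : ℕ, m.Coprime 3 ↔ ¬ 3 ∣ m := fun m => by
    rw [Nat.coprime_comm, Nat.Prime.coprime_iff_not_dvd Nat.prime_three]
  let pb := Field.powerBasisOfFiniteOfSeparable F F'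
  have hP : ((minpoly F pb.gen).map (algebraMap F M)).natDegree = Module.finrank F F' := by
    rw [natDegree_map, pb.natDegree_minpoly, pb.finrank]
  obtain ⟨q, hq, hqd, hq3⟩ := exists_factor _ ((minpoly F pb.gen).map (algebraMap F M)) le_rfl
    (by rw [hP]; exact (cop _).mp hdeg)
  have : Fact (Irreducible q) := ⟨hq⟩
  let M' := AdjoinRoot q
  have hfin : FiniteDimensional M M' := (AdjoinRoot.powerBasis hq.ne_zero).finite
  let _ : Algebra M' Ω := (IsAlgClosed.lift (M := Ω) (R := M) (S := M') : M' →ₐ[M] Ω).toAlgebra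
  have htow : IsScalarTower M M' Ω := IsScalarTower.of_algebraMap_eq fun a =>
    ((IsAlgClosed.lift (M := Ω) (R := M) (S := M') : M' →ₐ[M] Ω).commutes a).symm
  let _ : Algebra F M' := ((algebraMap M M').comp (algebraMap F M)).toAlgebra
  have hroot : aeval (AdjoinRoot.root q) (minpoly F pb.gen) = 0 := by
    obtain ⟨r, hr⟩ := hqd
    have h1 : aeval (AdjoinRoot.root q) ((minpoly F pb.gen).map (algebraMap F M)) = 0 := by
      rw [hr, map_mul, AdjoinRoot.aeval_eq, AdjoinRoot.mk_self, zero_mul]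
    rw [← h1, aeval_def, aeval_def, eval₂_map]
    rfl
  refine ⟨M', inferInstance, inferInstance, inferInstance, htow, hfin,
    (pb.lift (AdjoinRoot.root q) hroot : F' →ₐ[F] M'), ?_, fun a => ?_⟩
  · rw [(AdjoinRoot.powerBasis hq.ne_zero).finrank, AdjoinRoot.powerBasis_dim]
    exact (cop _).mpr hq3
  · exact (pb.lift (AdjoinRoot.root q) hroot : F' →ₐ[F] M').commutes a

lemma trace_tmul {F E F' : Type} [Field F] [Field E] [Field F'] [Algebra F E] [Algebra F F']
    [FiniteDimensional F E] (f : F') (e : E) :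
    Algebra.trace F' (F' ⊗[F] E) (f ⊗ₜ e) = f * algebraMap F F' (Algebra.trace F E e) := by
  have h1 : f ⊗ₜ[F] e = f • ((1 : F') ⊗ₜ[F] e) := by simp [TensorProduct.smul_tmul']
  rw [h1, map_smul, smul_eq_mul]
  congr 1
  rw [Algebra.trace_apply, Algebra.trace_apply, ← LinearMap.trace_baseChange]
  congr 1
  apply LinearMap.ext
  intro z
  induction z using TensorProduct.induction_on with
  | zero => simp
  | add a b ha hb => rw [map_add, map_add, ha, hb]
  | tmul a b => simp

lemma trace_sum {F E F' Ω : Type} [Field F] [CharZero F] [Field E] [Field F'] [Algebra F E]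
    [Algebra F F'] [FiniteDimensional F E] [Field Ω] [IsAlgClosed Ω] [Algebra F Ω]
    (ρ : F' →ₐ[F] Ω) (z : F' ⊗[F] E) :
    ρ (Algebra.trace F' (F' ⊗[F] E) z) =
      ∑ ψ : E →ₐ[F] Ω, Algebra.TensorProduct.productMap ρ ψ z := by
  induction z using TensorProduct.induction_on with
  | zero => simp
  | add a b ha hb => simp only [map_add, ha, hb, Finset.sum_add_distrib]
  | tmul a b =>
    rw [trace_tmul, map_mul, AlgHom.commutes, trace_eq_sum_embeddings Ω, Finset.mul_sum]
    simp

theorem final_abs {F E F' M Ω J : Type} [Field F] [CharZero F] [Field E] [Field F'] [Field M]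
    [Field Ω] [Fintype J] [Algebra F E] [Algebra F F'] [FiniteDimensional F F']
    [FiniteDimensional F E] [Algebra F M] [Algebra M Ω] [Algebra F Ω] [IsScalarTower F M Ω]
    [IsAlgClosed Ω] (hdeg : Nat.Coprime (Module.finrank F F') 3) (x1 : E)
    (hx1 : IntermediateField.adjoin F {x1} = ⊤) (ψ : J → (E →ₐ[F] Ω))
    (hψ : Function.Injective fun p => ψ p x1) (hcard : Module.finrank F E ≤ Fintype.card J)
    (hgeo : ∀ (M' : Type) [Field M'] [Algebra M M'] [Algebra M' Ω] [IsScalarTower M M' Ω]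
      [FiniteDimensional M M'], Nat.Coprime (Module.finrank M M') 3 → ∀ f : M'[X],
      ∑ p, aeval (ψ p x1) f = 0 → ∑ p, aeval (ψ p x1) f ^ 3 = 0 → ∀ p, aeval (ψ p x1) f = 0)
    (δ : F' ⊗[F] E) (h1 : Algebra.trace F' (F' ⊗[F] E) δ = 0)
    (h3 : Algebra.trace F' (F' ⊗[F] E) (δ ^ 3) = 0) : δ = 0 := by
  obtain ⟨M', _, _, _, _, _, ρ, hd, hρ⟩ := lift3 (Ω := Ω) (M := M) hdeg
  let ρΩ : F' →ₐ[F] Ω :=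
    { (algebraMap M' Ω).comp ρ with
      commutes' := fun a => by
        simp [hρ, ← IsScalarTower.algebraMap_apply] }
  have hρΩ : ∀ a, ρΩ a = algebraMap M' Ω (ρ a) := fun _ => rfl
  have hbij : Function.Bijective ψ := by
    refine Function.Injective.bijective_of_nat_card_le (fun p q h => hψ (by simp only [h])) ?_
    rw [Nat.card_eq_fintype_card, Nat.card_eq_fintype_card, AlgHom.card]
    exact hcard
  have hadj : Algebra.adjoin F {x1} = ⊤ := by
    rw [← IntermediateField.adjoin_simple_toSubalgebra_of_isAlgebraic (IsAlgebraic.of_finite F x1),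
      hx1, IntermediateField.top_toSubalgebra]
  have hpoly : ∀ z : F' ⊗[F] E, ∃ f : F'[X], z = aeval ((1 : F') ⊗ₜ[F] x1) f := by
    intro z
    induction z using TensorProduct.induction_on with
    | zero => exact ⟨0, by simp⟩
    | add a b ha hb =>
      obtain ⟨f, rfl⟩ := ha
      obtain ⟨g, rfl⟩ := hb
      exact ⟨f + g, by simp⟩
    | tmul a b =>
      have hb : b ∈ Algebra.adjoin F {x1} := by rw [hadj]; trivial
      rw [Algebra.adjoin_singleton_eq_range_aeval] at hb
      obtain ⟨P, rfl⟩ := hb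
      refine ⟨C a * P.map (algebraMap F F'), ?_⟩
      rw [map_mul, aeval_C, aeval_map_algebraMap]
      have : (1 : F') ⊗ₜ[F] x1 = (Algebra.TensorProduct.includeRight : E →ₐ[F] F' ⊗[F] E) x1 := rfl
      rw [this, aeval_algHom_apply]
      simp [Algebra.TensorProduct.algebraMap_apply]
  obtain ⟨f0, hf0⟩ := hpoly δ
  let m := (minpoly F x1).map (algebraMap F F')
  have hm : m.Monic := (minpoly.monic (Algebra.IsIntegral.isIntegral x1)).map _
  have hmx : aeval ((1 : F') ⊗ₜ[F] x1) m = 0 := by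
    have : (1 : F') ⊗ₜ[F] x1 = (Algebra.TensorProduct.includeRight : E →ₐ[F] F' ⊗[F] E) x1 := rfl
    rw [aeval_map_algebraMap, this, aeval_algHom_apply, minpoly.aeval, map_zero]
  obtain ⟨f, hf, hfd⟩ : ∃ f : F'[X], δ = aeval ((1 : F') ⊗ₜ[F] x1) f ∧ f.degree < m.degree := by
    refine ⟨f0 %ₘ m, ?_, degree_modByMonic_lt _ hm⟩
    rw [hf0]
    conv_lhs => rw [← modByMonic_add_div f0 m, map_add, map_mul, hmx, zero_mul, add_zero]
  have hΨ : ∀ p, Algebra.TensorProduct.productMap ρΩ (ψ p) δ = aeval (ψ p x1) (f.map ρ) := by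
    intro p
    rw [hf, aeval_def]
    change (Algebra.TensorProduct.productMap ρΩ (ψ p) : F' ⊗[F] E →+* Ω) _ = _
    rw [hom_eval₂, aeval_def, eval₂_map]
    congr 1
    · ext a
      simp [Algebra.TensorProduct.algebraMap_apply, hρΩ]
    · simp
  have hsum : ∀ z, ρΩ (Algebra.trace F' (F' ⊗[F] E) z) =
      ∑ p, Algebra.TensorProduct.productMap ρΩ (ψ p) z := by
    intro z
    rw [trace_sum]
    exact (Fintype.sum_bijective ψ hbij _ _ fun _ => rfl).symm
  have e1 := hsum δ
  have e3 := hsum (δ ^ 3)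
  simp only [h1, h3, map_zero, map_pow, hΨ] at e1 e3
  have key := hgeo M' hd _ e1.symm e3.symm
  by_cases hf0 : f = 0
  · rw [hf, hf0, map_zero]
  have hz : (f.map ρ).map (algebraMap M' Ω) = 0 := by
    refine eq_zero_of_natDegree_lt_card_of_eval_eq_zero _ hψ (fun p => ?_) ?_
    · rw [eval_map_algebraMap]
      exact key p
    · rw [natDegree_map, natDegree_map]
      refine lt_of_lt_of_le (natDegree_lt_natDegree hf0 hfd) ?_
      rw [natDegree_map]
      exact (minpoly.natDegree_le x1).trans hcard
  rw [Polynomial.map_eq_zero, Polynomial.map_eq_zero] at hz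
  rw [hf, hz, map_zero]

end GenB

namespace GenC
open Polynomial GenExt
open scoped TensorProduct

abbrev xv (n : ℕ) (i : Fin n) : L n := algebraMap (MvPolynomial (Fin n) ℚ) (L n) (MvPolynomial.X i)

lemma permAut_xv (n : ℕ) (σ : Equiv.Perm (Fin n)) (i : Fin n) :
    permAut n σ (xv n i) = xv n (σ i) := by
  unfold permAut xv
  rw [IsFractionRing.ringEquivOfRingEquiv_algebraMap]
  congr 1
  simp

lemma xv_inj (n : ℕ) : Function.Injective (xv n) := by
  intro i j h
  exact MvPolynomial.X_injective (IsFractionRing.injective (MvPolynomial (Fin n) ℚ) (L n) h)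

lemma hom_ext {n : ℕ} {R : Type} [Field R] {f g : L n →+* R} (h : ∀ i, f (xv n i) = g (xv n i)) :
    f = g := by
  apply IsLocalization.ringHom_ext (nonZeroDivisors (MvPolynomial (Fin n) ℚ))
  apply MvPolynomial.ringHom_ext
  · intro r
    have : (f.comp (algebraMap (MvPolynomial (Fin n) ℚ) (L n))).comp MvPolynomial.C =
      (g.comp (algebraMap (MvPolynomial (Fin n) ℚ) (L n))).comp MvPolynomial.C := Subsingleton.elim _ _
    exact RingHom.congr_fun this r
  · exact h

lemma permAut_mul (n : ℕ) (σ τ : Equiv.Perm (Fin n)) (a : L n) :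
    permAut n σ (permAut n τ a) = permAut n (σ * τ) a := by
  have : (permAut n σ : L n →+* L n).comp (permAut n τ : L n →+* L n) = permAut n (σ * τ) :=
    hom_ext fun i => by simp [permAut_xv]
  exact RingHom.congr_fun this a

lemma descend {n : ℕ} {p : (L n)[X]} (h : ∀ σ, p.map (permAut n σ : L n →+* L n) = p) :
    ∃ q : (F n)[X], q.map (algebraMap (F n) (L n)) = p := by
  have : p ∈ lifts (algebraMap (F n) (L n)) := by
    rw [lifts_iff_coeff_lifts]
    intro k
    refine ⟨⟨p.coeff k, fun σ _ => ?_⟩, rfl⟩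
    conv_rhs => rw [← h σ, coeff_map]
    rfl
  exact (mem_lifts p).mp this

variable {n : ℕ} [NeZero n]

lemma xv_mem_E : xv n 0 ∈ E n := by
  intro σ hσ
  rw [permAut_xv, hσ 0 rfl]

lemma E_dep {a : L n} (ha : a ∈ E n) {σ τ : Equiv.Perm (Fin n)} (h : σ 0 = τ 0) :
    permAut n σ a = permAut n τ a := by
  have h1 : permAut n (τ⁻¹ * σ) a = a := ha _ (by
    intro i hi
    have : i = 0 := Fin.ext hi
    subst this
    simp [h])
  conv_rhs => rw [← h1, permAut_mul]
  simp

/-- symmetric interpolation polynomial -/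
def hP (a : L n) : (L n)[X] :=
  ∑ i, C (permAut n (Equiv.swap 0 i) a) * ∏ j ∈ Finset.univ.erase i, (X - C (xv n j))

lemma hP_map {a : L n} (ha : a ∈ E n) (σ : Equiv.Perm (Fin n)) :
    (hP a).map (permAut n σ : L n →+* L n) = hP a := by
  unfold hP
  rw [Polynomial.map_sum]
  refine Fintype.sum_equiv σ _ _ fun i => ?_
  rw [Polynomial.map_mul, Polynomial.map_prod, map_C]
  congr 1
  · congr 1
    change permAut n σ (permAut n _ a) = _
    rw [permAut_mul]
    exact E_dep ha (by simp)
  · refine Finset.prod_equiv σ (by simp) fun j _ => ?_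
    simp [permAut_xv]

lemma hP_eval (a : L n) :
    (hP a).eval (xv n 0) = a * ∏ j ∈ Finset.univ.erase 0, (xv n 0 - xv n j) := by
  unfold hP
  rw [eval_finsetSum, Finset.sum_eq_single 0]
  · rw [eval_mul, eval_C, eval_prod]
    congr 1
    · rw [Equiv.swap_self]
      have : (permAut n (Equiv.refl _) : L n →+* L n) = RingHom.id _ :=
        hom_ext fun i => by simp [permAut_xv]
      exact RingHom.congr_fun this a
    · simp
  · intro i _ hi
    rw [eval_mul, eval_prod, Finset.prod_eq_zero (i := 0), mul_zero]
    · simp [hi.symm]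
    · simp
  · simp

instance : IsScalarTower (F n) (E n) (L n) := IsScalarTower.of_algebraMap_eq fun _ => rfl

def x1 (n : ℕ) [NeZero n] : E n := ⟨xv n 0, xv_mem_E⟩

lemma gP_ex : ∃ q : (F n)[X], q.map (algebraMap (F n) (L n)) = ∏ j, (X - C (xv n j)) := by
  apply descend
  intro σ
  rw [Polynomial.map_prod]
  refine Fintype.prod_equiv σ _ _ fun i => ?_
  simp [permAut_xv]

lemma aeval_x1 (q : (F n)[X]) :
    ((aeval (x1 n) q : E n) : L n) = (q.map (algebraMap (F n) (L n))).eval (xv n 0) := by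
  rw [eval_map_algebraMap]
  exact (aeval_algebraMap_apply (L n) (x1 n) q).symm

lemma gP_root : ∃ q : (F n)[X], q.Monic ∧ q.natDegree = n ∧ aeval (x1 n) q = 0 := by
  obtain ⟨q, hq⟩ := gP_ex (n := n)
  have hm : (∏ j, (X - C (xv n j))).Monic := monic_prod_of_monic _ _ fun j _ => monic_X_sub_C _
  refine ⟨q, ?_, ?_, ?_⟩
  · rw [← hq] at hm
    exact monic_of_injective (algebraMap (F n) (L n)).injective hm
  · rw [← natDegree_map (algebraMap (F n) (L n)), hq, natDegree_prod_of_monic _ _ fun j _ => monic_X_sub_C _]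
    simp
  · apply Subtype.ext
    rw [aeval_x1, hq, eval_prod]
    exact Finset.prod_eq_zero (Finset.mem_univ 0) (by simp)

lemma adjoin_x1 : IntermediateField.adjoin (F n) {x1 n} = ⊤ := by
  rw [eq_top_iff]
  rintro ⟨a, ha⟩ -
  obtain ⟨q, hq⟩ := descend (hP_map ha)
  obtain ⟨r, hr⟩ := descend (hP_map (one_mem (E n)))
  have h0 : ∏ j ∈ Finset.univ.erase 0, (xv n 0 - xv n j) ≠ 0 := by
    rw [Finset.prod_ne_zero_iff]
    intro j hj h
    exact (Finset.ne_of_mem_erase hj) (xv_inj n (sub_eq_zero.mp h)).symm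
  have : (⟨a, ha⟩ : E n) = aeval (x1 n) q / aeval (x1 n) r := by
    apply Subtype.ext
    rw [Subfield.coe_div, aeval_x1, aeval_x1, hq, hr, hP_eval, hP_eval]
    field_simp
  rw [this]
  have hmem : ∀ q : (F n)[X], aeval (x1 n) q ∈ IntermediateField.adjoin (F n) {x1 n} := fun q =>
    IntermediateField.algebra_adjoin_le_adjoin _ _ (aeval_mem_adjoin_singleton _ _)
  exact div_mem (hmem q) (hmem r)

lemma fin_E : FiniteDimensional (F n) (E n) ∧ Module.finrank (F n) (E n) ≤ n := by
  obtain ⟨q, hm, hd, h0⟩ := gP_root (n := n)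
  have hint : IsIntegral (F n) (x1 n) := ⟨q, hm, h0⟩
  have h1 := IntermediateField.adjoin.finiteDimensional hint
  have h2 := IntermediateField.adjoin.finrank hint
  rw [adjoin_x1] at h1 h2
  refine ⟨Module.Finite.equiv (IntermediateField.topEquiv (F := F n) (E := E n)).toLinearEquiv, ?_⟩
  rw [IntermediateField.finrank_top'] at h2
  rw [h2]
  exact (natDegree_le_natDegree (minpoly.min _ _ hm h0)).trans hd.le

end GenC

namespace GenC
open Polynomial GenExt
open scoped TensorProduct

lemma factor_hom {A M Ω : Type} [Field A] [Field M] [Field Ω] (j : M →+* Ω) (f : A →+* Ω)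
    (h : ∀ a, ∃ b, j b = f a) : ∃ g : A →+* M, ∀ a, j (g a) = f a := by
  choose g hg using h
  refine ⟨{ toFun := g, map_one' := ?_, map_mul' := ?_, map_zero' := ?_, map_add' := ?_ }, hg⟩
  · exact j.injective (by rw [hg, map_one, map_one])
  · exact fun a b => j.injective (by rw [hg, map_mul, map_mul, hg, hg])
  · exact j.injective (by rw [hg, map_zero, map_zero])
  · exact fun a b => j.injective (by rw [hg, map_add, map_add, hg, hg])

theorem final {J : Type} [Fintype J] (hG : GenB.Geo J) {n : ℕ} [NeZero n] (hn : n = Fintype.card J)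
    (F' : Type) [Field F'] [Algebra (F n) F'] [FiniteDimensional (F n) F']
    (hdeg : Nat.Coprime (Module.finrank (F n) F') 3) (δ : F' ⊗[F n] (E n))
    (h1 : Algebra.trace F' (F' ⊗[F n] (E n)) δ = 0)
    (h3 : Algebra.trace F' (F' ⊗[F n] (E n)) (δ ^ 3) = 0) : δ = 0 := by
  obtain ⟨M, Ω, _, _, _, _, _, x, hx, hperm, hgeo⟩ := hG
  have hcl : IsAlgClosed Ω := IsAlgClosure.isAlgClosed M
  have : CharZero Ω := charZero_of_injective_algebraMap (algebraMap M Ω).injective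
  let e : Fin n ≃ J := Fintype.equivOfCardEq (by simp [hn])
  have hx' : AlgebraicIndependent ℚ (x ∘ e) := (algebraicIndependent_equiv e).mpr hx
  have hxinj : Function.Injective (x ∘ e) := hx'.injective
  have hinj : Function.Injective
      (MvPolynomial.aeval (x ∘ e) : MvPolynomial (Fin n) ℚ →ₐ[ℚ] Ω).toRingHom := hx'
  let φ : L n →+* Ω := IsFractionRing.lift (A := MvPolynomial (Fin n) ℚ) (K := L n)
    (g := (MvPolynomial.aeval (x ∘ e) : MvPolynomial (Fin n) ℚ →ₐ[ℚ] Ω).toRingHom) hinj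
  have hφ : ∀ i, φ (xv n i) = x (e i) := by
    intro i
    simp only [φ, xv]
    rw [IsFractionRing.lift_algebraMap]
    simp
  have hgal : IsGalois M Ω := inferInstance
  have hFM : ∀ a : F n, ∃ b, algebraMap M Ω b = φ a := by
    intro a
    suffices h : φ a ∈ (⊥ : IntermediateField M Ω) from IntermediateField.mem_bot.mp h
    rw [InfiniteGalois.mem_bot_iff_fixed]
    intro τ
    obtain ⟨π, hπ⟩ := hperm τ
    let s : Fin n → Fin n := fun i => e.symm (π (e i))
    have hs : ∀ i, τ (x (e i)) = x (e (s i)) := fun i => by simpa [s] using hπ (e i)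
    have sinj : Function.Injective s := by
      intro i j hij
      apply hxinj
      apply τ.injective
      simp only [Function.comp, hs, hij]
    let σ : Equiv.Perm (Fin n) := Equiv.ofBijective s (Finite.injective_iff_bijective.mp sinj)
    have hσ : ((τ : Ω ≃+* Ω) : Ω →+* Ω).comp φ = φ.comp (permAut n σ : L n →+* L n) :=
      hom_ext fun i => by
        simp only [RingHom.comp_apply, hφ]
        change τ (x (e i)) = φ (permAut n σ (xv n i))
        rw [permAut_xv, hφ, hs]
        rfl
    have := RingHom.congr_fun hσ (a : L n)
    change τ (φ a) = φ (permAut n σ a) at this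
    rw [this, a.2 σ (Set.mem_univ σ)]
  obtain ⟨g, hg⟩ := factor_hom (algebraMap M Ω) (φ.comp (F n).subtype) hFM
  let _ : Algebra (F n) M := g.toAlgebra
  let _ : Algebra (F n) Ω := (φ.comp (F n).subtype).toAlgebra
  have : IsScalarTower (F n) M Ω := IsScalarTower.of_algebraMap_eq fun a => (hg a).symm
  have : CharZero (F n) := g.charZero
  obtain ⟨hfin, hrank⟩ := fin_E (n := n)
  let ψ : J → (E n →ₐ[F n] Ω) := fun p =>
    { (φ.comp (permAut n (Equiv.swap 0 (e.symm p)) : L n →+* L n)).comp (E n).subtype with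
      commutes' := fun a => by
        change φ (permAut n _ (a : L n)) = φ a
        rw [a.2 _ (Set.mem_univ _)] }
  have hψ : ∀ p, ψ p (x1 n) = x p := by
    intro p
    change φ (permAut n (Equiv.swap 0 (e.symm p)) (xv n 0)) = _
    rw [permAut_xv, hφ]
    simp
  refine GenB.final_abs (M := M) (Ω := Ω) hdeg (x1 n) adjoin_x1 ψ ?_ (hrank.trans hn.le) ?_ δ h1 h3
  · intro p q h
    simp only [hψ] at h
    have := @hxinj (e.symm p) (e.symm q) (by simpa using h)
    simpa using this
  · simp only [hψ]
    exact hgeo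

end GenC

/-- **Theorem 3.1 (Theorem `thm:precise 1` of the paper):** for `n = 3^k₁ + 3^k₂ + 3^k₃`
with `k₁ > k₂ > k₃ ≥ 0` and every finite field extension `F′/Fₙ` of degree prime to `3`,
the `F′`-algebra `E′ = F′ ⊗_{Fₙ} Eₙ` contains no nonzero element `δ` with
`Tr_{E′/F′}(δ) = Tr_{E′/F′}(δ³) = 0`. -/
theorem no_traceZero_cube_traceZero_in_prime_to_three_extension
    (k₁ k₂ k₃ : ℕ) (h₁ : k₁ > k₂) (h₂ : k₂ > k₃) (n : ℕ)
    (hn : n = 3 ^ k₁ + 3 ^ k₂ + 3 ^ k₃)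
    (F' : Type) [Field F'] [Algebra (GenExt.F n) F']
    [FiniteDimensional (GenExt.F n) F']
    (hdeg : Nat.Coprime (Module.finrank (GenExt.F n) F') 3) :
    ¬ ∃ δ : F' ⊗[GenExt.F n] (GenExt.E n), δ ≠ 0 ∧
      Algebra.trace F' (F' ⊗[GenExt.F n] (GenExt.E n)) δ = 0 ∧
      Algebra.trace F' (F' ⊗[GenExt.F n] (GenExt.E n)) (δ ^ 3) = 0 := by
  rintro ⟨δ, h0, h1, h3⟩
  have : NeZero n := ⟨by rw [hn]; positivity⟩
  exact h0 (GenC.final (GenB.geo h₁ h₂) (by simp [hn, add_assoc]) F' hdeg δ h1 h3)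

end
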